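/- arXiv:1712.02775 — 3 statements merged into one kernel-verified Lean document; each statement's English description precedes it below -/
import Mathlib

section
/- Let k be a number field and let (s_𝔭) be a family of nonnegative real numbers, indexed by the nonzero prime ideals 𝔭 of the ring of integers of k, that is bounded above by some constant M. For a real N ≥ 1 set C_N = Σ_{𝔭 : N(𝔭) ≤ N} s_𝔭 · log N(𝔭), D_N = Σ_{𝔭 : N(𝔭) ≤ N} s_𝔭, and π_k(N) = #{𝔭 : N(𝔭) ≤ N}, where N(𝔭) denotes the absolute norm of 𝔭. If C_N / N converges to a limit L as N → ∞, then D_N / π_k(N) also converges to L as N → ∞. -/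
open Filter IsDedekindDomain


section Tauber
open MeasureTheory Topology Set

/-- Fejer kernel (unnormalised). -/
noncomputable def fejK (y : ℝ) : ℝ := 2 * (1 - Real.cos y) / y ^ 2

/-- triangle function -/
noncomputable def triF (l t : ℝ) : ℝ := max 0 (1 - |t| / l)

lemma fejK_nonneg (y : ℝ) : 0 ≤ fejK y := by
  unfold fejK
  have := Real.cos_le_one y
  have h : 0 ≤ 1 - Real.cos y := by linarith
  positivity

lemma fejK_le (y : ℝ) : fejK y ≤ 5 * (1 + y ^ 2)⁻¹ := by
  unfold fejK
  rcases eq_or_ne y 0 with rfl | hy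
  · norm_num
  have hy2 : 0 < y ^ 2 := by positivity
  rw [← div_eq_mul_inv, div_le_div_iff₀ hy2 (by positivity)]
  have h1 := Real.one_sub_sq_div_two_le_cos (x := y)
  have h2 := Real.neg_one_le_cos y
  have h3 := Real.cos_le_one y
  nlinarith

lemma measurable_fejK : Measurable fejK := by
  unfold fejK; fun_prop

lemma integrable_fejK : Integrable fejK := by
  refine (integrable_inv_one_add_sq.const_mul 5).mono' measurable_fejK.aestronglyMeasurable ?_
  refine Eventually.of_forall fun y => ?_
  rw [Real.norm_of_nonneg (fejK_nonneg y)]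
  exact fejK_le y

lemma integral_fejK_pos : 0 < ∫ y, fejK y := by
  rw [integral_pos_iff_support_of_nonneg fejK_nonneg integrable_fejK]
  refine lt_of_lt_of_le ?_ (measure_mono (s := Ioo 0 1) ?_)
  · simp
  · intro y hy
    simp only [Function.mem_support, fejK]
    have : Real.cos y < 1 := by
      rw [← Real.cos_zero]
      apply Real.cos_lt_cos_of_nonneg_of_le_pi le_rfl _ hy.1
      linarith [hy.2, Real.pi_gt_three]
    have h2 : 0 < 1 - Real.cos y := by linarith
    have := hy.1
    positivity

lemma continuous_triF (l : ℝ) : Continuous (triF l) := by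
  unfold triF; fun_prop

lemma triF_eq_zero {l t : ℝ} (hl : 0 < l) (ht : l ≤ |t|) : triF l t = 0 := by
  unfold triF
  rw [max_eq_left]
  have : 1 ≤ |t| / l := by rwa [one_le_div hl]
  linarith

lemma triF_nonneg (l t : ℝ) : 0 ≤ triF l t := le_max_left _ _

lemma triF_le_one {l : ℝ} (hl : 0 < l) (t : ℝ) : triF l t ≤ 1 := by
  unfold triF
  apply max_le zero_le_one
  have : 0 ≤ |t| / l := by positivity
  linarith

lemma hasCompactSupport_triF {l : ℝ} (hl : 0 < l) : HasCompactSupport (triF l) := by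
  refine HasCompactSupport.intro (K := Icc (-l) l) isCompact_Icc fun t ht => ?_
  apply triF_eq_zero hl
  by_contra h
  exact ht (abs_le.mp (not_le.mp h).le)

lemma integrable_triF {l : ℝ} (hl : 0 < l) : Integrable (triF l) :=
  (continuous_triF l).integrable_of_hasCompactSupport (hasCompactSupport_triF hl)

lemma integral_triF {l : ℝ} (hl : 0 < l) {u : ℝ} (hu : u ≠ 0) :
    ∫ t, (triF l t : ℂ) * Complex.exp (-(Complex.I * u) * t) = ((l * fejK (l * u) : ℝ) : ℂ) := by
  set a : ℂ := -(Complex.I * u) with ha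
  have ha0 : a ≠ 0 := by simp [ha, hu]
  have hlC : (l : ℂ) ≠ 0 := by exact_mod_cast hl.ne'
  have h0 : ∫ t, (triF l t : ℂ) * Complex.exp (a * t) =
      ∫ t in (-l)..l, (triF l t : ℂ) * Complex.exp (a * t) := by
    rw [intervalIntegral.integral_of_le (by linarith), setIntegral_eq_integral_of_forall_compl_eq_zero]
    intro t ht
    rw [triF_eq_zero hl]
    · simp
    · by_contra h
      rw [not_le, abs_lt] at h
      exact ht ⟨h.1, h.2.le⟩
  have hcont : Continuous (fun t : ℝ => (triF l t : ℂ) * Complex.exp (a * t)) := by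
    have := continuous_triF l
    fun_prop
  rw [h0, ← intervalIntegral.integral_add_adjacent_intervals (b := 0)
    (hcont.intervalIntegrable _ _) (hcont.intervalIntegrable _ _)]
  have hexp : ∀ t : ℝ, HasDerivAt (fun t : ℝ => Complex.exp (a * t)) (Complex.exp (a * t) * a) t := by
    intro t
    have h1 : HasDerivAt (fun t : ℝ => a * (t : ℂ)) a t := by
      simpa using (Complex.ofRealCLM.hasDerivAt (x := t)).const_mul a
    exact h1.cexp
  have hlin : ∀ c : ℂ, ∀ t : ℝ, HasDerivAt (fun t : ℝ => 1 + c * (t : ℂ)) c t := by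
    intro c t
    simpa using ((Complex.ofRealCLM.hasDerivAt (x := t)).const_mul c).const_add 1
  have hP : ∀ c : ℂ, ∀ t : ℝ, HasDerivAt
      (fun t : ℝ => (1 + c * (t : ℂ)) * Complex.exp (a * t) / a - c * Complex.exp (a * t) / a ^ 2)
      ((1 + c * t) * Complex.exp (a * t)) t := by
    intro c t
    have := ((((hlin c t).mul (hexp t)).div_const a).sub (((hexp t).const_mul c).div_const (a ^ 2)))
    refine this.congr_deriv ?_
    field_simp
    ring
  have e1 : ∫ t in (-l)..0, (triF l t : ℂ) * Complex.exp (a * t) =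
      ∫ t in (-l)..0, (1 + (1 / l : ℂ) * (t : ℂ)) * Complex.exp (a * t) := by
    apply intervalIntegral.integral_congr
    intro t ht
    rw [uIcc_of_le (by linarith)] at ht
    have : triF l t = 1 + 1 / l * t := by
      unfold triF
      rw [abs_of_nonpos ht.2, max_eq_right]
      · ring
      · have : -t / l ≤ 1 := by rw [div_le_one hl]; linarith [ht.1]
        linarith
    simp only [this]; push_cast; ring
  have e2 : ∫ t in (0)..l, (triF l t : ℂ) * Complex.exp (a * t) =
      ∫ t in (0)..l, (1 + (-1 / l : ℂ) * (t : ℂ)) * Complex.exp (a * t) := by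
    apply intervalIntegral.integral_congr
    intro t ht
    rw [uIcc_of_le (by linarith)] at ht
    have : triF l t = 1 + -1 / l * t := by
      unfold triF
      rw [abs_of_nonneg ht.1, max_eq_right]
      · ring
      · have : t / l ≤ 1 := by rw [div_le_one hl]; linarith [ht.2]
        linarith
    simp only [this]; push_cast; ring
  have hci : ∀ c : ℂ, ∀ x y : ℝ, IntervalIntegrable
      (fun t : ℝ => (1 + c * (t : ℂ)) * Complex.exp (a * t)) volume x y := by
    intro c x y
    apply Continuous.intervalIntegrable
    fun_prop
  rw [e1, e2, intervalIntegral.integral_eq_sub_of_hasDerivAt (fun t _ => hP _ t) (hci _ _ _),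
    intervalIntegral.integral_eq_sub_of_hasDerivAt (fun t _ => hP _ t) (hci _ _ _)]
  have hcos : Complex.exp (a * l) + Complex.exp (a * (-l : ℝ)) = 2 * (Real.cos (l * u) : ℝ) := by
    rw [Complex.ofReal_cos, Complex.cos, ha]
    push_cast
    ring_nf
  have ha2 : a ^ 2 = -(u : ℂ) ^ 2 := by
    rw [ha]; ring_nf; simp
  have huC : (u : ℂ) ≠ 0 := by exact_mod_cast hu
  have key : (1 + (1 / l : ℂ) * ((0 : ℝ) : ℂ)) * Complex.exp (a * (0 : ℝ)) / a
      - (1 / l : ℂ) * Complex.exp (a * (0 : ℝ)) / a ^ 2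
      - ((1 + (1 / l : ℂ) * ((-l : ℝ) : ℂ)) * Complex.exp (a * (-l : ℝ)) / a
      - (1 / l : ℂ) * Complex.exp (a * (-l : ℝ)) / a ^ 2)
      + ((1 + (-1 / l : ℂ) * (l : ℂ)) * Complex.exp (a * l) / a
      - (-1 / l : ℂ) * Complex.exp (a * l) / a ^ 2
      - ((1 + (-1 / l : ℂ) * ((0 : ℝ) : ℂ)) * Complex.exp (a * (0 : ℝ)) / a
      - (-1 / l : ℂ) * Complex.exp (a * (0 : ℝ)) / a ^ 2))
      = ((Complex.exp (a * l) + Complex.exp (a * (-l : ℝ))) - 2) / (l * a ^ 2) := by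
    have h1 : (1 + (1 / l : ℂ) * ((-l : ℝ) : ℂ)) = 0 := by push_cast; field_simp; ring
    have h2 : (1 + (-1 / l : ℂ) * (l : ℂ)) = 0 := by field_simp; ring
    rw [h1, h2]
    simp only [Complex.ofReal_zero, mul_zero, Complex.exp_zero, add_zero, zero_mul, zero_div]
    field_simp
    ring
  rw [key, hcos, ha2]
  unfold fejK
  push_cast
  field_simp
  ring

theorem conv_fej_tendsto (b : ℝ → ℝ) (hbm : Measurable b) (B : ℝ) (hB : ∀ u, |b u| ≤ B)
    (hb0 : ∀ u < 0, b u = 0) (F : ℂ → ℂ) (hFc : ContinuousOn F {s | 0 ≤ s.re})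
    (hF : ∀ s : ℂ, 0 < s.re → F s = ∫ u, (b u : ℂ) * Complex.exp (-s * u))
    {l : ℝ} (hl : 0 < l) :
    Tendsto (fun v => ∫ u, b u * (l * fejK (l * (u - v)))) atTop (𝓝 0) := by
  have hB0 : 0 ≤ B := (abs_nonneg _).trans (hB 0)
  have hKi : ∀ v, Integrable (fun u => l * fejK (l * (u - v))) := fun v =>
    (((integrable_fejK.comp_mul_left' hl.ne').comp_sub_right v).const_mul l)
  -- the identity for positive σ
  have hid : ∀ v : ℝ, ∀ σ : ℝ, 0 < σ →
      ∫ u, ((b u * Real.exp (-σ * u) * (l * fejK (l * (u - v))) : ℝ) : ℂ) =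
      ∫ t : ℝ, (triF l t : ℂ) * Complex.exp (Complex.I * v * t) * F (σ + Complex.I * t) := by
    intro v σ hσ
    have hbi : Integrable (fun u => b u * Real.exp (-σ * u)) := by
      have h1 : IntegrableOn (fun u => B * Real.exp (-σ * u)) (Ioi 0) := by
        have := (integrableOn_exp_mul_Ioi (a := -σ) (by linarith) 0)
        exact this.const_mul B
      have h1' : IntegrableOn (fun u => B * Real.exp (-σ * u)) (Ici 0) :=
        (integrableOn_Ici_iff_integrableOn_Ioi).mpr h1
      have h2 : IntegrableOn (fun u => b u * Real.exp (-σ * u)) (Ici 0) := by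
        refine h1'.mono' (by fun_prop) (Eventually.of_forall fun u => ?_)
        rw [norm_mul, Real.norm_eq_abs, Real.norm_of_nonneg (Real.exp_nonneg _)]
        exact mul_le_mul_of_nonneg_right (hB u) (Real.exp_nonneg _)
      rw [← integrableOn_univ]
      refine h2.of_forall_sdiff_eq_zero MeasurableSet.univ fun u hu => ?_
      rw [hb0 u (by simpa using hu.2), zero_mul]
    have hti : Integrable (fun t => (triF l t : ℂ)) := (integrable_triF hl).ofReal
    have hprod := (hbi.ofReal (𝕜 := ℂ)).mul_prod hti
    have hprod2 : Integrable (Function.uncurry fun (u t : ℝ) =>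
        ((b u * Real.exp (-σ * u) : ℝ) : ℂ) * (triF l t : ℂ) *
          Complex.exp (-(Complex.I * (u - v : ℝ)) * t)) (volume.prod volume) := by
      refine hprod.mono ?_ (Eventually.of_forall fun z => ?_)
      · apply Measurable.aestronglyMeasurable
        have := (continuous_triF l).measurable
        unfold Function.uncurry
        fun_prop
      · simp only [Function.uncurry, norm_mul]
        have : ‖Complex.exp (-(Complex.I * (z.1 - v : ℝ)) * z.2)‖ = 1 := by
          have : -(Complex.I * (z.1 - v : ℝ)) * z.2 = ((-(z.1 - v) * z.2 : ℝ) : ℂ) * Complex.I := by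
            push_cast; ring
          rw [this, Complex.norm_exp_ofReal_mul_I]
        rw [this]; simp
    have hsw := integral_integral_swap hprod2
    have hl1 : ∫ u, ((b u * Real.exp (-σ * u) * (l * fejK (l * (u - v))) : ℝ) : ℂ) =
        ∫ u, ∫ t, ((b u * Real.exp (-σ * u) : ℝ) : ℂ) * (triF l t : ℂ) *
          Complex.exp (-(Complex.I * (u - v : ℝ)) * t) := by
      apply integral_congr_ae
      have : ∀ᵐ u : ℝ, u ≠ v := by
        simp [ae_iff]
      filter_upwards [this] with u hu
      simp_rw [mul_assoc]
      rw [integral_const_mul, integral_triF hl (sub_ne_zero.mpr hu)]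
      push_cast; ring
    rw [hl1, hsw]
    congr 1
    ext t
    rw [hF _ (by simpa using hσ), ← integral_const_mul]
    congr 1
    ext u
    have : Complex.exp (-(Complex.I * (u - v : ℝ)) * t) * Complex.exp (-σ * u) =
        Complex.exp (Complex.I * v * t) * Complex.exp (-(σ + Complex.I * t) * u) := by
      rw [← Complex.exp_add, ← Complex.exp_add]
      congr 1; push_cast; ring
    push_cast at this ⊢
    linear_combination (b u : ℂ) * (triF l t : ℂ) * this
  -- limit σ → 0
  have hid0 : ∀ v : ℝ, ∫ u, ((b u * (l * fejK (l * (u - v))) : ℝ) : ℂ) =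
      ∫ t : ℝ, (triF l t : ℂ) * Complex.exp (Complex.I * v * t) * F (Complex.I * t) := by
    intro v
    have hL : Tendsto (fun σ : ℝ => ∫ u, ((b u * Real.exp (-σ * u) * (l * fejK (l * (u - v))) : ℝ) : ℂ))
        (𝓝[>] 0) (𝓝 (∫ u, ((b u * (l * fejK (l * (u - v))) : ℝ) : ℂ))) := by
      refine tendsto_integral_filter_of_dominated_convergence
        (fun u => B * (l * fejK (l * (u - v)))) ?_ ?_ ((hKi v).const_mul B) ?_
      · refine Eventually.of_forall fun σ => Measurable.aestronglyMeasurable ?_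
        have := measurable_fejK
        fun_prop
      · filter_upwards [self_mem_nhdsWithin] with σ hσ
        refine Eventually.of_forall fun u => ?_
        rw [Complex.norm_real, norm_mul, norm_mul, Real.norm_of_nonneg (Real.exp_nonneg _),
          Real.norm_of_nonneg (mul_nonneg hl.le (fejK_nonneg _))]
        apply mul_le_mul_of_nonneg_right _ (mul_nonneg hl.le (fejK_nonneg _))
        rcases lt_or_ge u 0 with hu | hu
        · simp [hb0 u hu, hB0]
        · calc ‖b u‖ * Real.exp (-σ * u) ≤ B * 1 := by
                apply mul_le_mul (hB u) _ (Real.exp_nonneg _) hB0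
                rw [Real.exp_le_one_iff]
                have : 0 ≤ σ * u := mul_nonneg (le_of_lt hσ) hu
                linarith
            _ = B := mul_one _
      · refine Eventually.of_forall fun u => ?_
        have : Continuous (fun σ : ℝ => ((b u * Real.exp (-σ * u) * (l * fejK (l * (u - v))) : ℝ) : ℂ)) := by
          fun_prop
        have h := this.tendsto 0
        simp only [neg_zero, zero_mul, Real.exp_zero, mul_one] at h
        exact h.mono_left nhdsWithin_le_nhds
    have hcpt : IsCompact ((fun p : ℝ × ℝ => (p.1 : ℂ) + Complex.I * p.2) '' (Icc 0 1 ×ˢ Icc (-l) l)) := by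
      apply IsCompact.image
      · exact isCompact_Icc.prod isCompact_Icc
      · fun_prop
    obtain ⟨M, hM⟩ := hcpt.exists_bound_of_continuousOn (f := F) (hFc.mono (by
      rintro _ ⟨p, hp, rfl⟩
      simpa using hp.1.1))
    have hR : Tendsto (fun σ : ℝ =>
        ∫ t : ℝ, (triF l t : ℂ) * Complex.exp (Complex.I * v * t) * F (σ + Complex.I * t))
        (𝓝[>] 0) (𝓝 (∫ t : ℝ, (triF l t : ℂ) * Complex.exp (Complex.I * v * t) * F (Complex.I * t))) := by
      refine tendsto_integral_filter_of_dominated_convergence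
        (fun t => triF l t * M) ?_ ?_ ((integrable_triF hl).mul_const M) ?_
      · filter_upwards [self_mem_nhdsWithin] with σ hσ
        apply Continuous.aestronglyMeasurable
        have h1 := continuous_triF l
        have h2 : Continuous (fun t : ℝ => F (σ + Complex.I * t)) := by
          apply hFc.comp_continuous (by fun_prop)
          intro t
          simpa using le_of_lt hσ
        exact ((Complex.continuous_ofReal.comp h1).mul (by fun_prop)).mul h2
      · have : ∀ᶠ σ : ℝ in 𝓝[>] 0, σ ∈ Ioc (0 : ℝ) 1 := Ioc_mem_nhdsGT zero_lt_one
        filter_upwards [this] with σ hσ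
        refine Eventually.of_forall fun t => ?_
        have h1 : ‖Complex.exp (Complex.I * v * t)‖ = 1 := by
          have : Complex.I * v * t = ((v * t : ℝ) : ℂ) * Complex.I := by push_cast; ring
          rw [this, Complex.norm_exp_ofReal_mul_I]
        rw [norm_mul, norm_mul, h1, mul_one, Complex.norm_real, Real.norm_of_nonneg (triF_nonneg _ _)]
        rcases le_or_gt l |t| with ht | ht
        · simp [triF_eq_zero hl ht]
        · apply mul_le_mul_of_nonneg_left _ (triF_nonneg _ _)
          apply hM
          exact ⟨(σ, t), ⟨⟨hσ.1.le, hσ.2⟩, abs_le.mp ht.le⟩, rfl⟩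
      · refine Eventually.of_forall fun t => ?_
        apply Tendsto.const_mul
        have h := (hFc (Complex.I * t) (by simp)).tendsto
        refine h.comp ?_
        rw [tendsto_nhdsWithin_iff]
        constructor
        · have : Continuous (fun σ : ℝ => (σ : ℂ) + Complex.I * t) := by fun_prop
          have h := this.tendsto 0
          simp only [Complex.ofReal_zero, zero_add] at h
          exact h.mono_left nhdsWithin_le_nhds
        · filter_upwards [self_mem_nhdsWithin] with σ hσ
          simpa using le_of_lt hσ
    refine tendsto_nhds_unique hL (hR.congr' ?_)
    filter_upwards [self_mem_nhdsWithin] with σ hσ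
    exact (hid v σ hσ).symm
  -- Riemann-Lebesgue
  have hRL := Real.tendsto_integral_exp_smul_cocompact (fun t : ℝ => (triF l t : ℂ) * F (Complex.I * t))
  have hlin : Tendsto (fun v : ℝ => -(v / (2 * Real.pi))) atTop (cocompact ℝ) := by
    have h1 : Tendsto (fun v : ℝ => -(v / (2 * Real.pi))) atTop atBot := by
      apply tendsto_neg_atTop_atBot.comp
      exact tendsto_id.atTop_div_const (by positivity)
    exact h1.mono_right atBot_le_cocompact
  have h := hRL.comp hlin
  have h2 : Tendsto (fun v => ((∫ u, b u * (l * fejK (l * (u - v))) : ℝ) : ℂ)) atTop (𝓝 0) := by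
    refine h.congr fun v => ?_
    rw [← integral_complex_ofReal, hid0 v]
    simp only [Function.comp]
    congr 1
    ext t
    rw [Circle.smul_def, Real.fourierChar_apply, smul_eq_mul]
    have : ((2 * Real.pi * -(t * -(v / (2 * Real.pi))) : ℝ) : ℂ) * Complex.I = Complex.I * v * t := by
      have : (2 * Real.pi * -(t * -(v / (2 * Real.pi))) : ℝ) = t * v := by
        field_simp
      rw [this]; push_cast; ring
    rw [this]; ring
  have h3 := (Complex.continuous_re.tendsto 0).comp h2
  simp only [Complex.zero_re] at h3
  exact h3.congr fun v => by simp
end Tauber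


section Tauber2
open MeasureTheory Topology Set

lemma tauber_key (c : ℝ → ℝ) (hcm : Measurable c) (B : ℝ) (hB : ∀ u, |c u| ≤ B)
    (hI : ∀ l : ℝ, 0 < l → Tendsto (fun v => ∫ u, c u * (l * fejK (l * (u - v)))) atTop (𝓝 0))
    {m h : ℝ} (hm : 0 < m) (hh : 0 < h) :
    ∀ᶠ v in atTop, ¬ (∀ u ∈ Icc (v - h) (v + h), m ≤ c u) := by
  have hB0 : 0 ≤ B := (abs_nonneg _).trans (hB 0)
  set κ := ∫ y, fejK y with hκ
  have hκpos : 0 < κ := integral_fejK_pos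
  have hlim : Tendsto (fun R : ℝ => ∫ y in (-R)..R, fejK y) atTop (𝓝 κ) :=
    intervalIntegral_tendsto_integral integrable_fejK tendsto_neg_atTop_atBot tendsto_id
  have hlim2 : Tendsto (fun R : ℝ => m * (∫ y in (-R)..R, fejK y) - B * (κ - ∫ y in (-R)..R, fejK y))
      atTop (𝓝 (m * κ - B * (κ - κ))) :=
    (hlim.const_mul m).sub ((tendsto_const_nhds.sub hlim).const_mul B)
  have hpos : m * κ / 2 < m * κ - B * (κ - κ) := by
    have : 0 < m * κ := by positivity
    rw [sub_self, mul_zero]; linarith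
  obtain ⟨R, hR, hR0⟩ := ((hlim2.eventually (lt_mem_nhds hpos)).and (eventually_gt_atTop 0)).exists
  set l := R / h with hl
  have hl0 : 0 < l := by positivity
  have hev := (hI l hl0).eventually (gt_mem_nhds (show (0:ℝ) < m * κ / 2 by positivity))
  filter_upwards [hev] with v hv hcon
  have hsub : ∫ u, c u * (l * fejK (l * (u - v))) = ∫ y, c (v + y / l) * fejK y := by
    have h1 := MeasureTheory.Measure.integral_comp_mul_left (fun y => c (v + y / l) * fejK y) l
    have h2 := integral_sub_right_eq_self (μ := volume) (fun u => c (v + (l * u) / l) * fejK (l * u)) v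
    rw [← h2] at h1
    rw [abs_of_pos (inv_pos.mpr hl0), smul_eq_mul] at h1
    have h3 : ∫ y, c (v + y / l) * fejK y =
        l * ∫ (x : ℝ), c (v + l * (x - v) / l) * fejK (l * (x - v)) := by
      rw [h1]; field_simp
    rw [h3, ← integral_const_mul]
    congr 1
    ext u
    have : v + l * (u - v) / l = u := by field_simp; ring
    rw [this]; ring
  rw [hsub] at hv
  have hIntg : Integrable (fun y => c (v + y / l) * fejK y) := by
    refine (integrable_fejK.const_mul B).mono' ?_ (Eventually.of_forall fun y => ?_)
    · apply Measurable.aestronglyMeasurable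
      have := measurable_fejK
      fun_prop
    · rw [norm_mul, Real.norm_of_nonneg (fejK_nonneg y)]
      exact mul_le_mul_of_nonneg_right (hB _) (fejK_nonneg y)
  have hRR : -R ≤ R := by linarith
  rw [intervalIntegral.integral_of_le hRR] at hR
  have hsplitK := integral_add_compl (μ := volume) (measurableSet_Ioc (a := -R) (b := R)) integrable_fejK
  have hsplit := integral_add_compl (μ := volume) (measurableSet_Ioc (a := -R) (b := R)) hIntg
  have h1 : m * ∫ y in Ioc (-R) R, fejK y ≤ ∫ y in Ioc (-R) R, c (v + y / l) * fejK y := by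
    rw [← integral_const_mul]
    refine setIntegral_mono_on (integrable_fejK.const_mul m).integrableOn hIntg.integrableOn
      measurableSet_Ioc fun y hy => ?_
    apply mul_le_mul_of_nonneg_right _ (fejK_nonneg y)
    apply hcon
    have e : R / l = h := by rw [hl]; field_simp
    have h1 : y / l ≤ h := by rw [← e]; exact div_le_div_of_nonneg_right hy.2 hl0.le
    have h2 : -h ≤ y / l := by rw [← e, ← neg_div]; exact div_le_div_of_nonneg_right hy.1.le hl0.le
    constructor <;> linarith
  have h2 : -(B * ∫ y in (Ioc (-R) R)ᶜ, fejK y) ≤ ∫ y in (Ioc (-R) R)ᶜ, c (v + y / l) * fejK y := by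
    rw [← integral_const_mul, ← integral_neg]
    refine setIntegral_mono_on (integrable_fejK.const_mul B).neg.integrableOn hIntg.integrableOn
      measurableSet_Ioc.compl fun y hy => ?_
    rw [← neg_mul]
    apply mul_le_mul_of_nonneg_right _ (fejK_nonneg y)
    exact (abs_le.mp (hB _)).1
  have h3 : κ - ∫ y in Ioc (-R) R, fejK y = ∫ y in (Ioc (-R) R)ᶜ, fejK y := by
    rw [hκ, ← hsplitK]; ring
  rw [h3] at hR
  linarith

theorem tauber_theta (θ : ℝ → ℝ) (hmono : Monotone θ) (hnn : ∀ x, 0 ≤ θ x) (B : ℝ)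
    (hB : ∀ x, 1 ≤ x → θ x ≤ B * x)
    (F : ℂ → ℂ) (hFc : ContinuousOn F {s | 0 ≤ s.re})
    (hF : ∀ s : ℂ, 0 < s.re → F s = ∫ u in Ioi (0:ℝ),
      ((θ (Real.exp u) * Real.exp (-u) - 1 : ℝ) : ℂ) * Complex.exp (-s * u)) :
    Tendsto (fun x => θ x / x) atTop (𝓝 1) := by
  set φ : ℝ → ℝ := fun u => θ (Real.exp u) * Real.exp (-u) with hφ
  set b : ℝ → ℝ := indicator (Ioi 0) (fun u => φ u - 1) with hb
  have hB0 : 0 ≤ B := by have := (hnn 1).trans (hB 1 le_rfl); linarith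
  have hφm : Measurable φ := by
    have := hmono.measurable
    fun_prop
  have hbm : Measurable b := (hφm.sub_const 1).indicator measurableSet_Ioi
  have hφ0 : ∀ u, 0 ≤ φ u := fun u => mul_nonneg (hnn _) (Real.exp_nonneg _)
  have hφB : ∀ u, 0 < u → φ u ≤ B := by
    intro u hu
    have := hB (Real.exp u) (Real.one_le_exp hu.le)
    calc φ u ≤ B * Real.exp u * Real.exp (-u) := mul_le_mul_of_nonneg_right this (Real.exp_nonneg _)
      _ = B := by rw [mul_assoc, ← Real.exp_add]; simp
  have hbB : ∀ u, |b u| ≤ B + 1 := by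
    intro u
    rw [hb]
    by_cases hu : u ∈ Ioi 0
    · rw [indicator_of_mem hu, abs_le]
      constructor <;> linarith [hφ0 u, hφB u hu]
    · rw [indicator_of_notMem hu]; simp; linarith
  have hI : ∀ l : ℝ, 0 < l → Tendsto (fun v => ∫ u, b u * (l * fejK (l * (u - v)))) atTop (𝓝 0) := by
    intro l hl
    refine conv_fej_tendsto b hbm (B + 1) hbB (fun u hu => ?_) F hFc (fun s hs => ?_) hl
    · rw [hb, indicator_of_notMem]; simp [hu.le]
    · rw [hF s hs, ← integral_indicator measurableSet_Ioi]
      congr 1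
      ext u
      by_cases hu : u ∈ Ioi 0
      · rw [hb, indicator_of_mem hu, indicator_of_mem hu]
      · rw [hb, indicator_of_notMem hu, indicator_of_notMem hu]; simp
  have hI' : ∀ l : ℝ, 0 < l → Tendsto (fun v => ∫ u, (-b) u * (l * fejK (l * (u - v)))) atTop (𝓝 0) := by
    intro l hl
    have := (hI l hl).neg
    simp only [neg_zero] at this
    refine this.congr fun v => ?_
    rw [← integral_neg]
    simp
  have hgrow : ∀ u w, u ≤ w → φ u * Real.exp u ≤ φ w * Real.exp w := by
    intro u w huw
    simp only [hφ]
    rw [mul_assoc, mul_assoc, ← Real.exp_add, ← Real.exp_add]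
    simpa using hmono (Real.exp_le_exp.mpr huw)
  have hgrow2 : ∀ u w d, u ≤ w → w ≤ u + d → φ u * Real.exp (-d) ≤ φ w := by
    intro u w d h1 h2
    have h3 := hgrow u w h1
    have h4 : φ u * Real.exp (u - w) ≤ φ w := by
      rw [Real.exp_sub, ← mul_div_assoc, div_le_iff₀ (Real.exp_pos w)]
      exact h3
    refine le_trans (mul_le_mul_of_nonneg_left ?_ (hφ0 u)) h4
    exact Real.exp_le_exp.mpr (by linarith)
  have hlim : Tendsto φ atTop (𝓝 1) := by
    rw [tendsto_order]
    constructor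
    · intro a ha
      -- lower bound
      set a' := max a (1/2) with ha'
      have ha1 : a' < 1 := max_lt ha (by norm_num)
      have ha0 : 0 < a' := lt_of_lt_of_le (by norm_num) (le_max_right _ _)
      have hlog : Real.log a' < 0 := Real.log_neg ha0 ha1
      set h := -Real.log a' / 4 with hh
      have hh0 : 0 < h := by rw [hh]; linarith
      have hm : 0 < 1 - Real.exp (Real.log a' / 2) := by
        have : Real.exp (Real.log a' / 2) < 1 := by rw [Real.exp_lt_one_iff]; linarith
        linarith
      have hk := tauber_key (-b) hbm.neg (B + 1) (fun u => by simpa using hbB u) hI' hm hh0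
      have hk2 := (tendsto_atTop_add_const_right atTop (-h) tendsto_id).eventually hk
      filter_upwards [hk2, eventually_gt_atTop (2 * h)] with v hv hv2
      by_contra hcon
      apply hv
      intro u hu
      simp only [id] at hu
      have hu1 : u ≤ v := by linarith [hu.2]
      have hu2 : v ≤ u + 2 * h := by linarith [hu.1]
      have hu0 : u ∈ Ioi (0:ℝ) := by simp only [mem_Ioi]; linarith [hu.1]
      rw [Pi.neg_apply, hb, indicator_of_mem hu0]
      have h1 := hgrow2 u v (2 * h) hu1 hu2
      have h2 : φ u ≤ a' * Real.exp (2 * h) := by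
        have : φ u * Real.exp (-(2 * h)) ≤ a' := h1.trans ((not_lt.mp hcon).trans (le_max_left _ _))
        rw [Real.exp_neg, ← div_eq_mul_inv, div_le_iff₀ (Real.exp_pos _)] at this
        exact this
      have h3 : a' * Real.exp (2 * h) = Real.exp (Real.log a' / 2) := by
        nth_rewrite 1 [← Real.exp_log ha0]
        rw [← Real.exp_add]; congr 1; rw [hh]; ring
      linarith
    · intro a ha
      have ha0 : 0 < a := by linarith
      have hlog : 0 < Real.log a := Real.log_pos ha
      set h := Real.log a / 4 with hh
      have hh0 : 0 < h := by positivity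
      have hm : 0 < Real.exp (Real.log a / 2) - 1 := by
        have : 1 < Real.exp (Real.log a / 2) := by rw [Real.one_lt_exp_iff]; linarith
        linarith
      have hk := tauber_key b hbm (B + 1) hbB hI hm hh0
      have hk2 := (tendsto_atTop_add_const_right atTop h tendsto_id).eventually hk
      filter_upwards [hk2, eventually_gt_atTop 0] with v hv hv2
      by_contra hcon
      apply hv
      intro u hu
      simp only [id] at hu
      have hu1 : v ≤ u := by linarith [hu.1]
      have hu2 : u ≤ v + 2 * h := by linarith [hu.2]
      have hu0 : u ∈ Ioi (0:ℝ) := by simp only [mem_Ioi]; linarith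
      rw [hb, indicator_of_mem hu0]
      have h1 := hgrow2 v u (2 * h) hu1 hu2
      have h2 : a * Real.exp (-(2 * h)) ≤ φ u :=
        (mul_le_mul_of_nonneg_right (not_lt.mp hcon) (Real.exp_nonneg _)).trans h1
      have h3 : a * Real.exp (-(2 * h)) = Real.exp (Real.log a / 2) := by
        nth_rewrite 1 [← Real.exp_log ha0]
        rw [← Real.exp_add]; congr 1; rw [hh]; ring
      linarith
  refine (hlim.comp Real.tendsto_log_atTop).congr' ?_
  filter_upwards [eventually_gt_atTop 0] with x hx
  simp only [Function.comp, hφ]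
  rw [Real.exp_neg, Real.exp_log hx, div_eq_mul_inv]
end Tauber2


section PrimesBasic
open NumberField Topology

variable (k : Type*) [Field k] [NumberField k]

/-- the norm of a prime -/
noncomputable def nrm {k : Type*} [Field k] [NumberField k]
    (P : HeightOneSpectrum (RingOfIntegers k)) : ℕ := Ideal.absNorm P.asIdeal

variable {k} in
lemma two_le_nrm (P : HeightOneSpectrum (RingOfIntegers k)) : 2 ≤ nrm P := by
  have h0 : nrm P ≠ 0 := by
    unfold nrm
    rw [Ne, Ideal.absNorm_eq_zero_iff]; exact P.ne_bot
  have h1 : nrm P ≠ 1 := by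
    unfold nrm
    rw [Ne, Ideal.absNorm_eq_one_iff]; exact P.isPrime.ne_top
  omega

lemma finite_primes_le (x : ℝ) :
    {p : HeightOneSpectrum (RingOfIntegers k) | (nrm p : ℝ) ≤ x}.Finite := by
  have h := Ideal.finite_setOfPred_absNorm_le (S := RingOfIntegers k) ⌊x⌋₊
  refine Set.Finite.of_finite_image (f := fun P => P.asIdeal) (h.subset ?_) ?_
  · rintro _ ⟨P, hP, rfl⟩
    exact Nat.le_floor hP
  · intro P _ Q _ h
    exact HeightOneSpectrum.ext h

/-- finset of primes of norm at most `x` -/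
noncomputable def primesF (x : ℝ) : Finset (HeightOneSpectrum (RingOfIntegers k)) :=
  (finite_primes_le k x).toFinset

variable {k} in
lemma mem_primesF {x : ℝ} {P : HeightOneSpectrum (RingOfIntegers k)} :
    P ∈ primesF k x ↔ (nrm P : ℝ) ≤ x := by
  simp [primesF]

/-- Chebyshev theta of `k` -/
noncomputable def thetaK (x : ℝ) : ℝ := ∑ P ∈ primesF k x, Real.log (nrm P)

variable {k} in
/-- rational prime below -/
noncomputable def below (P : HeightOneSpectrum (RingOfIntegers k)) : ℕ :=
  Ideal.absNorm (P.asIdeal.under ℤ)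

variable {k} in
lemma below_prime (P : HeightOneSpectrum (RingOfIntegers k)) : (below P).Prime := by
  have := P.isPrime
  have : NeZero P.asIdeal := ⟨P.ne_bot⟩
  exact Nat.absNorm_under_prime P.asIdeal

variable {k} in
lemma below_le (P : HeightOneSpectrum (RingOfIntegers k)) : below P ≤ nrm P := by
  refine Nat.le_of_dvd (by linarith [two_le_nrm P]) ?_
  exact Int.absNorm_under_dvd_absNorm P.asIdeal

lemma card_fiber_le (s : Finset (HeightOneSpectrum (RingOfIntegers k))) (p : ℕ) :
    (s.filter (fun P => below P = p)).card ≤ Module.finrank ℚ k := by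
  classical
  rcases (s.filter (fun P => below P = p)).eq_empty_or_nonempty with h | ⟨P0, h0⟩
  · rw [h]; simp
  have hp : p.Prime := by
    rw [← (Finset.mem_filter.mp h0).2]; exact below_prime P0
  have hpZ : Prime (p : ℤ) := Nat.prime_iff_prime_int.mp hp
  have hne : (Ideal.span {(p : ℤ)}) ≠ ⊥ := by
    rw [Ne, Ideal.span_singleton_eq_bot]; exact_mod_cast hp.ne_zero
  have hmax : (Ideal.span {(p : ℤ)}).IsMaximal :=
    PrincipalIdealRing.isMaximal_of_irreducible hpZ.irreducible
  have h := Ideal.card_primesOverFinset_le_finrank (RingOfIntegers k) ℚ k hne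
  refine le_trans ?_ h
  refine Finset.card_le_card_of_injOn (fun P => P.asIdeal) ?_ ?_
  · intro P hP
    have hP' := (Finset.mem_filter.mp hP).2
    have := P.isPrime
    have hov : P.asIdeal.LiesOver (Ideal.span {(p : ℤ)}) := by
      constructor
      rw [← Int.ideal_span_absNorm_eq_self (P.asIdeal.under ℤ), ← hP']
      rfl
    rw [Finset.mem_coe, IsDedekindDomain.mem_primesOverFinset_iff hne]
    exact ⟨P.isPrime, hov⟩
  · intro P _ Q _ h
    exact HeightOneSpectrum.ext h

lemma sum_below_le (f : ℕ → ℝ) (x : ℝ) (hf : ∀ p : ℕ, (p : ℝ) ≤ x → 0 ≤ f p) :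
    ∑ P ∈ primesF k x, f (below P) ≤ Module.finrank ℚ k * ∑ p ∈ Nat.primesLE ⌊x⌋₊, f p := by
  classical
  have hle : ∀ P ∈ primesF k x, (below P : ℝ) ≤ x := fun P hP =>
    le_trans (by exact_mod_cast below_le P) (mem_primesF.mp hP)
  have hx0 : ∀ P ∈ primesF k x, 0 ≤ x := fun P hP => (Nat.cast_nonneg _).trans (hle P hP)
  have hmaps : ∀ P ∈ primesF k x, below P ∈ Nat.primesLE ⌊x⌋₊ := by
    intro P hP
    rw [Nat.mem_primesLE]
    exact ⟨Nat.le_floor (hle P hP), below_prime P⟩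
  rw [← Finset.sum_fiberwise_of_maps_to hmaps, Finset.mul_sum]
  refine Finset.sum_le_sum fun p hp => ?_
  have h1 : ∑ P ∈ (primesF k x).filter (fun P => below P = p), f (below P) =
      ((primesF k x).filter (fun P => below P = p)).card * f p := by
    rw [Finset.sum_congr rfl (g := fun _ => f p), Finset.sum_const, nsmul_eq_mul]
    intro P hP
    rw [(Finset.mem_filter.mp hP).2]
  rw [h1]
  rcases ((primesF k x).filter (fun P => below P = p)).eq_empty_or_nonempty with h | ⟨P0, h0⟩
  · rw [h]
    simp only [Finset.card_empty, Nat.cast_zero, zero_mul]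
    rw [Nat.mem_primesLE] at hp
    have : (p : ℝ) ≤ x := by
      have := hp.2.pos
      exact (Nat.le_floor_iff' this.ne').mp hp.1
    exact mul_nonneg (Nat.cast_nonneg _) (hf p this)
  · apply mul_le_mul_of_nonneg_right
    · exact_mod_cast card_fiber_le k _ p
    · apply hf
      rw [← (Finset.mem_filter.mp h0).2]
      exact hle _ (Finset.mem_filter.mp h0).1

lemma thetaK_nonneg (x : ℝ) : 0 ≤ thetaK k x :=
  Finset.sum_nonneg fun P _ => Real.log_nonneg (by
    have := two_le_nrm P; exact_mod_cast (by omega : 1 ≤ nrm P))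

lemma thetaK_mono : Monotone (thetaK k) := by
  intro x y hxy
  refine Finset.sum_le_sum_of_subset_of_nonneg ?_ ?_
  · intro P hP
    rw [mem_primesF] at hP ⊢
    linarith
  · intro P _ _
    exact Real.log_nonneg (by have := two_le_nrm P; exact_mod_cast (by omega : 1 ≤ nrm P))

lemma sum_log_div_eq (x : ℝ) (hx : 1 ≤ x) :
    ∑ P ∈ primesF k x, Real.log (x / nrm P) = (primesF k x).card * Real.log x - thetaK k x := by
  rw [thetaK, ← nsmul_eq_mul, ← Finset.sum_const, ← Finset.sum_sub_distrib]
  refine Finset.sum_congr rfl fun P _ => ?_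
  have := two_le_nrm P
  rw [Real.log_div (by linarith) (by positivity)]

lemma sum_log_div_le (x : ℝ) (hx : 1 ≤ x) :
    ∑ P ∈ primesF k x, Real.log (x / nrm P) ≤
      Module.finrank ℚ k * (Nat.primeCounting ⌊x⌋₊ * Real.log x - Chebyshev.theta x) := by
  have h := sum_below_le k (fun p => Real.log (x / p)) x (fun p hp => by
    rcases Nat.eq_zero_or_pos p with rfl | h0
    · simp
    · apply Real.log_nonneg
      rw [one_le_div (by exact_mod_cast h0)]; exact hp)
  have h2 : ∑ p ∈ Nat.primesLE ⌊x⌋₊, Real.log (x / p) =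
      Nat.primeCounting ⌊x⌋₊ * Real.log x - Chebyshev.theta x := by
    rw [Chebyshev.theta_eq_sum_primesLE, ← Nat.primesLE_card_eq_primeCounting, ← nsmul_eq_mul,
      ← Finset.sum_const, ← Finset.sum_sub_distrib]
    refine Finset.sum_congr rfl fun p hp => ?_
    rw [Nat.mem_primesLE] at hp
    have := hp.2.pos
    rw [Real.log_div (by linarith) (by positivity)]
  rw [h2] at h
  refine le_trans (Finset.sum_le_sum fun P _ => ?_) h
  have h1 := (below_prime P).pos
  have h3 := two_le_nrm P
  apply Real.log_le_log (by positivity)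
  apply div_le_div_of_nonneg_left (by linarith) (by exact_mod_cast h1)
  exact_mod_cast below_le P

lemma pi_sub_theta_littleO :
    Tendsto (fun x : ℝ => (Nat.primeCounting ⌊x⌋₊ * Real.log x - Chebyshev.theta x) / x)
      atTop (𝓝 0) := by
  have h := Chebyshev.primeCounting_sub_theta_div_log_isBigO
  obtain ⟨C, hC⟩ := h.bound
  have h2 : Tendsto (fun x : ℝ => C * (Real.log x)⁻¹) atTop (𝓝 0) := by
    simpa using (Real.tendsto_log_atTop.inv_tendsto_atTop).const_mul C
  refine squeeze_zero_norm' ?_ h2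
  filter_upwards [hC, eventually_gt_atTop 1] with x hx hx1
  have hl := Real.log_pos hx1
  have hx0 : 0 < x := by linarith
  have e : (Nat.primeCounting ⌊x⌋₊ * Real.log x - Chebyshev.theta x) / x =
      (Nat.primeCounting ⌊x⌋₊ - Chebyshev.theta x / Real.log x) * (Real.log x / x) := by
    field_simp
  rw [e, norm_mul, Real.norm_of_nonneg (show 0 ≤ Real.log x / x by positivity)]
  refine (mul_le_mul_of_nonneg_right hx (by positivity)).trans ?_
  rw [Real.norm_of_nonneg (by positivity)]
  apply le_of_eq
  field_simp

lemma sum_log_div_tendsto :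
    Tendsto (fun x : ℝ => (∑ P ∈ primesF k x, Real.log (x / nrm P)) / x) atTop (𝓝 0) := by
  have h := (pi_sub_theta_littleO).const_mul (Module.finrank ℚ k : ℝ)
  rw [mul_zero] at h
  refine squeeze_zero' ?_ ?_ h
  · filter_upwards [eventually_ge_atTop 1] with x hx
    refine div_nonneg (Finset.sum_nonneg fun P hP => ?_) (by linarith)
    have := two_le_nrm P
    apply Real.log_nonneg
    rw [one_le_div (by positivity)]
    exact mem_primesF.mp hP
  · filter_upwards [eventually_ge_atTop 1] with x hx
    rw [← mul_div_assoc]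
    exact div_le_div_of_nonneg_right (sum_log_div_le k x hx) (by linarith)

lemma thetaK_le : ∃ B : ℝ, ∀ x, 1 ≤ x → thetaK k x ≤ B * x := by
  -- sum of log N(P) bounded by n * π(x) log x
  have hpi : ∃ C : ℝ, ∀ x : ℝ, 1 ≤ x → Nat.primeCounting ⌊x⌋₊ * Real.log x ≤ C * x := by
    have h := Chebyshev.eventually_primeCounting_le one_pos
    rw [eventually_atTop] at h
    obtain ⟨a, ha⟩ := h
    set a' := max a 2
    refine ⟨(Real.log 4 + 1) + a' * Real.log a', fun x hx => ?_⟩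
    have ha2 : 2 ≤ a' := le_max_right _ _
    have hla : 0 ≤ Real.log a' := Real.log_nonneg (by linarith)
    have hl4 : 0 ≤ Real.log 4 := Real.log_nonneg (by norm_num)
    rcases le_or_gt a' x with hax | hax
    · have h1 := ha x ((le_max_left _ _).trans hax)
      have hl : 0 < Real.log x := Real.log_pos (by linarith)
      rw [le_div_iff₀ hl] at h1
      refine h1.trans ?_
      have : 0 ≤ a' * Real.log a' * x := by positivity
      linarith
    · have h1 : (Nat.primeCounting ⌊x⌋₊ : ℝ) ≤ a' := by
        have : Nat.primeCounting ⌊x⌋₊ ≤ ⌊x⌋₊ := by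
          rw [← Nat.primesLE_card_eq_primeCounting, Nat.primesLE_eq_filter_Icc_one]
          exact (Finset.card_filter_le _ _).trans (by simp)
        calc (Nat.primeCounting ⌊x⌋₊ : ℝ) ≤ ⌊x⌋₊ := by exact_mod_cast this
          _ ≤ x := Nat.floor_le (by linarith)
          _ ≤ a' := hax.le
      have h2 : Real.log x ≤ Real.log a' := Real.log_le_log (by linarith) hax.le
      have h0 : 0 ≤ Real.log x := Real.log_nonneg hx
      have h3 : Nat.primeCounting ⌊x⌋₊ * Real.log x ≤ a' * Real.log a' :=
        mul_le_mul h1 h2 h0 (by linarith)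
      have h4 : 0 ≤ a' * Real.log a' := by positivity
      nlinarith
  obtain ⟨C, hC⟩ := hpi
  refine ⟨Module.finrank ℚ k * C, fun x hx => ?_⟩
  have h := sum_below_le k (fun _ => Real.log x) x (fun p hp => Real.log_nonneg hx)
  rw [Finset.sum_const (s := Nat.primesLE _), nsmul_eq_mul, Nat.primesLE_card_eq_primeCounting] at h
  calc thetaK k x ≤ ∑ P ∈ primesF k x, Real.log x := by
        refine Finset.sum_le_sum fun P hP => ?_
        have := two_le_nrm P
        exact Real.log_le_log (by positivity) (mem_primesF.mp hP)
    _ ≤ _ := h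
    _ ≤ Module.finrank ℚ k * (C * x) := mul_le_mul_of_nonneg_left (hC x hx) (Nat.cast_nonneg _)
    _ = _ := by ring

theorem final_step (hθ : Tendsto (fun x => thetaK k x / x) atTop (𝓝 1))
    (s : HeightOneSpectrum (NumberField.RingOfIntegers k) → ℝ)
    (M : ℝ)
    (hs_nonneg : ∀ p, 0 ≤ s p)
    (hs_bdd : ∀ p, s p ≤ M)
    (L : ℝ)
    (hC : Tendsto
      (fun N : ℝ =>
        (∑ᶠ p ∈ {p : HeightOneSpectrum (NumberField.RingOfIntegers k) |
            (Ideal.absNorm p.asIdeal : ℝ) ≤ N},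
          s p * Real.log (Ideal.absNorm p.asIdeal)) / N)
      atTop (nhds L)) :
    Tendsto
      (fun N : ℝ =>
        (∑ᶠ p ∈ {p : HeightOneSpectrum (NumberField.RingOfIntegers k) |
            (Ideal.absNorm p.asIdeal : ℝ) ≤ N}, s p) /
        (({p : HeightOneSpectrum (NumberField.RingOfIntegers k) |
            (Ideal.absNorm p.asIdeal : ℝ) ≤ N}).ncard : ℝ))
      atTop (nhds L) := by
  have e1 : ∀ N : ℝ, ∀ f : HeightOneSpectrum (NumberField.RingOfIntegers k) → ℝ,
      (∑ᶠ p ∈ {p : HeightOneSpectrum (NumberField.RingOfIntegers k) |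
            (Ideal.absNorm p.asIdeal : ℝ) ≤ N}, f p) = ∑ P ∈ primesF k N, f P :=
    fun N f => finsum_mem_eq_finite_toFinset_sum f (finite_primes_le k N)
  have e2 : ∀ N : ℝ, ({p : HeightOneSpectrum (NumberField.RingOfIntegers k) |
            (Ideal.absNorm p.asIdeal : ℝ) ≤ N}).ncard = (primesF k N).card :=
    fun N => Set.ncard_eq_toFinset_card _ (finite_primes_le k N)
  simp_rw [e1] at hC ⊢
  simp_rw [e2]
  have hz := sum_log_div_tendsto k
  have hpi : Tendsto (fun x : ℝ => (primesF k x).card * Real.log x / x) atTop (𝓝 1) := by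
    have := hz.add hθ
    rw [zero_add] at this
    refine this.congr' ?_
    filter_upwards [eventually_ge_atTop 1] with x hx
    rw [sum_log_div_eq k x hx]; ring
  have hD0 : Tendsto (fun x : ℝ => (∑ P ∈ primesF k x, s P * Real.log (x / nrm P)) / x) atTop (𝓝 0) := by
    have h := hz.const_mul M
    rw [mul_zero] at h
    have hln : ∀ x : ℝ, ∀ P ∈ primesF k x, 0 ≤ Real.log (x / nrm P) := by
      intro x P hP
      have := two_le_nrm P
      apply Real.log_nonneg
      rw [one_le_div (by positivity)]
      exact mem_primesF.mp hP
    refine squeeze_zero' ?_ ?_ h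
    · filter_upwards [eventually_ge_atTop 1] with x hx
      exact div_nonneg (Finset.sum_nonneg fun P hP => mul_nonneg (hs_nonneg P) (hln x P hP)) (by linarith)
    · filter_upwards [eventually_ge_atTop 1] with x hx
      rw [← mul_div_assoc, Finset.mul_sum]
      refine div_le_div_of_nonneg_right (Finset.sum_le_sum fun P hP => ?_) (by linarith)
      exact mul_le_mul_of_nonneg_right (hs_bdd P) (hln x P hP)
  have hD : Tendsto (fun x : ℝ => (∑ P ∈ primesF k x, s P) * Real.log x / x) atTop (𝓝 L) := by
    have := hD0.add hC
    rw [zero_add] at this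
    refine this.congr' ?_
    filter_upwards [eventually_ge_atTop 1] with x hx
    rw [← add_div, ← Finset.sum_add_distrib, Finset.sum_mul]
    congr 1
    refine Finset.sum_congr rfl fun P _ => ?_
    have := two_le_nrm P
    rw [Real.log_div (by linarith) (by positivity)]
    simp only [nrm]
    ring
  have := hD.div hpi one_ne_zero
  rw [div_one] at this
  refine this.congr' ?_
  filter_upwards [eventually_gt_atTop 1] with x hx
  have hl := Real.log_pos hx
  have hx0 : x ≠ 0 := by linarith
  rw [Pi.div_apply, div_div_div_cancel_right₀ hx0, mul_div_mul_right _ _ hl.ne']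
end PrimesBasic


section LatticeSum
open MeasureTheory ZSpan Module

variable {E : Type*} [NormedAddCommGroup E] [NormedSpace ℝ E] [FiniteDimensional ℝ E]
  [MeasurableSpace E] [BorelSpace E]

lemma lattice_finite_supp (L : Submodule ℤ E) [DiscreteTopology L] (R : ℝ) :
    {a : L | ‖(a : E)‖ ≤ R}.Finite := by
  have h : (Metric.closedBall (0 : E) R ∩ (L : Set E)).Finite := by
    refine Metric.finite_isBounded_inter_isClosed DiscreteTopology.isDiscrete
      Metric.isBounded_closedBall ?_
    rw [← Submodule.coe_toAddSubgroup]
    have : DiscreteTopology L.toAddSubgroup := ‹DiscreteTopology L›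
    exact AddSubgroup.isClosed_of_discrete
  refine Set.Finite.of_finite_image (f := fun a : L => (a : E)) (h.subset ?_)
    (Subtype.val_injective.injOn)
  rintro _ ⟨a, ha, rfl⟩
  exact ⟨by simpa using ha, a.2⟩

lemma lattice_sum (L : Submodule ℤ E) [DiscreteTopology L] [IsZLattice ℝ L]
    (μ : Measure E) [μ.IsAddHaarMeasure]
    (G : E → ℝ) (K R₀ : ℝ) (hG : ∀ x y, |G x - G y| ≤ K * ‖x - y‖)
    (hsupp : ∀ x, R₀ < ‖x‖ → G x = 0) :
    ∃ c C : ℝ, ∀ T : ℝ, 1 ≤ T →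
      |∑' a : L, G (T⁻¹ • (a : E)) - c * T ^ finrank ℝ E| ≤ C * (T ^ finrank ℝ E / T) := by
  classical
  set n := finrank ℝ E with hn
  have : Module.Free ℤ L := ZLattice.module_free ℝ L
  have : Module.Finite ℤ L := ZLattice.module_finite ℝ L
  let b := Module.Free.chooseBasis ℤ L
  have hfd := ZLattice.isAddFundamentalDomain b μ
  set P := fundamentalDomain (b.ofZLatticeBasis ℝ) with hP
  have hPm : MeasurableSet P := fundamentalDomain_measurableSet _
  have hPb : Bornology.IsBounded P := fundamentalDomain_isBounded _
  obtain ⟨R, hRpos, hR⟩ : ∃ R : ℝ, 0 < R ∧ ∀ x ∈ P, ‖x‖ ≤ R := by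
    obtain ⟨R, hR⟩ := isBounded_iff_forall_norm_le.1 hPb
    exact ⟨max R 1, by positivity, fun x hx => (hR x hx).trans (le_max_left _ _)⟩
  have hPfin : μ P < ⊤ := hPb.measure_lt_top
  have hinv : VAddInvariantMeasure L E μ :=
    inferInstanceAs <| VAddInvariantMeasure L.toAddSubgroup E μ
  have hPpos : 0 < μ.real P := by
    have h1 := hfd.measure_ne_zero (NeZero.ne μ)
    exact ENNReal.toReal_pos h1 hPfin.ne
  set R₁ := max R₀ 0 with hR1
  have hsupp' : ∀ x, R₁ < ‖x‖ → G x = 0 := fun x hx => hsupp x ((le_max_left _ _).trans_lt hx)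
  have hR10 : 0 ≤ R₁ := le_max_right _ _
  set K' := |K| with hK'
  have hG' : ∀ x y, |G x - G y| ≤ K' * ‖x - y‖ := fun x y =>
    (hG x y).trans (mul_le_mul_of_nonneg_right (le_abs_self _) (norm_nonneg _))
  have hK'0 : 0 ≤ K' := abs_nonneg _
  have hGc : Continuous G := by
    have : LipschitzWith ⟨K', hK'0⟩ G := LipschitzWith.of_dist_le_mul fun x y => by
      rw [Real.dist_eq, dist_eq_norm]; exact hG' x y
    exact this.continuous
  have hGcs : HasCompactSupport G := by
    refine HasCompactSupport.intro (isCompact_closedBall (0:E) R₁) fun x hx => hsupp' x ?_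
    simpa using hx
  have hGi : Integrable G μ := hGc.integrable_of_hasCompactSupport hGcs
  set V := μ.real (Metric.closedBall (0:E) 1) with hV
  set D := R₁ + 2 * R with hD
  have hD0 : 0 ≤ D := by positivity
  refine ⟨(∫ x, G x ∂μ) / μ.real P, (K' * R * D ^ n * V) / μ.real P, fun T hT => ?_⟩
  have hT0 : 0 < T := by linarith
  set H : E → ℝ := fun x => G (T⁻¹ • x) with hH
  have hHc : Continuous H := hGc.comp (by fun_prop)
  have hHi : Integrable H μ := hGi.comp_smul (inv_ne_zero hT0.ne')
  have hHint : ∫ x, H x ∂μ = T ^ n * ∫ x, G x ∂μ := by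
    have := Measure.integral_comp_inv_smul μ G T
    rw [hH]
    rw [this, abs_of_pos (by positivity), smul_eq_mul]
  set h : E → ℝ := (Metric.closedBall (0:E) (T * D)).indicator (fun _ => K' * R / T) with hh
  have hhi : Integrable h μ := by
    refine (integrable_indicator_iff Metric.isClosed_closedBall.measurableSet).mpr ?_
    exact integrableOn_const (hs := measure_closedBall_lt_top.ne)
  have hhint : ∫ x, h x ∂μ = K' * R * D ^ n * V * (T ^ n / T) := by
    rw [hh, integral_indicator Metric.isClosed_closedBall.measurableSet, setIntegral_const,
      measureReal_def, Measure.addHaar_closedBall' _ _ (by positivity), ENNReal.toReal_mul,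
      ENNReal.toReal_ofReal (by positivity), smul_eq_mul, hV, measureReal_def, mul_pow, ← hn]
    field_simp
  have hs1 := hfd.integral_eq_tsum'' H hHi
  have hs2 := hfd.integral_eq_tsum'' h hhi
  -- pointwise estimate
  have key : ∀ a : L, ∀ y ∈ P, |H (a : E) - H (a +ᵥ y)| ≤ h (a +ᵥ y) := by
    intro a y hy
    have e1 : (a +ᵥ y : E) = (a : E) + y := rfl
    rw [e1]
    have hyR := hR y hy
    by_cases hm : (a : E) + y ∈ Metric.closedBall (0:E) (T * D)
    · rw [hh, Set.indicator_of_mem hm]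
      refine (hG' _ _).trans ?_
      rw [← smul_sub, norm_smul, norm_inv, Real.norm_of_nonneg hT0.le]
      have : ‖(a : E) - (a + y)‖ ≤ R := by
        simpa using hyR
      rw [mul_div_assoc]
      apply mul_le_mul_of_nonneg_left _ hK'0
      rw [div_eq_inv_mul]
      exact mul_le_mul_of_nonneg_left this (by positivity)
    · rw [hh, Set.indicator_of_notMem hm]
      have hm' : T * D < ‖(a : E) + y‖ := by simpa using hm
      have h3 : ‖(a : E) + y‖ ≤ ‖(a : E)‖ + R := (norm_add_le _ _).trans (by linarith)
      have hTR : R ≤ T * R := le_mul_of_one_le_left hRpos.le hT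
      have h4 : T * R₁ < ‖(a : E)‖ := by rw [hD] at hm'; linarith
      have h5 : T * R₁ < ‖(a : E) + y‖ := by rw [hD] at hm'; linarith
      have aux : ∀ z : E, T * R₁ < ‖z‖ → H z = 0 := fun z hz => hsupp' _ (by
        rw [norm_smul, norm_inv, Real.norm_of_nonneg hT0.le, ← div_eq_inv_mul, lt_div_iff₀ hT0]
        linarith)
      rw [aux _ h4, aux _ h5]; simp
  have hvz : ∀ f : E → ℝ, Integrable f μ → ∀ a : L, IntegrableOn (fun y => f (a +ᵥ y)) P μ :=
    fun f hf a => (Integrable.comp_add_left hf (a : E)).integrableOn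
  have hterm : ∀ a : L, |μ.real P * H a - ∫ y in P, H (a +ᵥ y) ∂μ| ≤ ∫ y in P, h (a +ᵥ y) ∂μ := by
    intro a
    have e : μ.real P * H a = ∫ y in P, H (a : E) ∂μ := by rw [setIntegral_const, smul_eq_mul]
    have hci : Integrable (fun _ : E => H (a : E)) (μ.restrict P) :=
      integrableOn_const (hs := hPfin.ne)
    rw [e, ← integral_sub hci (hvz H hHi a)]
    refine (abs_integral_le_integral_abs).trans ?_
    refine setIntegral_mono_on ?_ (hvz h hhi a) hPm fun y hy => key a y hy
    exact (hci.sub (hvz H hHi a)).abs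
  -- finite supports
  have hfin := lattice_finite_supp L (T * D + R)
  have hbig : ∀ a : L, a ∉ hfin.toFinset → T * D + R < ‖(a : E)‖ := by
    intro a ha; simpa using ha
  have z1 : ∀ a : L, a ∉ hfin.toFinset → H a = 0 := by
    intro a ha
    have := hbig a ha
    refine hsupp' _ ?_
    rw [norm_smul, norm_inv, Real.norm_of_nonneg hT0.le, ← div_eq_inv_mul, lt_div_iff₀ hT0]
    rw [hD] at this
    nlinarith
  have z3 : ∀ a : L, a ∉ hfin.toFinset → ∫ y in P, h (a +ᵥ y) ∂μ = 0 := by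
    intro a ha
    have := hbig a ha
    refine setIntegral_eq_zero_of_forall_eq_zero fun y hy => ?_
    have e1 : (a +ᵥ y : E) = (a : E) + y := rfl
    rw [hh, Set.indicator_of_notMem]
    rw [e1]
    have h3 : ‖(a : E)‖ - ‖y‖ ≤ ‖(a : E) + y‖ := by
      have := norm_sub_norm_le (a : E) (-y)
      rwa [norm_neg, sub_neg_eq_add] at this
    have := hR y hy
    simp only [Metric.mem_closedBall, dist_zero_right, not_le]
    linarith
  have z2 : ∀ a : L, a ∉ hfin.toFinset → ∫ y in P, H (a +ᵥ y) ∂μ = 0 := by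
    intro a ha
    have := hterm a
    rw [z1 a ha, z3 a ha, mul_zero, zero_sub, abs_neg] at this
    exact abs_eq_zero.mp (le_antisymm this (abs_nonneg _))
  rw [tsum_eq_sum (s := hfin.toFinset) z2, hHint] at hs1
  rw [tsum_eq_sum (s := hfin.toFinset) z3, hhint] at hs2
  rw [tsum_eq_sum (s := hfin.toFinset) z1]
  have hfinal : |μ.real P * ∑ a ∈ hfin.toFinset, H a - T ^ n * ∫ x, G x ∂μ|
      ≤ K' * R * D ^ n * V * (T ^ n / T) := by
    rw [hs1, hs2, Finset.mul_sum, ← Finset.sum_sub_distrib]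
    exact (Finset.abs_sum_le_sum_abs _ _).trans (Finset.sum_le_sum fun a _ => hterm a)
  have e2 : ∑ a ∈ hfin.toFinset, H a - (∫ x, G x ∂μ) / μ.real P * T ^ n
      = (μ.real P * ∑ a ∈ hfin.toFinset, H a - T ^ n * ∫ x, G x ∂μ) / μ.real P := by
    field_simp
  rw [e2, abs_div, abs_of_pos hPpos, div_le_iff₀ hPpos]
  refine hfinal.trans (le_of_eq ?_)
  field_simp

end LatticeSum


section GFun
open scoped Classical
open NumberField NumberField.mixedEmbedding NumberField.InfinitePlace NumberField.Units
  NumberField.Units.dirichletUnitTheorem Module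

/-- the weight `y(1-y)₊` -/
noncomputable def gW (y : ℝ) : ℝ := y * max (1 - y) 0

lemma gW_nonneg {y : ℝ} (hy : 0 ≤ y) : 0 ≤ gW y := mul_nonneg hy (le_max_right _ _)

lemma gW_le {y : ℝ} (hy : 0 ≤ y) : gW y ≤ y := by
  unfold gW
  have : max (1 - y) 0 ≤ 1 := max_le (by linarith) (by norm_num)
  nlinarith

lemma gW_eq_zero {y : ℝ} (hy : 1 ≤ y) : gW y = 0 := by
  unfold gW
  rw [max_eq_right (by linarith), mul_zero]

lemma gW_lip {x y : ℝ} (hx : 0 ≤ x) (hy : 0 ≤ y) : |gW x - gW y| ≤ |x - y| := by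
  wlog hxy : x ≤ y generalizing x y
  · rw [abs_sub_comm, abs_sub_comm x]
    exact this hy hx (le_of_not_ge hxy)
  rw [abs_sub_comm x, abs_of_nonneg (sub_nonneg.mpr hxy)]
  unfold gW
  rcases le_total y 1 with h1 | h1
  · rw [max_eq_left (by linarith), max_eq_left (by linarith), abs_le]
    constructor <;> nlinarith
  · rw [max_eq_right (by linarith : 1 - y ≤ 0)]
    rcases le_total x 1 with h2 | h2
    · rw [max_eq_left (by linarith), abs_le]
      constructor <;> nlinarith
    · rw [max_eq_right (by linarith : 1 - x ≤ 0)]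
      simp; linarith

variable {K : Type*} [Field K] [NumberField K]

lemma normAtPlace_le_norm (w : InfinitePlace K) (x : mixedSpace K) : normAtPlace w x ≤ ‖x‖ := by
  rw [norm_eq_sup'_normAtPlace]
  exact Finset.le_sup' (fun w => normAtPlace w x) (Finset.mem_univ w)

lemma normAtPlace_sub_le (w : InfinitePlace K) (x y : mixedSpace K) :
    |normAtPlace w x - normAtPlace w y| ≤ ‖x - y‖ := by
  have h1 : normAtPlace w x ≤ normAtPlace w (x - y) + normAtPlace w y := by
    simpa using normAtPlace_add_le w (x - y) y
  have h2 : normAtPlace w y ≤ normAtPlace w (y - x) + normAtPlace w x := by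
    simpa using normAtPlace_add_le w (y - x) x
  have h3 := normAtPlace_le_norm w (x - y)
  have h4 := normAtPlace_le_norm w (y - x)
  rw [norm_sub_rev y x] at h4
  rw [abs_le]; constructor <;> linarith

lemma log_norm_eq (x : mixedSpace K) (hx : mixedEmbedding.norm x ≠ 0) :
    Real.log (mixedEmbedding.norm x) = ∑ w, (mult w : ℝ) * Real.log (normAtPlace w x) := by
  have := mixedEmbedding.norm_ne_zero_iff.mp hx
  rw [mixedEmbedding.norm_apply, Real.log_prod]
  · simp [Real.log_pow]
  · exact fun w _ => pow_ne_zero _ (this w)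

lemma sum_mult_real : ∑ w : InfinitePlace K, (mult w : ℝ) = finrank ℚ K := by
  rw [← sum_mult_eq (K := K)]; push_cast; rfl

lemma one_le_mult_real (w : InfinitePlace K) : (1 : ℝ) ≤ mult w := by
  exact_mod_cast Nat.one_le_iff_ne_zero.mpr mult_ne_zero

lemma mult_le_two_real (w : InfinitePlace K) : (mult w : ℝ) ≤ 2 := by
  unfold mult; split_ifs <;> norm_num

/-- If `logMap x` is bounded then the normalised logs are bounded. -/
lemma log_bound (x : mixedSpace K) (hx : mixedEmbedding.norm x ≠ 0) {A : ℝ}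
    (hA : ‖logMap x‖ ≤ A) (w : InfinitePlace K) :
    |Real.log (normAtPlace w x) - Real.log (mixedEmbedding.norm x) * (finrank ℚ K : ℝ)⁻¹|
      ≤ (Fintype.card (InfinitePlace K)) * A := by
  classical
  set n := (finrank ℚ K : ℝ) with hn
  have hn0 : n ≠ 0 := by
    have : 0 < finrank ℚ K := finrank_pos
    positivity
  set lg : InfinitePlace K → ℝ := fun w =>
    Real.log (normAtPlace w x) - Real.log (mixedEmbedding.norm x) * n⁻¹ with hlg
  have hA0 : 0 ≤ A := (norm_nonneg _).trans hA
  have h1 : ∀ w, w ≠ w₀ → |mult w * lg w| ≤ A := by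
    intro w hw
    have := (norm_le_pi_norm (logMap x) ⟨w, hw⟩).trans hA
    rwa [logMap_apply, Real.norm_eq_abs] at this
  have h2 : ∑ w, mult w * lg w = 0 := by
    simp only [hlg, mul_sub, Finset.sum_sub_distrib]
    rw [← Finset.sum_mul, sum_mult_real, ← log_norm_eq x hx]
    field_simp
    ring
  have hle : ∀ w, |lg w| ≤ |mult w * lg w| := by
    intro w
    rw [abs_mul, Nat.abs_cast]
    exact le_mul_of_one_le_left (abs_nonneg _) (one_le_mult_real w)
  have hcard : (1 : ℝ) ≤ Fintype.card (InfinitePlace K) := by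
    exact_mod_cast Fintype.card_pos
  change |lg w| ≤ _
  refine (hle w).trans ?_
  by_cases hw : w = w₀
  · subst hw
    rw [← Finset.add_sum_erase _ _ (Finset.mem_univ w₀)] at h2
    rw [eq_neg_of_add_eq_zero_left h2, abs_neg]
    refine (Finset.abs_sum_le_sum_abs _ _).trans ?_
    refine (Finset.sum_le_sum fun w hw => h1 w (Finset.ne_of_mem_erase hw)).trans ?_
    rw [Finset.sum_const, nsmul_eq_mul]
    apply mul_le_mul_of_nonneg_right _ hA0
    exact_mod_cast Finset.card_le_univ _
  · refine (h1 w hw).trans ?_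
    nlinarith

lemma norm_le_root (x : mixedSpace K) (hx : mixedEmbedding.norm x ≠ 0)
    (hx1 : mixedEmbedding.norm x ≤ 1) :
    mixedEmbedding.norm x ≤ Real.exp (Real.log (mixedEmbedding.norm x) * (finrank ℚ K : ℝ)⁻¹) := by
  have hpos : 0 < mixedEmbedding.norm x := lt_of_le_of_ne (mixedEmbedding.norm_nonneg x) hx.symm
  nth_rewrite 1 [← Real.exp_log hpos]
  apply Real.exp_le_exp.mpr
  have h1 : Real.log (mixedEmbedding.norm x) ≤ 0 := Real.log_nonpos hpos.le hx1
  have h2 : (1 : ℝ) ≤ finrank ℚ K := by exact_mod_cast (finrank_pos : 0 < finrank ℚ K)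
  have h3 : (finrank ℚ K : ℝ)⁻¹ ≤ 1 := inv_le_one_of_one_le₀ h2
  nlinarith

lemma abs_log_sub_le {a b c : ℝ} (hc : 0 < c) (ha : c ≤ a) (hb : c ≤ b) :
    |Real.log a - Real.log b| ≤ |a - b| / c := by
  wlog hab : b ≤ a generalizing a b
  · rw [abs_sub_comm, abs_sub_comm a]
    exact this hb ha (le_of_not_ge hab)
  have hb0 : 0 < b := by linarith
  have ha0 : 0 < a := by linarith
  rw [abs_of_nonneg (sub_nonneg.mpr (Real.log_le_log hb0 hab)), abs_of_nonneg (by linarith),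
    ← Real.log_div ha0.ne' hb0.ne']
  refine (Real.log_le_sub_one_of_pos (by positivity)).trans ?_
  have : a / b - 1 = (a - b) / b := by field_simp
  rw [this]
  exact div_le_div_of_nonneg_left (by linarith) hc hb

lemma abs_exp_sub_one_le {z n : ℝ} (hz : |z| ≤ n) : |Real.exp z - 1| ≤ Real.exp n * |z| := by
  have h0 : 0 ≤ n := (abs_nonneg _).trans hz
  have h1 : 1 ≤ Real.exp n := Real.one_le_exp h0
  rcases le_total 0 z with h | h
  · rw [abs_of_nonneg h] at *
    rw [abs_of_nonneg (by linarith [Real.one_le_exp h])]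
    have h2 := Real.add_one_le_exp (-z)
    have h3 : Real.exp z * Real.exp (-z) = 1 := by rw [← Real.exp_add]; simp
    have h4 : Real.exp z ≤ Real.exp n := Real.exp_le_exp.mpr hz
    have h5 := Real.exp_pos z
    nlinarith
  · rw [abs_of_nonpos h] at *
    have h2 := Real.add_one_le_exp z
    have h3 : Real.exp z ≤ 1 := Real.exp_le_one_iff.mpr h
    rw [abs_of_nonpos (by linarith)]
    nlinarith

/-- core function -/
noncomputable def coreF (Φ : logSpace K → ℝ) (x : mixedSpace K) : ℝ :=
  Φ (logMap x) * gW (mixedEmbedding.norm x)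

section core
variable (Φ : logSpace K → ℝ) (A A' : ℝ) (hA : 0 ≤ A) (hΦ1 : ∀ v, |Φ v| ≤ 1)
  (hΦ : ∀ u v, |Φ u - Φ v| ≤ A * ‖u - v‖) (hs : ∀ v, A' < ‖v‖ → Φ v = 0)
include hΦ1 hs

lemma coreF_abs_le (x : mixedSpace K) : |coreF Φ x| ≤ mixedEmbedding.norm x := by
  have h0 := mixedEmbedding.norm_nonneg x
  rw [coreF, abs_mul, abs_of_nonneg (gW_nonneg h0)]
  have := gW_le h0
  have h3 := gW_nonneg h0
  nlinarith [hΦ1 (logMap x), abs_nonneg (Φ (logMap x))]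

lemma coreF_ne (x : mixedSpace K) (hx : coreF Φ x ≠ 0) :
    mixedEmbedding.norm x ≠ 0 ∧ mixedEmbedding.norm x ≤ 1 ∧ ‖logMap x‖ ≤ A' := by
  refine ⟨fun h => hx ?_, ?_, ?_⟩
  · rw [coreF, h]; simp [gW]
  · by_contra h
    exact hx (by rw [coreF, gW_eq_zero (by linarith), mul_zero])
  · by_contra h
    exact hx (by rw [coreF, hs _ (by linarith), zero_mul])

lemma coreF_supp : ∃ R : ℝ, ∀ x : mixedSpace K, R < ‖x‖ → coreF Φ x = 0 := by
  refine ⟨Real.exp (Fintype.card (InfinitePlace K) * A'), fun x hx => ?_⟩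
  by_contra h
  obtain ⟨h1, h2, h3⟩ := coreF_ne Φ A' hΦ1 hs x h
  rw [norm_eq_sup'_normAtPlace, Finset.lt_sup'_iff] at hx
  obtain ⟨w, -, hw⟩ := hx
  have hb := log_bound x h1 h3 w
  have hpos : 0 < mixedEmbedding.norm x := lt_of_le_of_ne (mixedEmbedding.norm_nonneg x) h1.symm
  have hl : Real.log (mixedEmbedding.norm x) * (finrank ℚ K : ℝ)⁻¹ ≤ 0 :=
    mul_nonpos_of_nonpos_of_nonneg (Real.log_nonpos hpos.le h2) (by positivity)
  have hw0 : 0 < normAtPlace w x := (Real.exp_pos _).trans hw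
  have := (Real.lt_log_iff_exp_lt hw0).mpr hw
  rw [abs_le] at hb
  linarith [hb.2]

include hA hΦ

lemma coreF_lip : ∃ C : ℝ, ∀ x y : mixedSpace K, |coreF Φ x - coreF Φ y| ≤ C * ‖x - y‖ := by
  set n := (finrank ℚ K : ℝ) with hn
  have hn1 : 1 ≤ n := by rw [hn]; exact_mod_cast (finrank_pos : 0 < finrank ℚ K)
  set B := Fintype.card (InfinitePlace K) * A' with hB
  set c := Real.exp (-B) with hc
  have hc0 : 0 < c := Real.exp_pos _
  set C := 4 / c + Real.exp n * (2 * n / c) + 8 * A / c with hC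
  have hC0 : 0 ≤ C := by positivity
  refine ⟨C, fun x y => ?_⟩
  -- reduce to good pair
  have main : ∀ x y : mixedSpace K, coreF Φ y ≠ 0 →
      (coreF Φ x = 0 ∨ mixedEmbedding.norm x ≤ mixedEmbedding.norm y) →
      |coreF Φ x - coreF Φ y| ≤ C * ‖x - y‖ := by
    intro x y hy hxy
    obtain ⟨h1, h2, h3⟩ := coreF_ne Φ A' hΦ1 hs y hy
    have hpos : 0 < mixedEmbedding.norm y := lt_of_le_of_ne (mixedEmbedding.norm_nonneg y) h1.symm
    set t := Real.exp (Real.log (mixedEmbedding.norm y) * n⁻¹) with ht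
    have ht0 : 0 < t := Real.exp_pos _
    have hNt : mixedEmbedding.norm y ≤ t := norm_le_root y h1 h2
    set δ := ‖x - y‖ with hδ
    have hδ0 : 0 ≤ δ := norm_nonneg _
    have hy' := mixedEmbedding.norm_ne_zero_iff.mp h1
    have hay : ∀ w, c * t ≤ normAtPlace w y := by
      intro w
      have hb := log_bound y h1 h3 w
      have hw0 : 0 < normAtPlace w y := lt_of_le_of_ne (normAtPlace_nonneg _ _) (hy' w).symm
      rw [hc, ht, ← Real.exp_add, ← Real.le_log_iff_exp_le hw0]
      rw [abs_le] at hb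
      linarith [hb.1]
    rcases le_or_gt (c * t / 2) δ with hd | hd
    · have hx1 : |coreF Φ x| ≤ t := by
        rcases hxy with h | h
        · rw [h, abs_zero]; exact ht0.le
        · exact (coreF_abs_le Φ A' hΦ1 hs x).trans (h.trans hNt)
      have hy1 : |coreF Φ y| ≤ t := (coreF_abs_le Φ A' hΦ1 hs y).trans hNt
      have h4 : |coreF Φ x - coreF Φ y| ≤ 2 * t := (abs_sub _ _).trans (by linarith)
      have h5 : 2 * t ≤ 4 / c * δ := by
        rw [div_mul_eq_mul_div, le_div_iff₀ hc0]; nlinarith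
      refine h4.trans (h5.trans ?_)
      apply mul_le_mul_of_nonneg_right _ hδ0
      rw [hC]
      have : 0 ≤ Real.exp n * (2 * n / c) := by positivity
      have : 0 ≤ 8 * A / c := by positivity
      linarith
    · have hct : 0 < c * t / 2 := by positivity
      have hax : ∀ w, c * t / 2 ≤ normAtPlace w x := by
        intro w
        have h6 := hay w
        have h7 := normAtPlace_sub_le w x y
        rw [abs_le] at h7
        linarith [h7.1]
      set ε := δ / (c * t / 2) with hε
      have hε1 : ε ≤ 1 := by rw [hε, div_le_one hct]; exact hd.le
      have hε0 : 0 ≤ ε := by positivity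
      have hεt : ε * t = 2 * δ / c := by rw [hε]; field_simp
      have hlog : ∀ w, |Real.log (normAtPlace w x) - Real.log (normAtPlace w y)| ≤ ε := by
        intro w
        refine (abs_log_sub_le hct (hax w) (by linarith [hay w])).trans ?_
        exact div_le_div_of_nonneg_right (normAtPlace_sub_le w x y) hct.le
      have hNx : mixedEmbedding.norm x ≠ 0 :=
        mixedEmbedding.norm_ne_zero_iff.mpr fun w => (hct.trans_le (hax w)).ne'
      have hNxpos : 0 < mixedEmbedding.norm x :=
        lt_of_le_of_ne (mixedEmbedding.norm_nonneg x) hNx.symm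
      set z := Real.log (mixedEmbedding.norm x) - Real.log (mixedEmbedding.norm y) with hz
      have hzle : |z| ≤ n * ε := by
        rw [hz, log_norm_eq x hNx, log_norm_eq y h1, ← Finset.sum_sub_distrib]
        refine (Finset.abs_sum_le_sum_abs _ _).trans ?_
        rw [hn, ← sum_mult_real, Finset.sum_mul]
        refine Finset.sum_le_sum fun w _ => ?_
        rw [← mul_sub, abs_mul, Nat.abs_cast]
        exact mul_le_mul_of_nonneg_left (hlog w) (by positivity)
      have hzn : |z| ≤ n := hzle.trans (by nlinarith)
      have hΦd : |Φ (logMap x) - Φ (logMap y)| ≤ A * (4 * ε) := by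
        refine (hΦ _ _).trans (mul_le_mul_of_nonneg_left ?_ hA)
        rw [pi_norm_le_iff_of_nonneg (by positivity)]
        intro w
        rw [Pi.sub_apply, logMap_apply, logMap_apply, Real.norm_eq_abs, ← mul_sub, abs_mul,
          Nat.abs_cast]
        have e : ∀ a b p q r : ℝ, a - p * r - (b - q * r) = (a - b) - (p - q) * r := by
          intros; ring
        rw [e, ← hz]
        have h8 : |z * n⁻¹| ≤ ε := by
          rw [abs_mul, abs_of_nonneg (by positivity : 0 ≤ n⁻¹), ← div_eq_mul_inv,
            div_le_iff₀ (by linarith)]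
          linarith
        have h9 := (abs_sub (Real.log (normAtPlace w.1 x) - Real.log (normAtPlace w.1 y))
          (z * n⁻¹)).trans (add_le_add (hlog w.1) h8)
        have := mult_le_two_real w.1
        have := one_le_mult_real w.1
        calc _ ≤ (2:ℝ) * (ε + ε) := mul_le_mul (mult_le_two_real w.1) h9 (abs_nonneg _) (by norm_num)
          _ = 4 * ε := by ring
      have hNd : |mixedEmbedding.norm x - mixedEmbedding.norm y| ≤ Real.exp n * (2 * n / c) * δ := by
        have e1 : mixedEmbedding.norm x = mixedEmbedding.norm y * Real.exp z := by
          rw [hz, Real.exp_sub, Real.exp_log hNxpos, Real.exp_log hpos]; field_simp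
        rw [e1, ← mul_sub_one, abs_mul, abs_of_pos hpos]
        calc _ ≤ t * (Real.exp n * (n * ε)) := by
              refine mul_le_mul hNt ((abs_exp_sub_one_le hzn).trans ?_) (abs_nonneg _) ht0.le
              exact mul_le_mul_of_nonneg_left hzle (Real.exp_pos _).le
          _ = Real.exp n * n * (ε * t) := by ring
          _ = _ := by rw [hεt]; ring
      have hg := gW_lip hNxpos.le hpos.le
      have e2 : coreF Φ x - coreF Φ y =
          Φ (logMap x) * (gW (mixedEmbedding.norm x) - gW (mixedEmbedding.norm y))
          + (Φ (logMap x) - Φ (logMap y)) * gW (mixedEmbedding.norm y) := by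
        unfold coreF; ring
      rw [e2]
      refine (abs_add_le _ _).trans ?_
      rw [abs_mul, abs_mul, abs_of_nonneg (gW_nonneg hpos.le)]
      have p1 : |Φ (logMap x)| * |gW (mixedEmbedding.norm x) - gW (mixedEmbedding.norm y)|
          ≤ Real.exp n * (2 * n / c) * δ := by
        calc _ ≤ 1 * (Real.exp n * (2 * n / c) * δ) :=
              mul_le_mul (hΦ1 _) (hg.trans hNd) (abs_nonneg _) (by norm_num)
          _ = _ := one_mul _
      have p2 : |Φ (logMap x) - Φ (logMap y)| * gW (mixedEmbedding.norm y) ≤ 8 * A / c * δ := by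
        calc _ ≤ A * (4 * ε) * t := mul_le_mul hΦd ((gW_le hpos.le).trans hNt)
              (gW_nonneg hpos.le) (by positivity)
          _ = 4 * A * (ε * t) := by ring
          _ = _ := by rw [hεt]; ring
      have p3 : 0 ≤ 4 / c * δ := by positivity
      rw [hC]
      linarith
  by_cases hx : coreF Φ x = 0
  · by_cases hy : coreF Φ y = 0
    · rw [hx, hy]; simp; positivity
    · exact main x y hy (Or.inl hx)
  · by_cases hy : coreF Φ y = 0
    · rw [abs_sub_comm, norm_sub_rev]; exact main y x hx (Or.inl hy)
    · rcases le_total (mixedEmbedding.norm x) (mixedEmbedding.norm y) with h | h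
      · exact main x y hy (Or.inr h)
      · rw [abs_sub_comm, norm_sub_rev]; exact main y x hx (Or.inr h)

end core

end GFun


section GPhi
open scoped Classical
open NumberField NumberField.mixedEmbedding NumberField.InfinitePlace NumberField.Units
  NumberField.Units.dirichletUnitTheorem Module

/-- hat function -/
noncomputable def hatF (y : ℝ) : ℝ := max (1 - |y|) 0

lemma hatF_nonneg (y : ℝ) : 0 ≤ hatF y := le_max_right _ _
lemma hatF_le_one (y : ℝ) : hatF y ≤ 1 := max_le (by linarith [abs_nonneg y]) zero_le_one
lemma hatF_eq_zero {y : ℝ} (hy : 1 ≤ |y|) : hatF y = 0 := max_eq_right (by linarith)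
lemma hatF_lip (x y : ℝ) : |hatF x - hatF y| ≤ |x - y| := by
  unfold hatF
  refine (abs_max_sub_max_le_abs _ _ _).trans ?_
  have := abs_abs_sub_abs_le y x
  rw [abs_sub_comm y x] at this
  convert! this using 2
  ring

lemma hatF_hasSum_pi (r : ℕ) (y : Fin r → ℝ) :
    HasSum (fun e : Fin r → ℤ => ∏ i, hatF (e i + y i)) 1 := by
  have hsum : ∀ z : ℝ, ∑ m ∈ ({⌊-z⌋, ⌊-z⌋ + 1} : Finset ℤ), hatF (m + z) = 1 := by
    intro z
    rw [Finset.sum_pair (by omega)]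
    have h1 := Int.floor_le (-z)
    have h2 := Int.lt_floor_add_one (-z)
    unfold hatF
    push_cast
    rw [abs_of_nonpos (by linarith), abs_of_nonneg (by linarith), max_eq_left (by linarith),
      max_eq_left (by linarith)]
    ring
  have hzero : ∀ (z : ℝ) (m : ℤ), m ∉ ({⌊-z⌋, ⌊-z⌋ + 1} : Finset ℤ) → hatF (m + z) = 0 := by
    intro z m hm
    apply hatF_eq_zero
    simp only [Finset.mem_insert, Finset.mem_singleton, not_or] at hm
    have h1 := Int.floor_le (-z)
    have h2 := Int.lt_floor_add_one (-z)
    rcases lt_or_gt_of_ne hm.1 with h | h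
    · have : (m : ℝ) + 1 ≤ ⌊-z⌋ := by exact_mod_cast h
      rw [abs_of_nonpos (by linarith)]; linarith
    · have h' : ⌊-z⌋ + 2 ≤ m := by omega
      have : ((⌊-z⌋ : ℤ) : ℝ) + 2 ≤ m := by exact_mod_cast h'
      rw [abs_of_nonneg (by linarith)]; linarith
  have h := hasSum_sum_of_ne_finset_zero (L := SummationFilter.unconditional _) (f := fun e : Fin r → ℤ => ∏ i, hatF (e i + y i))
    (s := Fintype.piFinset fun i => ({⌊-(y i)⌋, ⌊-(y i)⌋ + 1} : Finset ℤ)) (by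
      intro e he
      rw [Fintype.mem_piFinset] at he
      push Not at he
      obtain ⟨i, hi⟩ := he
      exact Finset.prod_eq_zero (Finset.mem_univ i) (hzero _ _ hi))
  rw [← Finset.prod_univ_sum (fun i => ({⌊-(y i)⌋, ⌊-(y i)⌋ + 1} : Finset ℤ))
    (fun i m => hatF ((m : ℝ) + y i))] at h
  simpa [hsum] using h

variable (K : Type*) [Field K] [NumberField K]

/-- real basis of log space from fundamental units -/
noncomputable def logB : Basis (Fin (rank K)) ℝ (logSpace K) :=
  (basisUnitLattice K).ofZLatticeBasis ℝ _

/-- partition of unity -/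
noncomputable def PhiK (v : logSpace K) : ℝ := ∏ i, hatF ((logB K).repr v i)

lemma abs_prod_sub_prod_le {ι : Type*} (s : Finset ι) (f g : ι → ℝ) (hf : ∀ i, 0 ≤ f i ∧ f i ≤ 1)
    (hg : ∀ i, 0 ≤ g i ∧ g i ≤ 1) :
    |∏ i ∈ s, f i - ∏ i ∈ s, g i| ≤ ∑ i ∈ s, |f i - g i| := by
  induction s using Finset.induction_on with
  | empty => simp
  | insert a s ha ih =>
    rw [Finset.prod_insert ha, Finset.prod_insert ha, Finset.sum_insert ha]
    have e : f a * ∏ i ∈ s, f i - g a * ∏ i ∈ s, g i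
        = (f a - g a) * ∏ i ∈ s, f i + g a * (∏ i ∈ s, f i - ∏ i ∈ s, g i) := by ring
    rw [e]
    refine (abs_add_le _ _).trans (add_le_add ?_ ?_)
    · rw [abs_mul, abs_of_nonneg (Finset.prod_nonneg fun i _ => (hf i).1)]
      exact mul_le_of_le_one_right (abs_nonneg _)
        (Finset.prod_le_one (fun i _ => (hf i).1) fun i _ => (hf i).2)
    · rw [abs_mul, abs_of_nonneg (hg a).1]
      exact (mul_le_of_le_one_left (abs_nonneg _) (hg a).2).trans ih

lemma PhiK_nonneg (v : logSpace K) : 0 ≤ PhiK K v := Finset.prod_nonneg fun _ _ => hatF_nonneg _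

lemma PhiK_abs (v : logSpace K) : |PhiK K v| ≤ 1 := by
  rw [abs_of_nonneg (PhiK_nonneg K v)]
  exact Finset.prod_le_one (fun _ _ => hatF_nonneg _) fun _ _ => hatF_le_one _

lemma PhiK_lip : ∃ A, 0 ≤ A ∧ ∀ u v, |PhiK K u - PhiK K v| ≤ A * ‖u - v‖ := by
  let ρ : Fin (rank K) → (logSpace K →L[ℝ] ℝ) := fun i =>
    LinearMap.toContinuousLinearMap ((logB K).coord i)
  refine ⟨∑ i, ‖ρ i‖, Finset.sum_nonneg fun _ _ => norm_nonneg _, fun u v => ?_⟩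
  unfold PhiK
  refine (abs_prod_sub_prod_le _ _ _ (fun i => ⟨hatF_nonneg _, hatF_le_one _⟩)
    (fun i => ⟨hatF_nonneg _, hatF_le_one _⟩)).trans ?_
  rw [Finset.sum_mul]
  refine Finset.sum_le_sum fun i _ => (hatF_lip _ _).trans ?_
  have := (ρ i).le_opNorm (u - v)
  rw [Real.norm_eq_abs] at this
  convert! this using 2
  rw [map_sub]; rfl

lemma PhiK_supp : ∃ A, ∀ v, A < ‖v‖ → PhiK K v = 0 := by
  refine ⟨∑ i, ‖logB K i‖, fun v hv => ?_⟩
  by_contra h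
  have h1 : ∀ i, |(logB K).repr v i| ≤ 1 := by
    intro i
    by_contra hi
    exact h (Finset.prod_eq_zero (Finset.mem_univ i) (hatF_eq_zero (by linarith)))
  refine absurd hv (not_lt.mpr ?_)
  conv_lhs => rw [← (logB K).sum_repr v]
  refine (norm_sum_le _ _).trans (Finset.sum_le_sum fun i _ => ?_)
  rw [_root_.norm_smul, Real.norm_eq_abs]
  exact mul_le_of_le_one_left (norm_nonneg _) (h1 i)

/-- parametrization of units -/
noncomputable def unitEquiv : torsion K × (Fin (rank K) → ℤ) ≃ (𝓞 K)ˣ :=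
  Equiv.ofBijective (fun ζe => ζe.1 * ∏ i, (fundSystem K i) ^ (ζe.2 i)) (by
    rw [Function.bijective_iff_existsUnique]
    intro u
    obtain ⟨p, hp, hu⟩ := exist_unique_eq_mul_prod K u
    exact ⟨p, hp.symm, fun q hq => hu q hq.symm⟩)

lemma PhiK_unit (ζ : torsion K) (e : Fin (rank K) → ℤ) (x : mixedSpace K)
    (hx : mixedEmbedding.norm x ≠ 0) :
    PhiK K (logMap ((unitEquiv K (ζ, e)) • x)) =
      ∏ i, hatF (e i + (logB K).repr (logMap x) i) := by
  rw [logMap_unit_smul _ hx]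
  have h : logEmbedding K (Additive.ofMul (unitEquiv K (ζ, e))) = ∑ i, (e i : ℝ) • logB K i := by
    change logEmbedding K (Additive.ofMul ((ζ : (𝓞 K)ˣ) * ∏ i, (fundSystem K i) ^ (e i))) = _
    rw [ofMul_mul, map_add, logEmbedding_eq_zero_iff.mpr ζ.2, zero_add, ofMul_prod, map_sum]
    refine Finset.sum_congr rfl fun i _ => ?_
    rw [ofMul_zpow, map_zsmul, logEmbedding_fundSystem, logB, Basis.ofZLatticeBasis_apply,
      Int.cast_smul_eq_zsmul]
  rw [h, PhiK]
  refine Finset.prod_congr rfl fun i _ => ?_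
  rw [map_add, Finsupp.add_apply, (logB K).repr_sum_self]

lemma hasSum_prod_card {A B : Type*} [Finite A] (f : B → ℝ) (hf : HasSum f 1) (h0 : ∀ b, 0 ≤ f b) :
    HasSum (fun p : A × B => f p.2) (Nat.card A) := by
  cases nonempty_fintype A
  have hc : HasSum (fun _ : A => (1 : ℝ)) (Nat.card A) := by
    have := hasSum_fintype (fun _ : A => (1 : ℝ))
    simpa [Nat.card_eq_fintype_card] using this
  have hsm : Summable fun p : A × B => (fun _ : A => (1 : ℝ)) p.1 * f p.2 :=
    Summable.mul_of_nonneg hc.summable hf.summable (fun _ => zero_le_one) h0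
  simpa using hc.mul hf hsm

lemma PhiK_hasSum (x : mixedSpace K) (hx : mixedEmbedding.norm x ≠ 0) :
    HasSum (fun u : (𝓞 K)ˣ => PhiK K (logMap (u • x))) (torsionOrder K) := by
  rw [← (unitEquiv K).hasSum_iff]
  have h1 := hatF_hasSum_pi (rank K) (fun i => (logB K).repr (logMap x) i)
  have h2 := hasSum_prod_card (A := torsion K) _ h1
    (fun e => Finset.prod_nonneg fun _ _ => hatF_nonneg _)
  have e : ((fun u : (𝓞 K)ˣ => PhiK K (logMap (u • x))) ∘ (unitEquiv K)) =
      fun p : torsion K × (Fin (rank K) → ℤ) =>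
        ∏ i, hatF (p.2 i + (logB K).repr (logMap x) i) := by
    funext p
    exact PhiK_unit K p.1 p.2 x hx
  rw [e]
  exact h2

/-- the Lipschitz test function. -/
noncomputable def GK (x : mixedSpace K) : ℝ := coreF (PhiK K) x

lemma GK_lip : ∃ C : ℝ, ∀ x y, |GK K x - GK K y| ≤ C * ‖x - y‖ := by
  obtain ⟨A, hA, h⟩ := PhiK_lip K
  obtain ⟨A', h'⟩ := PhiK_supp K
  exact coreF_lip (PhiK K) A A' hA (PhiK_abs K) h h'

lemma GK_supp : ∃ R : ℝ, ∀ x, R < ‖x‖ → GK K x = 0 := by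
  obtain ⟨A', h'⟩ := PhiK_supp K
  exact coreF_supp (PhiK K) A' (PhiK_abs K) h'

lemma GK_lattice (I : (FractionalIdeal (nonZeroDivisors (𝓞 K)) K)ˣ) : ∃ c C : ℝ, ∀ T : ℝ, 1 ≤ T →
    |∑' a : idealLattice K I, GK K (T⁻¹ • (a : mixedSpace K)) - c * T ^ finrank ℚ K|
      ≤ C * (T ^ finrank ℚ K / T) := by
  obtain ⟨C, hC⟩ := GK_lip K
  obtain ⟨R, hR⟩ := GK_supp K
  have := lattice_sum (idealLattice K I) MeasureTheory.volume (GK K) C R hC hR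
  rwa [mixedEmbedding.finrank] at this

lemma GK_finite_supp (I : (FractionalIdeal (nonZeroDivisors (𝓞 K)) K)ˣ) {T : ℝ} (hT : 0 < T) :
    Summable fun a : idealLattice K I => GK K (T⁻¹ • (a : mixedSpace K)) := by
  obtain ⟨R, hR⟩ := GK_supp K
  have hfin := lattice_finite_supp (idealLattice K I) (T * R)
  refine summable_of_ne_finset_zero (s := hfin.toFinset) fun a ha => hR _ ?_
  have : T * R < ‖(a : mixedSpace K)‖ := by simpa using ha
  rw [_root_.norm_smul, norm_inv, Real.norm_of_nonneg hT.le, ← div_eq_inv_mul, lt_div_iff₀ hT]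
  linarith

lemma GK_hasSum_units (x : mixedSpace K) (hx : mixedEmbedding.norm x ≠ 0) {T : ℝ} (hT : 0 < T) :
    HasSum (fun u : (𝓞 K)ˣ => GK K (T⁻¹ • (u • x)))
      (torsionOrder K * gW (mixedEmbedding.norm x / T ^ finrank ℚ K)) := by
  have h := (PhiK_hasSum K x hx).mul_right (gW (mixedEmbedding.norm x / T ^ finrank ℚ K))
  convert! h using 1
  ext u
  have hu : mixedEmbedding.norm (u • x) ≠ 0 := by rwa [mixedEmbedding.norm_unit_smul]
  rw [GK, coreF, logMap_real_smul hu (inv_ne_zero hT.ne'), mixedEmbedding.norm_smul,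
    mixedEmbedding.norm_unit_smul, abs_of_pos (inv_pos.mpr hT), inv_pow, ← div_eq_inv_mul]

end GPhi


section IdealSum
open scoped Classical nonZeroDivisors
open NumberField NumberField.mixedEmbedding NumberField.InfinitePlace NumberField.Units
  NumberField.Units.dirichletUnitTheorem Module

variable (K : Type*) [Field K] [NumberField K]

lemma exists_gen {C : ClassGroup (𝓞 K)} {J : (Ideal (𝓞 K))⁰} (hJ : ClassGroup.mk0 J = C⁻¹)
    (I : {I : (Ideal (𝓞 K))⁰ // ClassGroup.mk0 I = C}) :
    ∃ a : 𝓞 K, Ideal.span {a} = (I.1 : Ideal (𝓞 K)) * J := by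
  have h : ClassGroup.mk0 (I.1 * J) = 1 := by rw [map_mul, I.2, hJ, mul_inv_cancel]
  have h2 := (ClassGroup.mk0_eq_one_iff (I.1 * J).2).mp h
  obtain ⟨a, ha⟩ := h2
  exact ⟨a, by rw [Ideal.span, ← ha]; rfl⟩

/-- chosen generator of `I * J` -/
noncomputable def genIJ {C : ClassGroup (𝓞 K)} {J : (Ideal (𝓞 K))⁰} (hJ : ClassGroup.mk0 J = C⁻¹)
    (I : {I : (Ideal (𝓞 K))⁰ // ClassGroup.mk0 I = C}) : 𝓞 K := (exists_gen K hJ I).choose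

variable {C : ClassGroup (𝓞 K)} {J : (Ideal (𝓞 K))⁰} (hJ : ClassGroup.mk0 J = C⁻¹)

lemma genIJ_span (I : {I : (Ideal (𝓞 K))⁰ // ClassGroup.mk0 I = C}) :
    Ideal.span {genIJ K hJ I} = (I.1 : Ideal (𝓞 K)) * J := (exists_gen K hJ I).choose_spec

lemma mem_of_span_eq_mul {R : Type*} [CommRing R] {a : R} {I J : Ideal R}
    (h : Ideal.span {a} = I * J) : a ∈ J := by
  have h2 : Ideal.span {a} ≤ J := by rw [h]; first | exact Ideal.mul_le_left (I := I) (J := J) | exact Ideal.mul_le_right (I := I) (J := J)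
  exact h2 (Ideal.mem_span_singleton_self a)

lemma genIJ_mem (I : {I : (Ideal (𝓞 K))⁰ // ClassGroup.mk0 I = C}) :
    genIJ K hJ I ∈ (J : Ideal (𝓞 K)) := by
  exact mem_of_span_eq_mul (genIJ_span K hJ I)

lemma genIJ_ne (I : {I : (Ideal (𝓞 K))⁰ // ClassGroup.mk0 I = C}) : genIJ K hJ I ≠ 0 := by
  intro h
  have h1 := genIJ_span K hJ I
  rw [h] at h1
  have h2 : ((I.1 * J : (Ideal (𝓞 K))⁰) : Ideal (𝓞 K)) = 0 := by
    rw [Submonoid.coe_mul, ← h1]; simp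
  exact nonZeroDivisors.coe_ne_zero _ h2

lemma genIJ_norm (I : {I : (Ideal (𝓞 K))⁰ // ClassGroup.mk0 I = C}) :
    mixedEmbedding.norm (mixedEmbedding K (genIJ K hJ I : K)) =
      Ideal.absNorm (I.1 : Ideal (𝓞 K)) * Ideal.absNorm (J : Ideal (𝓞 K)) := by
  rw [norm_eq_norm, ← Nat.cast_mul, ← map_mul, ← genIJ_span K hJ I, Ideal.absNorm_span_singleton,
    ← Algebra.coe_norm_int]
  rw [Nat.cast_natAbs]
  push_cast
  rfl

/-- parametrization of nonzero lattice points -/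
noncomputable def latPt (p : {I : (Ideal (𝓞 K))⁰ // ClassGroup.mk0 I = C} × (𝓞 K)ˣ) :
    idealLattice K (FractionalIdeal.mk0 K J) :=
  ⟨p.2 • mixedEmbedding K (genIJ K hJ p.1 : K), by
    rw [mem_idealLattice]
    refine ⟨((p.2 : 𝓞 K) * genIJ K hJ p.1 : 𝓞 K), ?_, ?_⟩
    · have := Ideal.mul_mem_left (J : Ideal (𝓞 K)) (p.2 : 𝓞 K) (genIJ_mem K hJ p.1)
      rw [FractionalIdeal.coe_mk0]
      exact (FractionalIdeal.mem_coeIdeal _).mpr ⟨_, this, rfl⟩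
    · rw [unitSMul_smul, ← map_mul]; rfl⟩

lemma latPt_coe (p : {I : (Ideal (𝓞 K))⁰ // ClassGroup.mk0 I = C} × (𝓞 K)ˣ) :
    (latPt K hJ p : mixedSpace K) = p.2 • mixedEmbedding K (genIJ K hJ p.1 : K) := rfl

lemma latPt_coe' (p : {I : (Ideal (𝓞 K))⁰ // ClassGroup.mk0 I = C} × (𝓞 K)ˣ) :
    (latPt K hJ p : mixedSpace K) = mixedEmbedding K (((p.2 : 𝓞 K) * genIJ K hJ p.1 : 𝓞 K) : K) := by
  rw [latPt_coe, unitSMul_smul, ← map_mul]; rfl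

lemma span_unit_mul (u : (𝓞 K)ˣ) (a : 𝓞 K) : Ideal.span {(u : 𝓞 K) * a} = Ideal.span {a} :=
  Ideal.span_singleton_mul_left_unit u.isUnit a

lemma latPt_inj : Function.Injective (latPt K hJ) := by
  rintro ⟨I, u⟩ ⟨I', u'⟩ h
  have h1 := congrArg (fun z : idealLattice K (FractionalIdeal.mk0 K J) => (z : mixedSpace K)) h
  simp only [latPt_coe'] at h1
  have h2 := RingOfIntegers.coe_injective (mixedEmbedding_injective K h1)
  have h3 := congrArg (fun a => Ideal.span ({a} : Set (𝓞 K))) h2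
  simp only [span_unit_mul, genIJ_span] at h3
  have h4 : I = I' := by
    apply Subtype.ext
    apply Subtype.ext
    exact mul_right_cancel₀ (nonZeroDivisors.coe_ne_zero J) h3
  subst h4
  congr 1
  apply Units.ext
  exact mul_right_cancel₀ (genIJ_ne K hJ I) h2

lemma latPt_surj (a : idealLattice K (FractionalIdeal.mk0 K J)) (ha : (a : mixedSpace K) ≠ 0) :
    a ∈ Set.range (latPt K hJ) := by
  obtain ⟨y, hy, hya⟩ := (mem_idealLattice K _).mp a.2
  rw [FractionalIdeal.coe_mk0] at hy
  obtain ⟨b, hb, rfl⟩ := (FractionalIdeal.mem_coeIdeal _).mp hy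
  have hb0 : b ≠ 0 := by
    rintro rfl
    exact ha (by rw [← hya]; simp)
  have hdvd : (J : Ideal (𝓞 K)) ∣ Ideal.span {b} := by
    rw [Ideal.dvd_iff_le]
    exact (Ideal.span_singleton_le_iff_mem _).mpr hb
  obtain ⟨I, hI⟩ := hdvd
  have hI0 : I ≠ 0 := by
    rintro rfl
    rw [mul_zero] at hI
    exact hb0 (Ideal.span_singleton_eq_bot.mp hI)
  let I₀ : (Ideal (𝓞 K))⁰ := ⟨I, mem_nonZeroDivisors_of_ne_zero hI0⟩
  have hmk : ClassGroup.mk0 I₀ = C := by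
    have h1 : ClassGroup.mk0 (J * I₀) = 1 := by
      refine (ClassGroup.mk0_eq_one_iff (J * I₀).2).mpr ?_
      have : ((J * I₀ : (Ideal (𝓞 K))⁰) : Ideal (𝓞 K)) = Ideal.span {b} := hI.symm
      rw [this]
      exact ⟨b, rfl⟩
    rw [map_mul, hJ, inv_mul_eq_one] at h1
    exact h1.symm
  have hs : Ideal.span {genIJ K hJ ⟨I₀, hmk⟩} = Ideal.span {b} := by
    rw [genIJ_span, hI, mul_comm]
  rw [Ideal.span_singleton_eq_span_singleton] at hs
  obtain ⟨u, hu⟩ := hs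
  refine ⟨(⟨I₀, hmk⟩, u), Subtype.ext ?_⟩
  rw [latPt_coe', ← hya, mul_comm, hu]

include hJ in
lemma class_hasSum {T : ℝ} (hT : 0 < T) :
    HasSum (fun I : {I : (Ideal (𝓞 K))⁰ // ClassGroup.mk0 I = C} =>
      torsionOrder K * gW (Ideal.absNorm (I.1 : Ideal (𝓞 K)) * Ideal.absNorm (J : Ideal (𝓞 K))
        / T ^ finrank ℚ K))
      (∑' a : idealLattice K (FractionalIdeal.mk0 K J), GK K (T⁻¹ • (a : mixedSpace K))) := by
  have h0 := GK_finite_supp K (FractionalIdeal.mk0 K J) hT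
  have hz : GK K 0 = 0 := by simp [GK, coreF, gW]
  have hsupp : ∀ a : idealLattice K (FractionalIdeal.mk0 K J), a ∉ Set.range (latPt K hJ) →
      GK K (T⁻¹ • (a : mixedSpace K)) = 0 := by
    intro a ha
    by_cases h : (a : mixedSpace K) = 0
    · rw [h, smul_zero, hz]
    · exact absurd (latPt_surj K hJ a h) ha
  have h1 := ((latPt_inj K hJ).hasSum_iff hsupp).mpr h0.hasSum
  refine h1.prod_fiberwise fun I => ?_
  have hn : mixedEmbedding.norm (mixedEmbedding K (genIJ K hJ I : K)) ≠ 0 := by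
    refine (norm_eq_zero_iff' (Set.mem_range_self _)).not.mpr ?_
    simpa using genIJ_ne K hJ I
  have := GK_hasSum_units K _ hn hT
  rw [genIJ_norm] at this
  exact this

lemma absNorm_pos' (I : (Ideal (𝓞 K))⁰) : (1 : ℝ) ≤ Ideal.absNorm (I : Ideal (𝓞 K)) := by
  exact_mod_cast Ideal.absNorm_pos_of_nonZeroDivisors I

lemma class_asymp (C : ClassGroup (𝓞 K)) : ∃ c D : ℝ, ∀ X : ℝ, 1 ≤ X → ∃ S : ℝ,
    HasSum (fun I : {I : (Ideal (𝓞 K))⁰ // ClassGroup.mk0 I = C} =>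
      gW (Ideal.absNorm (I.1 : Ideal (𝓞 K)) / X)) S ∧
    |S - c * X| ≤ D * X ^ (1 - (finrank ℚ K : ℝ)⁻¹) := by
  obtain ⟨J, hJ⟩ := ClassGroup.mk0_surjective C⁻¹
  obtain ⟨c, D, h⟩ := GK_lattice K (FractionalIdeal.mk0 K J)
  set n := finrank ℚ K with hn
  have hn0 : n ≠ 0 := (finrank_pos : 0 < finrank ℚ K).ne'
  set q := (Ideal.absNorm (J : Ideal (𝓞 K)) : ℝ) with hq
  have hq1 : 1 ≤ q := absNorm_pos' K J
  set t := (torsionOrder K : ℝ) with ht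
  have ht0 : 0 < t := by rw [ht]; exact_mod_cast torsionOrder_pos K
  refine ⟨t⁻¹ * c * q, t⁻¹ * (D * q ^ (1 - (n : ℝ)⁻¹)), fun X hX => ?_⟩
  have hXq : 1 ≤ X * q := by nlinarith
  set T := (X * q) ^ (n : ℝ)⁻¹ with hT
  have hT1 : 1 ≤ T := Real.one_le_rpow hXq (by positivity)
  have hTn : T ^ n = X * q := by
    rw [hT, Real.rpow_inv_natCast_pow (by linarith) hn0]
  have h1 := (class_hasSum K hJ (T := T) (by linarith)).mul_left t⁻¹
  rw [← hn, hTn] at h1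
  have h2 := h T hT1
  refine ⟨t⁻¹ * ∑' a : idealLattice K (FractionalIdeal.mk0 K J), GK K (T⁻¹ • (a : mixedSpace K)),
    ?_, ?_⟩
  · convert! h1 using 1
    ext I
    rw [← mul_assoc, inv_mul_cancel₀ ht0.ne', one_mul, mul_div_mul_right _ _ (by linarith : q ≠ 0)]
  · have e : T ^ n / T = q ^ (1 - (n : ℝ)⁻¹) * X ^ (1 - (n : ℝ)⁻¹) := by
      rw [← Real.mul_rpow (by linarith) (by linarith), mul_comm q X, Real.rpow_sub (by linarith),
        Real.rpow_one, hTn]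
    rw [e, hTn] at h2
    have e2 : ∀ s : ℝ, t⁻¹ * s - t⁻¹ * c * q * X = t⁻¹ * (s - c * (X * q)) := by intro s; ring
    rw [e2, abs_mul, abs_of_pos (inv_pos.mpr ht0)]
    calc _ ≤ t⁻¹ * _ := mul_le_mul_of_nonneg_left h2 (by positivity)
      _ = _ := by ring

lemma ideal_weight_asymp : ∃ c D : ℝ, ∀ X : ℝ, 1 ≤ X →
    |∑' I : (Ideal (𝓞 K))⁰, gW (Ideal.absNorm (I : Ideal (𝓞 K)) / X) - c * X|
      ≤ D * X ^ (1 - (finrank ℚ K : ℝ)⁻¹) := by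
  choose c D h using class_asymp K
  refine ⟨∑ C, c C, ∑ C, D C, fun X hX => ?_⟩
  choose S hS hS' using fun C => h C X hX
  have hfin : {I : (Ideal (𝓞 K))⁰ | Ideal.absNorm (I : Ideal (𝓞 K)) ≤ ⌊X⌋₊}.Finite :=
    Ideal.finite_setOfPred_absNorm_le₀ ⌊X⌋₊
  have hsm : Summable fun I : (Ideal (𝓞 K))⁰ => gW (Ideal.absNorm (I : Ideal (𝓞 K)) / X) := by
    refine summable_of_ne_finset_zero (s := hfin.toFinset) fun I hI => gW_eq_zero ?_
    have : X < Ideal.absNorm (I : Ideal (𝓞 K)) := by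
      have : ⌊X⌋₊ < Ideal.absNorm (I : Ideal (𝓞 K)) := by simpa using hI
      exact (Nat.floor_lt (by linarith)).mp this
    rw [one_le_div (by linarith)]
    exact this.le
  have h1 := (Equiv.sigmaFiberEquiv (fun I : (Ideal (𝓞 K))⁰ => ClassGroup.mk0 I)).hasSum_iff.mpr
    hsm.hasSum
  have h2 := h1.sigma (g := S) (fun C => hS C)
  rw [h2.unique (hasSum_fintype S), Finset.sum_mul, Finset.sum_mul, ← Finset.sum_sub_distrib]
  exact (Finset.abs_sum_le_sum_abs _ _).trans (Finset.sum_le_sum fun C _ => hS' C)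

end IdealSum


section ZetaCont
open MeasureTheory Set Topology

lemma gW_cont : Continuous gW := by unfold gW; fun_prop

lemma gW_exp_of_gt {a u : ℝ} (h : a < u) :
    gW (Real.exp (a - u)) = Real.exp (a - u) - Real.exp (2 * (a - u)) := by
  have h1 : Real.exp (a - u) ≤ 1 := Real.exp_le_one_iff.mpr (by linarith)
  rw [gW, max_eq_left (by linarith), two_mul, Real.exp_add]; ring

lemma gW_exp_of_le {a u : ℝ} (h : u ≤ a) : gW (Real.exp (a - u)) = 0 :=
  gW_eq_zero (Real.one_le_exp (by linarith))

lemma gW_term_eq {a u : ℝ} (h : a < u) (s : ℂ) :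
    (gW (Real.exp (a - u)) : ℂ) * Complex.exp (-s * u) =
      Complex.exp a * Complex.exp (-(s + 1) * u) -
        Complex.exp (2 * a) * Complex.exp (-(s + 2) * u) := by
  rw [gW_exp_of_gt h]
  push_cast
  rw [sub_mul, ← Complex.exp_add, ← Complex.exp_add, ← Complex.exp_add, ← Complex.exp_add]
  congr 2 <;> ring

lemma gW_int_aux {a : ℝ} {s : ℂ} (hs : 0 < s.re) :
    IntegrableOn (fun u : ℝ => Complex.exp a * Complex.exp (-(s + 1) * u) -
        Complex.exp (2 * a) * Complex.exp (-(s + 2) * u)) (Ioi a) := by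
  have h1 : (-(s + 1)).re < 0 := by simp; linarith
  have h2 : (-(s + 2)).re < 0 := by simp; linarith
  exact ((integrableOn_exp_mul_complex_Ioi h1 a).const_mul _).sub
    ((integrableOn_exp_mul_complex_Ioi h2 a).const_mul _)

lemma gW_integrable {a : ℝ} {s : ℂ} (hs : 0 < s.re) :
    Integrable (fun u : ℝ => (gW (Real.exp (a - u)) : ℂ) * Complex.exp (-s * u))
      (volume.restrict (Ioi 0)) := by
  have h : IntegrableOn (fun u : ℝ => (gW (Real.exp (a - u)) : ℂ) * Complex.exp (-s * u)) (Ioi a) :=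
    (gW_int_aux hs).congr_fun (fun u hu => (gW_term_eq hu s).symm) measurableSet_Ioi
  have h2 : Integrable (fun u : ℝ => (gW (Real.exp (a - u)) : ℂ) * Complex.exp (-s * u)) := by
    rw [← integrableOn_iff_integrable_of_support_subset (s := Ioi a)]
    · exact h
    · intro u hu
      by_contra hc
      exact hu (by simp only []; rw [gW_exp_of_le (by simpa using hc)]; simp)
  exact h2.restrict

lemma gW_integral {a : ℝ} (ha : 0 ≤ a) {s : ℂ} (hs : 0 < s.re) :
    ∫ u in Ioi (0:ℝ), (gW (Real.exp (a - u)) : ℂ) * Complex.exp (-s * u) =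
      Complex.exp (-s * a) / ((s + 1) * (s + 2)) := by
  have h1 : (-(s + 1)).re < 0 := by simp; linarith
  have h2 : (-(s + 2)).re < 0 := by simp; linarith
  have n1 : s + 1 ≠ 0 := by intro h; rw [h] at h1; simp at h1
  have n2 : s + 2 ≠ 0 := by intro h; rw [h] at h2; simp at h2
  rw [setIntegral_eq_of_subset_of_forall_sdiff_eq_zero measurableSet_Ioi (Ioi_subset_Ioi ha)]
  · rw [setIntegral_congr_fun measurableSet_Ioi (fun u hu => gW_term_eq hu s),
      integral_sub ((integrableOn_exp_mul_complex_Ioi h1 a).const_mul _)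
        ((integrableOn_exp_mul_complex_Ioi h2 a).const_mul _),
      integral_const_mul, integral_const_mul, integral_exp_mul_complex_Ioi h1,
      integral_exp_mul_complex_Ioi h2]
    have e1 : Complex.exp a * Complex.exp (-(s + 1) * a) = Complex.exp (-s * a) := by
      rw [← Complex.exp_add]; congr 1; ring
    have e2 : Complex.exp (2 * a) * Complex.exp (-(s + 2) * a) = Complex.exp (-s * a) := by
      rw [← Complex.exp_add]; congr 1; ring
    rw [mul_div_assoc', mul_div_assoc', mul_neg, mul_neg, e1, e2, neg_div_neg_eq, neg_div_neg_eq]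
    field_simp
    ring
  · intro u hu
    rw [gW_exp_of_le (by simpa using hu.2)]; simp

lemma gW_norm_integral {a : ℝ} (ha : 0 ≤ a) {s : ℂ} (hs : 0 < s.re) :
    ∫ u in Ioi (0:ℝ), ‖(gW (Real.exp (a - u)) : ℂ) * Complex.exp (-s * u)‖ =
      Real.exp (-s.re * a) / ((s.re + 1) * (s.re + 2)) := by
  have h := gW_integral ha (s := (s.re : ℂ)) (by simpa using hs)
  have e : ∀ u : ℝ, ‖(gW (Real.exp (a - u)) : ℂ) * Complex.exp (-s * u)‖ =
      gW (Real.exp (a - u)) * Real.exp (-s.re * u) := by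
    intro u
    rw [norm_mul, Complex.norm_real, Real.norm_of_nonneg (gW_nonneg (Real.exp_pos _).le),
      Complex.norm_exp]
    simp
  simp_rw [e]
  exact_mod_cast h

variable {ι : Type*} {ℓ : ι → ℝ} (hℓ : ∀ i, 0 ≤ ℓ i) {T : ℝ → ℝ}
  (hT : ∀ u, HasSum (fun i => gW (Real.exp (ℓ i - u))) (T u))

include hℓ hT in
lemma zeta_summable {B : ℝ} (hB : ∀ u, 0 ≤ u → T u ≤ B * Real.exp u) {σ : ℝ} (hσ : 1 < σ) :
    Summable fun i => Real.exp (-σ * ℓ i) := by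
  have hσ0 : 0 < ((σ : ℂ)).re := by simp; linarith
  have hIntg : IntegrableOn (fun u : ℝ => B * Real.exp (-(σ - 1) * u)) (Ioi 0) :=
    (integrableOn_exp_mul_Ioi (by linarith) 0).const_mul _
  refine summable_of_sum_le (c := (∫ u in Ioi (0:ℝ), B * Real.exp (-(σ - 1) * u)) *
    ((σ + 1) * (σ + 2))) (fun i => (Real.exp_pos _).le) fun S => ?_
  rw [← div_le_iff₀ (by positivity), Finset.sum_div]
  have e : ∀ i ∈ S, Real.exp (-σ * ℓ i) / ((σ + 1) * (σ + 2)) =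
    ∫ u in Ioi (0:ℝ), ‖(gW (Real.exp (ℓ i - u)) : ℂ) * Complex.exp (-(σ:ℂ) * u)‖ := by
    intro i _
    rw [gW_norm_integral (hℓ i) hσ0]; simp
  rw [Finset.sum_congr rfl e, ← integral_finsetSum _ (fun i _ => (gW_integrable hσ0).norm)]
  refine setIntegral_mono_on (integrable_finsetSum _ fun i _ => (gW_integrable hσ0).norm) hIntg
    measurableSet_Ioi fun u hu => ?_
  have e2 : ∀ i, ‖(gW (Real.exp (ℓ i - u)) : ℂ) * Complex.exp (-(σ:ℂ) * u)‖ =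
      gW (Real.exp (ℓ i - u)) * Real.exp (-σ * u) := by
    intro i
    rw [norm_mul, Complex.norm_real, Real.norm_of_nonneg (gW_nonneg (Real.exp_pos _).le),
      Complex.norm_exp]
    simp
  simp_rw [e2]
  rw [← Finset.sum_mul]
  have h1 : ∑ i ∈ S, gW (Real.exp (ℓ i - u)) ≤ T u :=
    sum_le_hasSum S (fun i _ => gW_nonneg (Real.exp_pos _).le) (hT u)
  have h2 := h1.trans (hB u (le_of_lt hu))
  calc _ ≤ B * Real.exp u * Real.exp (-σ * u) := mul_le_mul_of_nonneg_right h2 (Real.exp_pos _).le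
    _ = _ := by rw [mul_assoc, ← Real.exp_add]; congr 2; ring

lemma laplace_diff {E : ℝ → ℝ} (hE : Continuous E) {D α : ℝ}
    (hD : ∀ u, 0 ≤ u → |E u| ≤ D * Real.exp (α * u)) :
    DifferentiableOn ℂ (fun s : ℂ => ∫ u in Ioi (0:ℝ), (E u : ℂ) * Complex.exp (-s * u))
      {s | α < s.re} := by
  intro s₀ hs₀
  apply DifferentiableAt.differentiableWithinAt
  simp only [mem_ofPred_eq] at hs₀
  set η := (s₀.re - α) / 2 with hη
  have hη0 : 0 < η := by rw [hη]; linarith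
  have hD0 : 0 ≤ D := by have := hD 0 le_rfl; simp at this; exact (abs_nonneg _).trans this
  have hopen : {s : ℂ | α + η < s.re} ∈ 𝓝 s₀ :=
    (isOpen_lt continuous_const Complex.continuous_re).mem_nhds (by simp; linarith)
  have hbi : Integrable (fun u : ℝ => D * (2 / η) * Real.exp (-(η / 2) * u))
      (volume.restrict (Ioi 0)) := (integrableOn_exp_mul_Ioi (by linarith) 0).const_mul _
  have hn : ∀ (s : ℂ) (u : ℝ), 0 < u → α + η < s.re →
      ‖(E u : ℂ) * Complex.exp (-s * u)‖ ≤ D * Real.exp (-η * u) := by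
    intro s u hu hs
    rw [norm_mul, Complex.norm_real, Real.norm_eq_abs, Complex.norm_exp]
    have : (-s * u).re = -s.re * u := by simp
    rw [this]
    calc _ ≤ D * Real.exp (α * u) * Real.exp (-s.re * u) :=
          mul_le_mul_of_nonneg_right (hD u hu.le) (Real.exp_pos _).le
      _ = D * Real.exp (α * u + -s.re * u) := by rw [mul_assoc, Real.exp_add]
      _ ≤ _ := by gcongr; nlinarith
  have hmeas : ∀ s : ℂ, AEStronglyMeasurable (fun u : ℝ => (E u : ℂ) * Complex.exp (-s * u))
      (volume.restrict (Ioi 0)) := fun s => Continuous.aestronglyMeasurable (by fun_prop)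
  refine (hasDerivAt_integral_of_dominated_loc_of_deriv_le
    (F := fun s (u:ℝ) => (E u : ℂ) * Complex.exp (-s * u))
    (F' := fun s (u : ℝ) => (E u : ℂ) * (Complex.exp (-s * u) * (-u)))
    (bound := fun u : ℝ => D * (2 / η) * Real.exp (-(η / 2) * u)) hopen ?_ ?_ ?_ ?_ hbi ?_).2.differentiableAt
  · exact Eventually.of_forall fun s => hmeas s
  · refine Integrable.mono' ((integrableOn_exp_mul_Ioi (a := -η) (by linarith) 0).const_mul D)
      (hmeas _) ?_
    filter_upwards [ae_restrict_mem measurableSet_Ioi] with u hu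
    exact hn s₀ u hu (by linarith)
  · exact Continuous.aestronglyMeasurable (by fun_prop)
  · filter_upwards [ae_restrict_mem measurableSet_Ioi] with u hu s hs
    have hu : 0 < u := hu
    rw [← mul_assoc, norm_mul, norm_neg, Complex.norm_real, Real.norm_of_nonneg hu.le]
    have h1 : u ≤ 2 / η * Real.exp (η / 2 * u) := by
      have := Real.add_one_le_exp (η / 2 * u)
      rw [div_mul_eq_mul_div, le_div_iff₀ hη0]; nlinarith
    calc _ ≤ D * Real.exp (-η * u) * (2 / η * Real.exp (η / 2 * u)) :=
          mul_le_mul (hn s u hu hs) h1 hu.le (by positivity)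
      _ = D * (2 / η) * (Real.exp (-η * u) * Real.exp (η / 2 * u)) := by ring
      _ = _ := by rw [← Real.exp_add]; congr 2; ring
  · refine Eventually.of_forall fun u s _ => ?_
    have h1 : HasDerivAt (fun s : ℂ => -s * (u:ℂ)) (-(u:ℂ)) s := by
      simpa using ((hasDerivAt_id s).neg.mul_const (u:ℂ))
    exact h1.cexp.const_mul _

include hℓ hT in
lemma zeta_formula (hTc : Continuous T) {c D α : ℝ} (hα : α < 1)
    (hB : ∀ u, 0 ≤ u → |T u - c * Real.exp u| ≤ D * Real.exp (α * u)) :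
    (∀ σ : ℝ, 1 < σ → Summable fun i => Real.exp (-σ * ℓ i)) ∧
    ∃ E : ℂ → ℂ, DifferentiableOn ℂ E {s | α < s.re} ∧ ∀ s : ℂ, 1 < s.re →
      ∑' i, Complex.exp (-s * ℓ i) = (s + 1) * (s + 2) * (c / (s - 1) + E s) := by
  have hD0 : 0 ≤ D := by have := hB 0 le_rfl; simp at this; exact (abs_nonneg _).trans this
  have hsum : ∀ σ : ℝ, 1 < σ → Summable fun i => Real.exp (-σ * ℓ i) := by
    intro σ hσ
    refine zeta_summable hℓ hT (B := c + D) (fun u hu => ?_) hσ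
    have h1 := (le_abs_self _).trans (hB u hu)
    have h2 : Real.exp (α * u) ≤ Real.exp u := Real.exp_le_exp.mpr (by nlinarith)
    nlinarith
  refine ⟨hsum, fun s => ∫ u in Ioi (0:ℝ), ((T u - c * Real.exp u : ℝ) : ℂ) * Complex.exp (-s * u),
    laplace_diff (by fun_prop) hB, fun s hs => ?_⟩
  have hcount : Countable ι := by
    have h := (hsum 2 (by norm_num)).countable_support
    have : Function.support (fun i => Real.exp (-2 * ℓ i)) = univ := by
      ext i; simp [(Real.exp_pos _).ne']
    rw [this] at h
    exact countable_univ_iff.mp h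
  have hs0 : 0 < s.re := by linarith
  have h1 := hasSum_integral_of_summable_integral_norm (μ := volume.restrict (Ioi (0:ℝ)))
    (F := fun i (u : ℝ) => (gW (Real.exp (ℓ i - u)) : ℂ) * Complex.exp (-s * u))
    (fun i => gW_integrable hs0) (by
      simp_rw [fun i => gW_norm_integral (hℓ i) hs0]
      exact (hsum _ hs).div_const _)
  simp_rw [fun i => gW_integral (hℓ i) hs0] at h1
  have h2 : ∀ u : ℝ, ∑' i, (gW (Real.exp (ℓ i - u)) : ℂ) * Complex.exp (-s * u) =
      (T u : ℂ) * Complex.exp (-s * u) := fun u =>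
    (((Complex.hasSum_ofReal.mpr (hT u))).mul_right _).tsum_eq
  simp_rw [h2] at h1
  have n1 : s + 1 ≠ 0 := by intro h; have := congrArg Complex.re h; simp at this; linarith
  have n2 : s + 2 ≠ 0 := by intro h; have := congrArg Complex.re h; simp at this; linarith
  have n3 : s - 1 ≠ 0 := by intro h; have := congrArg Complex.re h; simp at this; linarith
  have h3 := (h1.mul_left ((s + 1) * (s + 2))).tsum_eq
  have h4 : ∀ i, (s + 1) * (s + 2) * (Complex.exp (-s * ℓ i) / ((s + 1) * (s + 2))) =
      Complex.exp (-s * ℓ i) := fun i => by field_simp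
  simp_rw [h4] at h3
  rw [h3]
  congr 1
  have hr : (-(s - 1)).re < 0 := by simp; linarith
  have e1 : ∫ u in Ioi (0:ℝ), (c : ℂ) * Complex.exp (-(s - 1) * u) = c / (s - 1) := by
    rw [integral_const_mul, integral_exp_mul_complex_Ioi hr]
    simp [div_eq_mul_inv]
    rw [← neg_sub s 1, inv_neg]
    ring
  rw [← e1, ← integral_add]
  · refine integral_congr_ae (Eventually.of_forall fun u => ?_)
    have : Complex.exp (-(s - 1) * u) = Complex.exp u * Complex.exp (-s * u) := by
      rw [← Complex.exp_add]; congr 1; ring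
    simp only [this]
    push_cast
    ring
  · exact (integrableOn_exp_mul_complex_Ioi hr 0).const_mul _
  · refine Integrable.mono' ((integrableOn_exp_mul_Ioi (a := -(s.re - α)) (by linarith) 0).const_mul D)
      (Continuous.aestronglyMeasurable (by fun_prop)) ?_
    filter_upwards [ae_restrict_mem measurableSet_Ioi] with u hu
    rw [norm_mul, Complex.norm_real, Real.norm_eq_abs, Complex.norm_exp]
    have : (-s * u).re = -s.re * u := by simp
    rw [this]
    calc _ ≤ D * Real.exp (α * u) * Real.exp (-s.re * u) :=
          mul_le_mul_of_nonneg_right (hB u (le_of_lt hu)) (Real.exp_pos _).le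
      _ = _ := by rw [mul_assoc, ← Real.exp_add]; congr 2; ring

end ZetaCont


section NonVan
open Set Topology

lemma logderiv_limit {H : ℂ → ℂ} {s₀ : ℂ} (hH : AnalyticAt ℂ H s₀)
    (hne : ¬ ∀ᶠ z in 𝓝 s₀, H z = 0) :
    ∃ m : ℕ, (m = 0 → H s₀ ≠ 0) ∧ (∀ᶠ ε : ℝ in 𝓝[>] 0, H (s₀ + ε) ≠ 0) ∧
      Tendsto (fun ε : ℝ => (ε : ℂ) * (deriv H (s₀ + ε) / H (s₀ + ε))) (𝓝[>] 0) (𝓝 m) := by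
  obtain ⟨m, g, hg, hg0, hev⟩ := hH.exists_eventuallyEq_pow_smul_nonzero_iff.mpr hne
  have hmap : Tendsto (fun ε : ℝ => s₀ + (ε : ℂ)) (𝓝[>] 0) (𝓝 s₀) := by
    have : Continuous fun ε : ℝ => s₀ + (ε : ℂ) := by fun_prop
    have h := this.tendsto 0
    simp only [Complex.ofReal_zero, add_zero] at h
    exact h.mono_left nhdsWithin_le_nhds
  have hgne : ∀ᶠ z in 𝓝 s₀, g z ≠ 0 := hg.continuousAt.eventually_ne hg0
  have hgan : ∀ᶠ z in 𝓝 s₀, AnalyticAt ℂ g z := hg.eventually_analyticAt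
  have hpos : ∀ᶠ ε : ℝ in 𝓝[>] 0, 0 < ε := self_mem_nhdsWithin
  refine ⟨m, ?_, ?_, ?_⟩
  · rintro rfl
    have := hev.self_of_nhds
    simpa [this] using hg0
  · filter_upwards [hmap.eventually hev, hmap.eventually hgne, hpos] with ε h1 h2 h3
    rw [h1]
    have : (ε : ℂ) ≠ 0 := by exact_mod_cast h3.ne'
    simp [h2, this]
  · have hd : ContinuousAt (deriv g) s₀ := hg.deriv.continuousAt
    have hl : Tendsto (fun ε : ℝ => (m : ℂ) + (ε : ℂ) * (deriv g (s₀ + ε) / g (s₀ + ε)))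
        (𝓝[>] 0) (𝓝 m) := by
      have h1 : Tendsto (fun ε : ℝ => (ε : ℂ)) (𝓝[>] 0) (𝓝 0) := by
        have := Complex.continuous_ofReal.tendsto 0
        exact this.mono_left nhdsWithin_le_nhds
      have h2 := (hd.tendsto.comp hmap).div (hg.continuousAt.tendsto.comp hmap) hg0
      have h3 := (h1.mul h2).const_add (m : ℂ)
      simpa using h3
    refine hl.congr' ?_
    have hev2 := hev.eventually_nhds
    filter_upwards [hmap.eventually hev2, hmap.eventually hgne, hmap.eventually hgan, hpos]
      with ε h1 h2 h3 h4
    have hε : (ε : ℂ) ≠ 0 := by exact_mod_cast h4.ne'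
    have hH' : H (s₀ + ε) = (ε : ℂ) ^ m * g (s₀ + ε) := by
      have := h1.self_of_nhds
      simpa using this
    have hdH : deriv H (s₀ + ε) = m * (ε : ℂ) ^ (m - 1) * g (s₀ + ε)
        + (ε : ℂ) ^ m * deriv g (s₀ + ε) := by
      have h5 : H =ᶠ[𝓝 (s₀ + ε)] fun z => (z - s₀) ^ m * g z := h1
      rw [h5.deriv_eq]
      have h6 : HasDerivAt (fun z : ℂ => (z - s₀) ^ m)
          (m * (s₀ + ε - s₀) ^ (m - 1) * 1) (s₀ + ε) :=
        ((hasDerivAt_id (s₀ + (ε:ℂ))).sub_const s₀).pow m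
      have h7 := (h6.mul h3.differentiableAt.hasDerivAt).deriv
      simp only [add_sub_cancel_left, mul_one] at h7
      exact h7
    rw [hH', hdH]
    rcases Nat.eq_zero_or_pos m with rfl | hm
    · simp
    · obtain ⟨j, rfl⟩ := Nat.exists_eq_succ_of_ne_zero hm.ne'
      simp only [Nat.succ_eq_add_one, Nat.add_sub_cancel]
      rw [pow_succ]
      field_simp
      try push_cast
      try ring

lemma three_four_one (σ m t : ℝ) :
    0 ≤ (3 * Complex.exp (-((1 + σ : ℝ) : ℂ) * m) + 4 * Complex.exp (-(1 + t * Complex.I + σ) * m)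
      + Complex.exp (-(1 + 2 * t * Complex.I + σ) * m)).re := by
  have h1 : (Complex.exp (-((1 + σ : ℝ) : ℂ) * m)).re = Real.exp (-(1 + σ) * m) := by
    rw [Complex.exp_re]; simp
  have h2 : (Complex.exp (-(1 + t * Complex.I + σ) * m)).re
      = Real.exp (-(1 + σ) * m) * Real.cos (t * m) := by
    have e1 : (-(1 + t * Complex.I + σ) * m : ℂ).re = -(1 + σ) * m := by simp; try ring
    have e2 : (-(1 + t * Complex.I + σ) * m : ℂ).im = -(t * m) := by simp; try ring
    rw [Complex.exp_re, e1, e2, Real.cos_neg]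
  have h3 : (Complex.exp (-(1 + 2 * t * Complex.I + σ) * m)).re
      = Real.exp (-(1 + σ) * m) * Real.cos (2 * (t * m)) := by
    have e1 : (-(1 + 2 * t * Complex.I + σ) * m : ℂ).re = -(1 + σ) * m := by simp; try ring
    have e2 : (-(1 + 2 * t * Complex.I + σ) * m : ℂ).im = -(2 * (t * m)) := by simp; try ring
    rw [Complex.exp_re, e1, e2, Real.cos_neg]
  have e3 : ∀ z : ℂ, (3 * z).re = 3 * z.re := fun z => by simp
  have e4 : ∀ z : ℂ, (4 * z).re = 4 * z.re := fun z => by simp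
  rw [Complex.add_re, Complex.add_re, e3, e4, h1, h2, h3, Real.cos_two_mul]
  nlinarith [mul_nonneg (Real.exp_pos (-(1 + σ) * m)).le (sq_nonneg (1 + Real.cos (t * m)))]

variable {κ : Type*} {lam mm : κ → ℝ} (hlam : ∀ q, 0 ≤ lam q) (hmm : ∀ q, 0 ≤ mm q)
  {Lam H : ℂ → ℂ} {α : ℝ} (hα : α < 1)
  (hLam : ∀ s : ℂ, 1 < s.re → HasSum (fun q => (lam q : ℂ) * Complex.exp (-s * mm q)) (Lam s))
  (hH : AnalyticOnNhd ℂ H {s | α < s.re}) (hH1 : H 1 ≠ 0)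
  (hid : ∀ s : ℂ, 1 < s.re → (s - 1) * deriv H s = H s * (1 - (s - 1) * Lam s))

include hα hH hH1 in
lemma H_not_locally_zero {s₀ : ℂ} (hs : α < s₀.re) : ¬ ∀ᶠ z in 𝓝 s₀, H z = 0 := by
  intro h
  have hpre : IsPreconnected {s : ℂ | α < s.re} := by
    have : Convex ℝ {s : ℂ | α < s.re} := convex_halfSpace_re_gt α
    exact this.isPreconnected
  exact hH1 (hH.eqOn_zero_of_preconnected_of_eventuallyEq_zero hpre hs h
    (show α < (1:ℂ).re by simpa using hα))

include hid in
lemma logderiv_id {s₀ : ℂ} (hs : 1 ≤ s₀.re) {ε : ℝ} (hε : 0 < ε) (h : H (s₀ + ε) ≠ 0) :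
    (ε : ℂ) * Lam (s₀ + ε) = ε / (s₀ + ε - 1) - ε * (deriv H (s₀ + ε) / H (s₀ + ε)) := by
  have h1 := hid (s₀ + ε) (by simp; linarith)
  have n3 : s₀ + ε - 1 ≠ 0 := by intro h; have := congrArg Complex.re h; simp at this; linarith
  have h2 : Lam (s₀ + ε) = 1 / (s₀ + ε - 1) - deriv H (s₀ + ε) / H (s₀ + ε) := by
    field_simp
    linear_combination h1
  rw [h2]; ring

lemma eps_div_tendsto {w : ℂ} (hw : w ≠ 0) :
    Tendsto (fun ε : ℝ => (ε : ℂ) / (w + ε)) (𝓝[>] 0) (𝓝 0) := by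
  have : ContinuousAt (fun ε : ℝ => (ε : ℂ) / (w + ε)) 0 := by
    apply ContinuousAt.div
    · fun_prop
    · fun_prop
    · simpa using hw
  have h := this.tendsto
  simp only [Complex.ofReal_zero, zero_div] at h
  exact h.mono_left nhdsWithin_le_nhds

include hα hH hH1 hid in
lemma lam_limit {s₀ : ℂ} (hs : 1 ≤ s₀.re) (hs1 : s₀ ≠ 1) : ∃ m : ℕ, (m = 0 → H s₀ ≠ 0) ∧
    Tendsto (fun ε : ℝ => (ε : ℂ) * Lam (s₀ + ε)) (𝓝[>] 0) (𝓝 (-m)) := by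
  have hsα : α < s₀.re := by linarith
  obtain ⟨m, h1, h2, h3⟩ := logderiv_limit (hH s₀ hsα) (H_not_locally_zero hα hH hH1 hsα)
  refine ⟨m, h1, ?_⟩
  have h4 := (eps_div_tendsto (sub_ne_zero.mpr hs1)).sub h3
  rw [zero_sub] at h4
  refine h4.congr' ?_
  filter_upwards [h2, self_mem_nhdsWithin] with ε e1 e2
  rw [logderiv_id hid hs e2 e1]
  congr 2; ring

include hα hH hH1 hid in
lemma lam_limit_one :
    Tendsto (fun ε : ℝ => (ε : ℂ) * Lam (1 + ε)) (𝓝[>] 0) (𝓝 1) := by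
  have hsα : α < (1:ℂ).re := by simpa using hα
  have hc : ContinuousAt (fun ε : ℝ => (1:ℂ) - ε * (deriv H (1 + ε) / H (1 + ε))) 0 := by
    have hH' := hH 1 hsα
    have hm : ContinuousAt (fun ε : ℝ => (1:ℂ) + ε) 0 := by fun_prop
    have c1 : ContinuousAt (fun ε : ℝ => deriv H (1 + ε)) 0 :=
      ContinuousAt.comp (g := deriv H) (f := fun ε : ℝ => (1:ℂ) + ε)
        (by simpa using hH'.deriv.continuousAt) hm
    have c2 : ContinuousAt (fun ε : ℝ => H (1 + ε)) 0 :=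
      ContinuousAt.comp (g := H) (f := fun ε : ℝ => (1:ℂ) + ε)
        (by simpa using hH'.continuousAt) hm
    have c3 := c1.div c2 (by simpa using hH1)
    have c4 : ContinuousAt (fun ε : ℝ => (ε : ℂ)) 0 := by fun_prop
    exact continuousAt_const.sub (c4.mul c3)
  have h := hc.tendsto
  simp only [Complex.ofReal_zero, zero_mul, sub_zero] at h
  have hne : ∀ᶠ ε : ℝ in 𝓝[>] 0, H (1 + ε) ≠ 0 := by
    have hm : Tendsto (fun ε : ℝ => (1:ℂ) + ε) (𝓝[>] 0) (𝓝 1) := by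
      have : Continuous fun ε : ℝ => (1:ℂ) + ε := by fun_prop
      have h := this.tendsto 0
      simp only [Complex.ofReal_zero, add_zero] at h
      exact h.mono_left nhdsWithin_le_nhds
    exact hm.eventually ((hH 1 hsα).continuousAt.eventually_ne hH1)
  refine (h.mono_left nhdsWithin_le_nhds).congr' ?_
  filter_upwards [hne, self_mem_nhdsWithin] with ε e1 e2
  rw [logderiv_id hid (by simp) e2 e1]
  have : (ε : ℂ) ≠ 0 := by exact_mod_cast (ne_of_gt e2)
  rw [add_sub_cancel_left, div_self this]

include hlam hmm hα hLam hH hH1 hid in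
theorem H_ne_zero {s₀ : ℂ} (hs : 1 ≤ s₀.re) : H s₀ ≠ 0 := by
  by_cases hs1 : s₀ = 1
  · rw [hs1]; exact hH1
  obtain ⟨m, h0, h1⟩ := lam_limit hα hH hH1 hid hs hs1
  apply h0
  rcases hs.lt_or_eq with hlt | heq
  · have hb : ∀ ε : ℝ, 0 < ε → ‖Lam (s₀ + ε)‖ ≤ ∑' q, ‖(lam q : ℂ) * Complex.exp (-s₀ * mm q)‖ := by
      intro ε hε
      rw [← (hLam (s₀ + ε) (by simp; linarith)).tsum_eq]
      have hs2 := (hLam s₀ hlt).summable.norm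
      refine tsum_of_norm_bounded hs2.hasSum fun q => ?_
      rw [norm_mul, norm_mul, Complex.norm_exp, Complex.norm_exp]
      refine mul_le_mul_of_nonneg_left (Real.exp_le_exp.mpr ?_) (norm_nonneg _)
      have := mul_nonneg hε.le (hmm q)
      have r1 : (-(s₀ + ε) * mm q : ℂ).re = -(s₀.re + ε) * mm q := by simp
      have r2 : (-s₀ * mm q : ℂ).re = -s₀.re * mm q := by simp
      rw [r1, r2]
      nlinarith
    have h2 : Tendsto (fun ε : ℝ => (ε : ℂ) * Lam (s₀ + ε)) (𝓝[>] 0) (𝓝 0) := by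
      set B := ∑' q, ‖(lam q : ℂ) * Complex.exp (-s₀ * mm q)‖
      have h3 : Tendsto (fun ε : ℝ => ε * B) (𝓝[>] 0) (𝓝 0) := by
        have : Continuous fun ε : ℝ => ε * B := by fun_prop
        have h := this.tendsto 0
        simp only [zero_mul] at h
        exact h.mono_left nhdsWithin_le_nhds
      refine squeeze_zero_norm' ?_ h3
      filter_upwards [self_mem_nhdsWithin] with ε e
      have e : 0 < ε := e
      rw [norm_mul, Complex.norm_real, Real.norm_of_nonneg e.le]
      exact mul_le_mul_of_nonneg_left (hb ε e) e.le
    have h3 := tendsto_nhds_unique h1 h2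
    exact_mod_cast (neg_eq_zero.mp h3)
  · have hs₀ : s₀ = 1 + s₀.im * Complex.I := by
      apply Complex.ext <;> simp [← heq]
    set t := s₀.im with ht
    have ht0 : t ≠ 0 := by
      intro h
      rw [h] at hs₀
      exact hs1 (by simpa using hs₀)
    have hs2 : (1 : ℂ) + 2 * t * Complex.I ≠ 1 := by
      intro h
      have := congrArg Complex.im h
      simp at this
      exact ht0 this
    obtain ⟨m', -, h2⟩ := lam_limit hα hH hH1 hid (s₀ := 1 + 2 * t * Complex.I) (by simp) hs2
    have h3 := lam_limit_one hα hH hH1 hid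
    rw [hs₀] at h1
    have h4 := ((h3.const_mul 3).add (h1.const_mul 4)).add h2
    have h5 := (Complex.continuous_re.tendsto _).comp h4
    have h6 : 0 ≤ ((3 : ℂ) * 1 + 4 * (-m) + -m').re := by
      refine ge_of_tendsto h5 ?_
      filter_upwards [self_mem_nhdsWithin] with ε e
      have e : 0 < ε := e
      have g1 := (hLam (1 + ε) (by simp; linarith)).mul_left 3
      have g2 := (hLam (1 + t * Complex.I + ε) (by simp; linarith)).mul_left 4
      have g3 := hLam (1 + 2 * t * Complex.I + ε) (by simp; linarith)
      have g4 := Complex.hasSum_re ((g1.add g2).add g3)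
      have g5 := g4.nonneg fun q => by
        have := mul_nonneg (hlam q) (three_four_one ε (mm q) t)
        rw [← Complex.re_ofReal_mul] at this
        convert this using 2
        push_cast
        ring
      have g6 := mul_nonneg e.le g5
      rw [← Complex.re_ofReal_mul] at g6
      convert g6 using 2
      simp only [Function.comp_apply]
      ring_nf
    have h7 : (0:ℝ) ≤ 3 - 4 * m - m' := by
      have : ((3 : ℂ) * 1 + 4 * (-m) + -m').re = 3 - 4 * m - m' := by simp; ring
      rwa [this] at h6
    have h8 : 4 * m + m' ≤ 3 := by
      have : (4 * m + m' : ℝ) ≤ 3 := by linarith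
      exact_mod_cast this
    omega

end NonVan


section ZetaK
open scoped nonZeroDivisors
open NumberField Set Topology

variable (K : Type*) [Field K] [NumberField K]

/-- log norm of an ideal -/
noncomputable def lN (I : (Ideal (𝓞 K))⁰) : ℝ := Real.log (Ideal.absNorm (I : Ideal (𝓞 K)))

lemma lN_nonneg (I : (Ideal (𝓞 K))⁰) : 0 ≤ lN K I := Real.log_nonneg (absNorm_pos' K I)

lemma exp_lN (I : (Ideal (𝓞 K))⁰) : Real.exp (lN K I) = Ideal.absNorm (I : Ideal (𝓞 K)) :=
  Real.exp_log (by linarith [absNorm_pos' K I])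

lemma lN_mul (I J : (Ideal (𝓞 K))⁰) : lN K (I * J) = lN K I + lN K J := by
  have h1 := absNorm_pos' K I
  have h2 := absNorm_pos' K J
  rw [lN, Submonoid.coe_mul, map_mul, Nat.cast_mul, Real.log_mul (by linarith) (by linarith)]
  rfl

/-- weighted ideal sum -/
noncomputable def idT (u : ℝ) : ℝ := ∑' I : (Ideal (𝓞 K))⁰, gW (Real.exp (lN K I - u))

lemma lN_finite (u : ℝ) : {I : (Ideal (𝓞 K))⁰ | lN K I ≤ u}.Finite := by
  have h : {I : (Ideal (𝓞 K))⁰ | Ideal.absNorm (I : Ideal (𝓞 K)) ≤ ⌊Real.exp u⌋₊}.Finite :=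
    Ideal.finite_setOfPred_absNorm_le₀ ⌊Real.exp u⌋₊
  refine h.subset fun I hI => ?_
  have h1 : Real.exp (lN K I) ≤ Real.exp u := Real.exp_le_exp.mpr hI
  rw [exp_lN] at h1
  exact Nat.le_floor h1

lemma idT_zero {u v : ℝ} (huv : u ≤ v) (I : (Ideal (𝓞 K))⁰) (hI : I ∉ (lN_finite K v).toFinset) :
    gW (Real.exp (lN K I - u)) = 0 := by
  apply gW_exp_of_le
  simp at hI
  linarith

lemma idT_hasSum (u : ℝ) : HasSum (fun I => gW (Real.exp (lN K I - u))) (idT K u) :=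
  (summable_of_ne_finset_zero (s := (lN_finite K u).toFinset) (idT_zero K le_rfl)).hasSum

lemma idT_cont : Continuous (idT K) := by
  rw [continuous_iff_continuousAt]
  intro u₀
  have h : ContinuousAt (fun u => ∑ I ∈ (lN_finite K (u₀ + 1)).toFinset,
      gW (Real.exp (lN K I - u))) u₀ := by
    refine Continuous.continuousAt (continuous_finsetSum _ fun I _ => ?_)
    exact gW_cont.comp (by fun_prop)
  refine h.congr ?_
  filter_upwards [Iic_mem_nhds (show u₀ < u₀ + 1 by linarith)] with u hu
  exact (tsum_eq_sum (idT_zero K hu)).symm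

lemma idT_asymp : ∃ c D α : ℝ, α < 1 ∧ ∀ u, 0 ≤ u →
    |idT K u - c * Real.exp u| ≤ D * Real.exp (α * u) := by
  obtain ⟨c, D, h⟩ := ideal_weight_asymp K
  have hn : 0 < (Module.finrank ℚ K : ℝ) := by exact_mod_cast Module.finrank_pos
  refine ⟨c, D, 1 - (Module.finrank ℚ K : ℝ)⁻¹, by have := inv_pos.mpr hn; linarith,
    fun u hu => ?_⟩
  have h1 := h (Real.exp u) (Real.one_le_exp hu)
  rw [← Real.exp_mul, mul_comm u] at h1
  have e : idT K u = ∑' I : (Ideal (𝓞 K))⁰, gW (Ideal.absNorm (I : Ideal (𝓞 K)) / Real.exp u) := by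
    unfold idT
    congr 1
    ext I
    rw [Real.exp_sub, exp_lN]
  rw [e]
  exact h1

/-- Dedekind zeta as sum over ideals -/
noncomputable def ZK (s : ℂ) : ℂ := ∑' I : (Ideal (𝓞 K))⁰, Complex.exp (-s * lN K I)

lemma lN_summable {σ : ℝ} (hσ : 1 < σ) : Summable fun I => Real.exp (-σ * lN K I) := by
  obtain ⟨c, D, α, hα, h⟩ := idT_asymp K
  exact (zeta_formula (lN_nonneg K) (idT_hasSum K) (idT_cont K) hα h).1 σ hσ

lemma ZK_summable {s : ℂ} (hs : 1 < s.re) : Summable fun I => ‖Complex.exp (-s * lN K I)‖ := by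
  refine (lN_summable K hs).congr fun I => ?_
  rw [Complex.norm_exp]; simp

lemma ZK_eq {s : ℂ} (hs : 1 < s.re) : ZK K s = dedekindZeta K s := by
  have h0 := (ZK_summable K hs).of_norm.hasSum
  have h1 := (Equiv.sigmaFiberEquiv
    (fun I : (Ideal (𝓞 K))⁰ => Ideal.absNorm (I : Ideal (𝓞 K)))).hasSum_iff.mpr h0
  have h2 := h1.sigma (g := fun n => LSeries.term
    (fun n ↦ (Nat.card {I : Ideal (𝓞 K) // Ideal.absNorm I = n} : ℂ)) s n) (fun n => by
      rcases Nat.eq_zero_or_pos n with rfl | hn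
      · have : IsEmpty {I : (Ideal (𝓞 K))⁰ // Ideal.absNorm (I : Ideal (𝓞 K)) = 0} :=
          ⟨fun I => by have := Ideal.absNorm_pos_of_nonZeroDivisors I.1; have := I.2; omega⟩
        rw [LSeries.term_zero]
        exact hasSum_empty
      · rw [LSeries.term_of_ne_zero hn.ne']
        let e : {I : (Ideal (𝓞 K))⁰ // Ideal.absNorm (I : Ideal (𝓞 K)) = n} ≃
            {I : Ideal (𝓞 K) // Ideal.absNorm I = n} :=
          { toFun := fun I => ⟨I.1.1, I.2⟩
            invFun := fun I => ⟨⟨I.1, mem_nonZeroDivisors_of_ne_zero (by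
              intro h
              have := I.2
              rw [h] at this
              simp at this
              omega)⟩, I.2⟩
            left_inv := fun I => rfl
            right_inv := fun I => rfl }
        have hf : Finite {I : (Ideal (𝓞 K))⁰ // Ideal.absNorm (I : Ideal (𝓞 K)) = n} := by
          have : Finite {I : Ideal (𝓞 K) // Ideal.absNorm I = n} :=
            (Ideal.finite_setOfPred_absNorm_eq n)
          exact Finite.of_equiv _ e.symm
        have := Fintype.ofFinite {I : (Ideal (𝓞 K))⁰ // Ideal.absNorm (I : Ideal (𝓞 K)) = n}
        have e2 : ∀ I : {I : (Ideal (𝓞 K))⁰ // Ideal.absNorm (I : Ideal (𝓞 K)) = n},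
            Complex.exp (-s * lN K I.1) = 1 / (n : ℂ) ^ s := by
          intro I
          have hn0 : (n : ℂ) ≠ 0 := by exact_mod_cast hn.ne'
          rw [lN, I.2, Complex.cpow_def_of_ne_zero hn0, one_div, ← Complex.exp_neg,
            Complex.ofReal_log (by positivity)]
          congr 1
          push_cast; ring
        have h3 := hasSum_fintype (fun I : {I : (Ideal (𝓞 K))⁰ //
          Ideal.absNorm (I : Ideal (𝓞 K)) = n} => Complex.exp (-s * lN K I.1))
        convert! h3 using 1
        rw [Finset.sum_congr rfl (fun I _ => e2 I), Finset.sum_const, ← Nat.card_congr e,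
          Finset.card_univ, Nat.card_eq_fintype_card, nsmul_eq_mul, div_eq_mul_one_div])
  exact h2.tsum_eq.symm

theorem exists_H : ∃ (H : ℂ → ℂ) (α : ℝ), α < 1 ∧ AnalyticOnNhd ℂ H {s | α < s.re} ∧ H 1 ≠ 0 ∧
    ∀ s : ℂ, 1 < s.re → H s = (s - 1) * ZK K s := by
  obtain ⟨c, D, α, hα, h⟩ := idT_asymp K
  obtain ⟨-, E, hE, hZ⟩ := zeta_formula (lN_nonneg K) (idT_hasSum K) (idT_cont K) hα h
  have hopen : IsOpen {s : ℂ | α < s.re} := isOpen_lt continuous_const Complex.continuous_re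
  set H : ℂ → ℂ := fun s => (s + 1) * (s + 2) * (c + (s - 1) * E s) with hH
  have hd : DifferentiableOn ℂ H {s | α < s.re} := by
    have h1 : DifferentiableOn ℂ (fun s : ℂ => (s + 1) * (s + 2)) {s | α < s.re} := by fun_prop
    have h2 : DifferentiableOn ℂ (fun s : ℂ => s - 1) {s | α < s.re} := by fun_prop
    exact h1.mul ((h2.mul hE).const_add _)
  have hHZ : ∀ s : ℂ, 1 < s.re → H s = (s - 1) * ZK K s := by
    intro s hs
    have n3 : s - 1 ≠ 0 := by intro h; have := congrArg Complex.re h; simp at this; linarith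
    rw [ZK, hZ s hs, hH]
    field_simp
  refine ⟨H, α, hα, hd.analyticOnNhd hopen, ?_, hHZ⟩
  have hc : ContinuousAt H 1 :=
    (hd.differentiableAt (hopen.mem_nhds (by simpa using hα))).continuousAt
  have hm : Tendsto (fun σ : ℝ => (σ : ℂ)) (𝓝[>] 1) (𝓝 1) := by
    have := Complex.continuous_ofReal.tendsto 1
    exact this.mono_left nhdsWithin_le_nhds
  have h1 := hc.tendsto.comp hm
  have h2 := tendsto_sub_one_mul_dedekindZeta_nhdsGT K
  have h3 : Tendsto (H ∘ fun σ : ℝ => (σ : ℂ)) (𝓝[>] 1) (𝓝 (dedekindZeta_residue K : ℂ)) := by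
    refine h2.congr' ?_
    filter_upwards [self_mem_nhdsWithin] with σ hσ
    have hσ' : 1 < ((σ : ℂ)).re := by simpa using hσ
    simp only [Function.comp_apply]
    rw [hHZ _ hσ', ZK_eq K hσ']
  rw [tendsto_nhds_unique h1 h3]
  exact_mod_cast dedekindZeta_residue_ne_zero K

end ZetaK


section Convol
open scoped nonZeroDivisors
open NumberField Set Topology

variable (K : Type*) [Field K] [NumberField K]

/-- prime as a nonzero ideal -/
noncomputable def pI (P : HeightOneSpectrum (𝓞 K)) : (Ideal (𝓞 K))⁰ :=
  ⟨P.asIdeal, mem_nonZeroDivisors_of_ne_zero P.ne_bot⟩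

lemma lN_pow (I : (Ideal (𝓞 K))⁰) (n : ℕ) : lN K (I ^ n) = n * lN K I := by
  rw [lN, SubmonoidClass.coe_pow, map_pow, Nat.cast_pow, Real.log_pow]; rfl

/-- prime power -/
noncomputable def pw (q : HeightOneSpectrum (𝓞 K) × ℕ) : (Ideal (𝓞 K))⁰ := pI K q.1 ^ (q.2 + 1)

lemma lN_pI (P : HeightOneSpectrum (𝓞 K)) : lN K (pI K P) = Real.log (nrm P) := rfl

lemma lN_pI_ge (P : HeightOneSpectrum (𝓞 K)) : Real.log 2 ≤ lN K (pI K P) := by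
  rw [lN_pI]
  exact Real.log_le_log (by norm_num) (by exact_mod_cast two_le_nrm P)

lemma lN_pI_pos (P : HeightOneSpectrum (𝓞 K)) : 0 < lN K (pI K P) :=
  (Real.log_pos (by norm_num)).trans_le (lN_pI_ge K P)

lemma lN_pw (q : HeightOneSpectrum (𝓞 K) × ℕ) : lN K (pw K q) = (q.2 + 1) * lN K (pI K q.1) := by
  rw [pw, lN_pow]; push_cast; rfl

lemma pw_inj : Function.Injective (pw K) := by
  rintro ⟨P, i⟩ ⟨Q, j⟩ h
  have h1 : P.asIdeal ^ (i + 1) = Q.asIdeal ^ (j + 1) := congrArg Subtype.val h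
  have hPQ : P = Q := by
    have hd : P.asIdeal ∣ Q.asIdeal ^ (j + 1) := by
      rw [← h1]; exact dvd_pow_self _ (Nat.succ_ne_zero i)
    have hd2 : P.asIdeal ∣ Q.asIdeal := P.prime.dvd_of_dvd_pow hd
    have := (Q.prime.irreducible.dvd_iff).mp hd2
    rcases this with hu | ha
    · exact absurd hu P.prime.not_unit
    · exact HeightOneSpectrum.ext (associated_iff_eq.mp ha.symm)
  subst hPQ
  have h2 := lN_pw K (P, i)
  rw [h, lN_pw] at h2
  have h3 := mul_right_cancel₀ (lN_pI_pos K P).ne' h2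
  have : j = i := by
    have : (j : ℝ) = i := by simpa using h3
    exact_mod_cast this
  rw [this]

/-- exponent of `P` in `I` -/
noncomputable def ex (P : HeightOneSpectrum (𝓞 K)) (I : (Ideal (𝓞 K))⁰) : ℕ :=
  (Associates.mk P.asIdeal).count (Associates.mk (I : Ideal (𝓞 K))).factors

lemma pw_dvd_iff (P : HeightOneSpectrum (𝓞 K)) (j : ℕ) (I : (Ideal (𝓞 K))⁰) :
    ((pw K (P, j) : (Ideal (𝓞 K))⁰) : Ideal (𝓞 K)) ∣ (I : Ideal (𝓞 K)) ↔ j < ex K P I := by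
  have h := Associates.prime_pow_dvd_iff_le (m := Associates.mk (I : Ideal (𝓞 K)))
    (p := Associates.mk P.asIdeal) (k := j + 1)
    (Associates.mk_ne_zero.mpr (nonZeroDivisors.coe_ne_zero I)) P.associates_irreducible
  rw [← Associates.mk_pow, Associates.mk_le_mk_iff_dvd] at h
  exact h

lemma ex_finite (I : (Ideal (𝓞 K))⁰) : {P | ex K P I ≠ 0}.Finite := by
  have h := Filter.eventually_cofinite.mp (Associates.finite_factors (nonZeroDivisors.coe_ne_zero I))
  refine h.subset fun P hP => ?_
  have hP : ex K P I ≠ 0 := hP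
  simpa [ex] using hP

lemma lN_eq_sum (I : (Ideal (𝓞 K))⁰) :
    lN K I = ∑ P ∈ (ex_finite K I).toFinset, ex K P I * lN K (pI K P) := by
  have h := Ideal.finprod_heightOneSpectrum_factorization (nonZeroDivisors.coe_ne_zero I)
  rw [finprod_eq_prod_of_mulSupport_subset (s := (ex_finite K I).toFinset)] at h
  · have e : I = ∏ P ∈ (ex_finite K I).toFinset, pI K P ^ ex K P I := by
      apply Subtype.ext
      rw [Submonoid.coe_finsetProd]
      exact h.symm
    conv_lhs => rw [e]
    generalize (ex_finite K I).toFinset = S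
    classical
    induction S using Finset.induction_on with
    | empty => simp [lN]
    | insert a s ha ih => rw [Finset.prod_insert ha, Finset.sum_insert ha, lN_mul, ih, lN_pow]
  · intro P hP
    simp only [Finite.coe_toFinset]
    intro h0
    apply hP
    simp only [HeightOneSpectrum.maxPowDividing]
    have : ex K P I = 0 := h0
    unfold ex at this
    rw [this, pow_zero]

open Classical in
lemma hasSum_dvd (I : (Ideal (𝓞 K))⁰) :
    HasSum (fun q : HeightOneSpectrum (𝓞 K) × ℕ =>
      if ((pw K q : (Ideal (𝓞 K))⁰) : Ideal (𝓞 K)) ∣ (I : Ideal (𝓞 K)) then lN K (pI K q.1) else 0)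
      (lN K I) := by
  set S := (ex_finite K I).toFinset with hS
  set S2 : Finset (HeightOneSpectrum (𝓞 K) × ℕ) :=
    S.biUnion fun P => (Finset.range (ex K P I)).image fun j => (P, j) with hS2
  have key : HasSum (fun q : HeightOneSpectrum (𝓞 K) × ℕ =>
      if ((pw K q : (Ideal (𝓞 K))⁰) : Ideal (𝓞 K)) ∣ (I : Ideal (𝓞 K)) then lN K (pI K q.1) else 0)
      (∑ q ∈ S2, if ((pw K q : (Ideal (𝓞 K))⁰) : Ideal (𝓞 K)) ∣ (I : Ideal (𝓞 K))
        then lN K (pI K q.1) else 0) := by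
    apply hasSum_sum_of_ne_finset_zero
    rintro ⟨P, j⟩ hq
    rw [if_neg]
    intro h
    rw [pw_dvd_iff] at h
    apply hq
    rw [hS2, Finset.mem_biUnion]
    refine ⟨P, ?_, ?_⟩
    · rw [hS, Finite.mem_toFinset]
      exact (by omega : ex K P I ≠ 0)
    · exact Finset.mem_image.mpr ⟨j, Finset.mem_range.mpr h, rfl⟩
  convert key using 1
  rw [lN_eq_sum, hS2, Finset.sum_biUnion]
  · refine Finset.sum_congr rfl fun P _ => ?_
    rw [Finset.sum_image (fun a _ b _ h => (Prod.mk.inj h).2)]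
    rw [Finset.sum_congr rfl (fun j hj => if_pos ((pw_dvd_iff K P j I).mpr (Finset.mem_range.mp hj)))]
    simp
  · intro P _ Q _ hPQ
    rw [Function.onFun, Finset.disjoint_left]
    intro q h1 h2
    obtain ⟨a, -, rfl⟩ := Finset.mem_image.mp h1
    obtain ⟨b, -, hb⟩ := Finset.mem_image.mp h2
    exact hPQ (Prod.mk.inj hb).1.symm

lemma hasSum_fiber (I : (Ideal (𝓞 K))⁰) :
    HasSum (fun x : {x : (HeightOneSpectrum (𝓞 K) × ℕ) × (Ideal (𝓞 K))⁰ // pw K x.1 * x.2 = I} =>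
      lN K (pI K x.1.1.1)) (lN K I) := by
  classical
  set g : {x : (HeightOneSpectrum (𝓞 K) × ℕ) × (Ideal (𝓞 K))⁰ // pw K x.1 * x.2 = I} →
    HeightOneSpectrum (𝓞 K) × ℕ := fun x => x.1.1 with hg
  have hinj : Function.Injective g := by
    rintro ⟨⟨q, J⟩, h⟩ ⟨⟨q', J'⟩, h'⟩ hqq
    have hqq : q = q' := hqq
    subst hqq
    have h1 : pw K q * J = pw K q * J' := h.trans h'.symm
    have h2 : J = J' := by
      apply Subtype.ext
      have := congrArg (fun z : (Ideal (𝓞 K))⁰ => (z : Ideal (𝓞 K))) h1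
      exact mul_left_cancel₀ (nonZeroDivisors.coe_ne_zero (pw K q)) this
    subst h2
    rfl
  have hz : ∀ q ∉ range g, (if ((pw K q : (Ideal (𝓞 K))⁰) : Ideal (𝓞 K)) ∣ (I : Ideal (𝓞 K))
      then lN K (pI K q.1) else 0) = 0 := by
    intro q hq
    rw [if_neg]
    rintro ⟨J, hJ⟩
    apply hq
    have hJ0 : J ≠ 0 := by
      rintro rfl
      rw [mul_zero] at hJ
      exact nonZeroDivisors.coe_ne_zero I hJ
    exact ⟨⟨(q, ⟨J, mem_nonZeroDivisors_of_ne_zero hJ0⟩), Subtype.ext hJ.symm⟩, rfl⟩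
  have h := (hinj.hasSum_iff hz).mpr (hasSum_dvd K I)
  convert! h using 1
  ext x
  simp only [Function.comp_apply]
  rw [if_pos]
  exact ⟨(x.1.2 : (Ideal (𝓞 K))⁰).1, (congrArg Subtype.val x.2).symm⟩

lemma ZK_deriv {s : ℂ} (hs : 1 < s.re) :
    HasSum (fun I => (lN K I : ℂ) * Complex.exp (-s * lN K I)) (-deriv (ZK K) s) := by
  set σ := (1 + s.re) / 2 with hσ
  have hd : ∀ I w, HasDerivAt (fun w : ℂ => Complex.exp (-w * lN K I))
      (Complex.exp (-w * lN K I) * (-(lN K I : ℂ))) w := by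
    intro I w
    have h1 : HasDerivAt (fun s : ℂ => -s * (lN K I:ℂ)) (-(lN K I:ℂ)) w := by
      simpa using ((hasDerivAt_id w).neg.mul_const (lN K I:ℂ))
    exact h1.cexp
  have h := Complex.hasSum_deriv_of_summable_norm (U := {w : ℂ | σ < w.re}) (z := s)
    (F := fun I (w : ℂ) => Complex.exp (-w * lN K I)) (lN_summable K (σ := σ) (by linarith))
    (fun I w _ => (hd I w).differentiableAt.differentiableWithinAt)
    (isOpen_lt continuous_const Complex.continuous_re) (fun I w hw => by
      rw [Complex.norm_exp]
      have hw : σ < w.re := hw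
      have : (-w * (lN K I : ℂ)).re = -w.re * lN K I := by simp
      rw [this, Real.exp_le_exp]
      nlinarith [lN_nonneg K I]) (show σ < s.re by linarith)
  have h2 := h.neg
  convert! h2 using 1
  ext I
  rw [(hd I s).deriv]
  ring

/-- von Mangoldt series -/
noncomputable def LamK (s : ℂ) : ℂ := ∑' q : HeightOneSpectrum (𝓞 K) × ℕ,
  (lN K (pI K q.1) : ℂ) * Complex.exp (-s * lN K (pw K q))

lemma lNexp_summable {σ : ℝ} (hσ : 1 < σ) : Summable fun I => lN K I * Real.exp (-σ * lN K I) := by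
  have h := (ZK_deriv K (s := (σ : ℂ)) (by simpa using hσ)).summable
  have h2 := (Complex.hasSum_re h.hasSum).summable
  refine h2.congr fun I => ?_
  rw [← Complex.ofReal_neg, ← Complex.ofReal_mul, ← Complex.ofReal_exp, ← Complex.ofReal_mul,
    Complex.ofReal_re]

lemma norm_cexp_neg (s : ℂ) (a : ℝ) : ‖Complex.exp (-s * a)‖ = Real.exp (-s.re * a) := by
  rw [Complex.norm_exp]; simp

lemma Lam_summable {s : ℂ} (hs : 1 < s.re) : Summable fun q : HeightOneSpectrum (𝓞 K) × ℕ =>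
    ‖(lN K (pI K q.1) : ℂ) * Complex.exp (-s * lN K (pw K q))‖ := by
  refine Summable.of_nonneg_of_le (fun _ => norm_nonneg _) (fun q => ?_)
    ((lNexp_summable K hs).comp_injective (pw_inj K))
  rw [norm_mul, norm_cexp_neg, Complex.norm_real, Real.norm_of_nonneg (lN_nonneg K _)]
  refine mul_le_mul_of_nonneg_right ?_ (Real.exp_pos _).le
  rw [lN_pw]
  nlinarith [lN_nonneg K (pI K q.1), Nat.cast_nonneg (α := ℝ) q.2,
    mul_nonneg (Nat.cast_nonneg (α := ℝ) q.2) (lN_nonneg K (pI K q.1))]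

lemma Lam_hasSum {s : ℂ} (hs : 1 < s.re) : HasSum (fun q : HeightOneSpectrum (𝓞 K) × ℕ =>
    (lN K (pI K q.1) : ℂ) * Complex.exp (-s * lN K (pw K q))) (LamK K s) :=
  (Lam_summable K hs).of_norm.hasSum

lemma deriv_ZK {s : ℂ} (hs : 1 < s.re) : -deriv (ZK K) s = LamK K s * ZK K s := by
  have h1 := (summable_mul_of_summable_norm (Lam_summable K hs) (ZK_summable K hs)).hasSum
  rw [← tsum_mul_tsum_of_summable_norm (Lam_summable K hs) (ZK_summable K hs)] at h1
  have h2 := (Equiv.sigmaFiberEquiv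
    (fun x : (HeightOneSpectrum (𝓞 K) × ℕ) × (Ideal (𝓞 K))⁰ => pw K x.1 * x.2)).hasSum_iff.mpr h1
  have h3 := h2.sigma (g := fun I => (lN K I : ℂ) * Complex.exp (-s * lN K I)) (fun I => by
    have h := (Complex.hasSum_ofReal.mpr (hasSum_fiber K I)).mul_right (Complex.exp (-s * lN K I))
    convert! h using 1
    ext x
    have hx : pw K x.1.1 * x.1.2 = I := x.2
    have : lN K I = lN K (pw K x.1.1) + lN K x.1.2 := by
      have h5 := congrArg (lN K) hx
      rw [lN_mul] at h5
      exact h5.symm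
    rw [this]
    simp only [Function.comp_apply, Equiv.sigmaFiberEquiv, Equiv.coe_fn_mk]
    rw [mul_assoc, ← Complex.exp_add]
    push_cast
    congr 2
    ring)
  exact (ZK_deriv K hs).unique h3

end Convol


section FinishPIT
open scoped nonZeroDivisors
open NumberField Set Topology

variable (K : Type*) [Field K] [NumberField K]

lemma hid_K {H : ℂ → ℂ} {α : ℝ} (hα : α < 1) (hH : AnalyticOnNhd ℂ H {s | α < s.re})
    (hZ : ∀ s : ℂ, 1 < s.re → H s = (s - 1) * ZK K s) {s : ℂ} (hs : 1 < s.re) :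
    (s - 1) * deriv H s = H s * (1 - (s - 1) * LamK K s) := by
  have hopen : IsOpen {s : ℂ | 1 < s.re} := isOpen_lt continuous_const Complex.continuous_re
  have hne : ∀ w : ℂ, 1 < w.re → w - 1 ≠ 0 := by
    intro w hw h; have := congrArg Complex.re h; simp at this; linarith
  have hHd : DifferentiableAt ℂ H s := (hH s (show α < s.re by linarith)).differentiableAt
  have hZe : ZK K =ᶠ[𝓝 s] fun w => H w / (w - 1) := by
    filter_upwards [hopen.mem_nhds hs] with w hw
    rw [hZ w hw, mul_div_cancel_left₀ _ (hne w hw)]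
  have hZd : DifferentiableAt ℂ (ZK K) s :=
    (hHd.div (by fun_prop) (hne s hs)).congr_of_eventuallyEq hZe
  have hHe : H =ᶠ[𝓝 s] fun w => (w - 1) * ZK K w := by
    filter_upwards [hopen.mem_nhds hs] with w hw using hZ w hw
  have h1 : HasDerivAt (fun w => (w - 1) * ZK K w) (1 * ZK K s + (s - 1) * deriv (ZK K) s) s :=
    ((hasDerivAt_id s).sub_const 1).mul hZd.hasDerivAt
  rw [hHe.deriv_eq, h1.deriv, hZ s hs]
  have h2 := deriv_ZK K hs
  linear_combination (-(s-1)*(s-1)) * h2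

lemma H_ne_zero_K {H : ℂ → ℂ} {α : ℝ} (hα : α < 1) (hH : AnalyticOnNhd ℂ H {s | α < s.re})
    (hH1 : H 1 ≠ 0) (hZ : ∀ s : ℂ, 1 < s.re → H s = (s - 1) * ZK K s) {s : ℂ} (hs : 1 ≤ s.re) :
    H s ≠ 0 :=
  H_ne_zero (lam := fun q : HeightOneSpectrum (𝓞 K) × ℕ => lN K (pI K q.1))
    (mm := fun q => lN K (pw K q)) (Lam := LamK K) (fun _ => lN_nonneg K _)
    (fun _ => lN_nonneg K _) hα (fun _ hs => Lam_hasSum K hs) hH hH1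
    (fun _ hs => hid_K K hα hH hZ hs) hs

lemma pI_inj : Function.Injective (pI K) := fun P Q h =>
  HeightOneSpectrum.ext (congrArg Subtype.val h)

/-- term -/
noncomputable def xP (s : ℂ) (P : HeightOneSpectrum (𝓞 K)) : ℂ := Complex.exp (-s * lN K (pI K P))

lemma norm_xP (s : ℂ) (P) : ‖xP K s P‖ = Real.exp (-s.re * lN K (pI K P)) := norm_cexp_neg _ _

lemma norm_xP_le {s : ℂ} (hs : 1 ≤ s.re) (P) : ‖xP K s P‖ ≤ 1 / 2 := by
  rw [norm_xP]
  have h := lN_pI_ge K P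
  have h0 := lN_pI_pos K P
  calc Real.exp (-s.re * lN K (pI K P)) ≤ Real.exp (-Real.log 2) := by
        apply Real.exp_le_exp.mpr; nlinarith
    _ = 1 / 2 := by rw [Real.exp_neg, Real.exp_log (by norm_num)]; norm_num

lemma half_le_norm {s : ℂ} (hs : 1 ≤ s.re) (P) : 1 / 2 ≤ ‖1 - xP K s P‖ := by
  have h1 := norm_xP_le K hs P
  have h2 := norm_sub_norm_le (1:ℂ) (xP K s P)
  rw [norm_one] at h2
  linarith

lemma one_sub_ne {s : ℂ} (hs : 1 ≤ s.re) (P) : 1 - xP K s P ≠ 0 := by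
  intro h
  have := half_le_norm K hs P
  rw [h, norm_zero] at this
  norm_num at this

/-- Remainder -/
noncomputable def RK (s : ℂ) : ℂ := ∑' P, (lN K (pI K P) : ℂ) * (xP K s P ^ 2 / (1 - xP K s P))

lemma RK_bound {s : ℂ} (hs : 1 ≤ s.re) (P) :
    ‖(lN K (pI K P) : ℂ) * (xP K s P ^ 2 / (1 - xP K s P))‖ ≤
      2 * (lN K (pI K P) * Real.exp (-2 * lN K (pI K P))) := by
  have h0 := lN_pI_pos K P
  rw [norm_mul, norm_div, norm_pow, Complex.norm_real, Real.norm_of_nonneg h0.le]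
  have h1 : ‖xP K s P‖ ^ 2 ≤ Real.exp (-2 * lN K (pI K P)) := by
    rw [norm_xP, ← Real.exp_nat_mul]
    apply Real.exp_le_exp.mpr
    push_cast
    nlinarith
  have h2 : ‖xP K s P‖ ^ 2 / ‖1 - xP K s P‖ ≤ Real.exp (-2 * lN K (pI K P)) / (1 / 2) :=
    div_le_div₀ (Real.exp_pos _).le h1 (by norm_num) (half_le_norm K hs P)
  calc _ ≤ lN K (pI K P) * (Real.exp (-2 * lN K (pI K P)) / (1 / 2)) := by gcongr
    _ = _ := by ring

lemma bound_summable : Summable fun P => 2 * (lN K (pI K P) * Real.exp (-2 * lN K (pI K P))) :=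
  ((lNexp_summable K (σ := 2) (by norm_num)).comp_injective (pI_inj K)).mul_left 2

lemma RK_cont : ContinuousOn (RK K) {s | 1 ≤ s.re} := by
  refine continuousOn_tsum (fun P => ?_) (bound_summable K) (fun P s hs => RK_bound K hs P)
  have hx : Continuous fun s => xP K s P := by unfold xP; fun_prop
  exact continuousOn_const.mul ((hx.pow 2).continuousOn.div
    (continuous_const.sub hx).continuousOn fun s hs => one_sub_ne K hs P)

lemma prime_summable {σ : ℝ} (hσ : 1 < σ) :
    Summable fun P => lN K (pI K P) * Real.exp (-σ * lN K (pI K P)) :=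
  (lNexp_summable K hσ).comp_injective (pI_inj K)

lemma Lam_split {s : ℂ} (hs : 1 < s.re) :
    HasSum (fun P => (lN K (pI K P) : ℂ) * xP K s P) (LamK K s - RK K s) := by
  have h1 := (Lam_hasSum K hs).prod_fiberwise
    (g := fun P => (lN K (pI K P) : ℂ) * (xP K s P * (1 - xP K s P)⁻¹)) (fun P => by
      have hn : ‖xP K s P‖ < 1 := by have := norm_xP_le K hs.le P; linarith
      have h := (((hasSum_geometric_of_norm_lt_one hn).mul_left (xP K s P))).mul_left
        (lN K (pI K P) : ℂ)
      convert! h using 1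
      ext n
      simp only [lN_pw]
      rw [← pow_succ', xP, ← Complex.exp_nat_mul]
      push_cast
      congr 2
      ring)
  have h2 : HasSum (fun P => (lN K (pI K P) : ℂ) * (xP K s P ^ 2 / (1 - xP K s P))) (RK K s) :=
    (Summable.of_norm_bounded (bound_summable K) (RK_bound K hs.le)).hasSum
  have h3 := h1.sub h2
  convert! h3 using 1
  ext P
  have := one_sub_ne K hs.le P
  field_simp

lemma prime_countable : Countable (HeightOneSpectrum (𝓞 K)) := by
  have h := (prime_summable K (σ := 2) (by norm_num)).countable_support
  have h2 : Function.support (fun P => lN K (pI K P) * Real.exp (-2 * lN K (pI K P))) = univ := by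
    ext P
    simp [(lN_pI_pos K P).ne']
  rw [h2] at h
  exact countable_univ_iff.mp h

lemma theta_hasSum (u : ℝ) :
    HasSum (fun P => if lN K (pI K P) ≤ u then lN K (pI K P) else 0) (thetaK K (Real.exp u)) := by
  have hiff : ∀ P, P ∈ primesF K (Real.exp u) ↔ lN K (pI K P) ≤ u := by
    intro P
    rw [mem_primesF, lN_pI]
    have : (0:ℝ) < nrm P := by have := two_le_nrm P; positivity
    exact (Real.log_le_iff_le_exp this).symm
  have : thetaK K (Real.exp u) = ∑ P ∈ primesF K (Real.exp u),
      if lN K (pI K P) ≤ u then lN K (pI K P) else 0 := by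
    unfold thetaK
    refine Finset.sum_congr rfl fun P hP => ?_
    rw [if_pos ((hiff P).mp hP)]; rfl
  rw [this]
  exact hasSum_sum_of_ne_finset_zero fun P hP => if_neg (fun h => hP ((hiff P).mpr h))

lemma int_exp_Ioi {w : ℂ} (hw : 0 < w.re) (c : ℝ) :
    MeasureTheory.IntegrableOn (fun u : ℝ => Complex.exp (-w * u)) (Ioi c) ∧
    ∫ u in Ioi c, Complex.exp (-w * u) = Complex.exp (-w * c) / w := by
  have hw' : (-w).re < 0 := by simpa using hw
  refine ⟨integrableOn_exp_mul_complex_Ioi hw' c, ?_⟩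
  rw [integral_exp_mul_complex_Ioi hw' c, neg_div_neg_eq]

open Classical in
lemma term_int {w : ℂ} (hw : 0 < w.re) {a : ℝ} (ha : 0 ≤ a) :
    MeasureTheory.IntegrableOn (fun u : ℝ => ((if a ≤ u then a else 0 : ℝ) : ℂ) *
      Complex.exp (-w * u)) (Ioi 0) ∧
    ∫ u in Ioi (0:ℝ), ((if a ≤ u then a else 0 : ℝ) : ℂ) * Complex.exp (-w * u) =
      a * Complex.exp (-w * a) / w ∧
    ∫ u in Ioi (0:ℝ), ‖((if a ≤ u then a else 0 : ℝ) : ℂ) * Complex.exp (-w * u)‖ =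
      a * Real.exp (-w.re * a) / w.re := by
  have e1 : (fun u : ℝ => ((if a ≤ u then a else 0 : ℝ) : ℂ) * Complex.exp (-w * u)) =
      (Ici a).indicator (fun u : ℝ => (a : ℂ) * Complex.exp (-w * u)) := by
    ext u
    by_cases h : a ≤ u
    · simp [h]
    · simp [h]
  have key : ∀ {E : Type} [NormedAddCommGroup E] [NormedSpace ℝ E] (f : ℝ → E),
      ∫ u in Ioi (0:ℝ), (Ici a).indicator f u = ∫ u in Ioi a, f u := by
    intro E _ _ f
    rw [MeasureTheory.integral_indicator measurableSet_Ici,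
      MeasureTheory.Measure.restrict_restrict measurableSet_Ici]
    apply MeasureTheory.setIntegral_congr_set
    rcases eq_or_lt_of_le ha with h | h
    · rw [← h, inter_eq_self_of_subset_right Ioi_subset_Ici_self]
      exact EventuallyEq.rfl
    · have hsub : Ici a ⊆ Ioi 0 := Ici_subset_Ioi.mpr h
      rw [inter_eq_self_of_subset_left hsub]
      exact MeasureTheory.Ioi_ae_eq_Ici.symm
  rw [e1]
  refine ⟨?_, ?_, ?_⟩
  · exact ((int_exp_Ioi hw 0).1.const_mul _).indicator measurableSet_Ici
  · rw [key, MeasureTheory.integral_const_mul, (int_exp_Ioi hw a).2, mul_div_assoc]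
  · have e3 : ∀ u : ℝ, ((if a ≤ u then a else 0 : ℝ) : ℂ) * Complex.exp (-w * u) =
      (Ici a).indicator (fun u : ℝ => (a : ℂ) * Complex.exp (-w * u)) u := fun u => congrFun e1 u
    simp_rw [e3]
    have e2 : (fun u : ℝ => ‖(Ici a).indicator (fun u : ℝ => (a : ℂ) * Complex.exp (-w * u)) u‖) =
      (Ici a).indicator (fun u : ℝ => a * Real.exp (-w.re * u)) := by
      ext u
      rw [norm_indicator_eq_indicator_norm]
      congr 1
      ext u
      rw [norm_mul, norm_cexp_neg, Complex.norm_real, Real.norm_of_nonneg ha]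
    rw [e2, key, MeasureTheory.integral_const_mul, integral_exp_mul_Ioi (by linarith), mul_div_assoc,
      neg_div_neg_eq]

lemma theta_int {w : ℂ} (hw : 1 < w.re) :
    ∫ u in Ioi (0:ℝ), ((thetaK K (Real.exp u) : ℝ) : ℂ) * Complex.exp (-w * u) =
      (LamK K w - RK K w) / w := by
  have hw0 : 0 < w.re := by linarith
  have hc := prime_countable K
  have h := MeasureTheory.hasSum_integral_of_summable_integral_norm
    (μ := MeasureTheory.volume.restrict (Ioi (0:ℝ)))
    (F := fun P (u : ℝ) => ((if lN K (pI K P) ≤ u then lN K (pI K P) else 0 : ℝ) : ℂ) *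
      Complex.exp (-w * u)) (fun P => by
        have := (term_int hw0 (lN_nonneg K (pI K P))).1
        exact this) (by
      refine ((prime_summable K hw).div_const w.re).congr fun P => ?_
      rw [← (term_int hw0 (lN_nonneg K (pI K P))).2.2]
      )
  have h1 : HasSum (fun P => ∫ u in Ioi (0:ℝ),
      ((if lN K (pI K P) ≤ u then lN K (pI K P) else 0 : ℝ) : ℂ) * Complex.exp (-w * u))
      ((LamK K w - RK K w) / w) := by
    refine ((Lam_split K hw).div_const w).congr_fun fun P => ?_
    exact ((term_int hw0 (lN_nonneg K (pI K P))).2.1)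
  rw [h1.unique h]
  refine MeasureTheory.setIntegral_congr_fun measurableSet_Ioi fun u _ => ?_
  exact (((Complex.hasSum_ofReal.mpr (theta_hasSum K u)).mul_right _).tsum_eq).symm

lemma theta_integrable {w : ℂ} (hw : 1 < w.re) :
    MeasureTheory.IntegrableOn (fun u : ℝ => ((thetaK K (Real.exp u) : ℝ) : ℂ) *
      Complex.exp (-w * u)) (Ioi 0) := by
  obtain ⟨B, hB⟩ := thetaK_le (k := K)
  have hm : Measurable fun u : ℝ => thetaK K (Real.exp u) :=
    Monotone.measurable fun a b h => thetaK_mono K (Real.exp_le_exp.mpr h)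
  have hg : MeasureTheory.IntegrableOn (fun u : ℝ => B * Real.exp (-(w.re - 1) * u)) (Ioi 0) :=
    (integrableOn_exp_mul_Ioi (by linarith) 0).const_mul B
  refine hg.mono' ?_ ?_
  · exact ((Complex.measurable_ofReal.comp hm).mul (by fun_prop)).aestronglyMeasurable
  · refine (MeasureTheory.ae_restrict_iff' measurableSet_Ioi).mpr (Eventually.of_forall fun u hu => ?_)
    have hu : 0 < u := hu
    rw [norm_mul, norm_cexp_neg, Complex.norm_real, Real.norm_of_nonneg (thetaK_nonneg K _)]
    have h1 := hB (Real.exp u) (Real.one_le_exp hu.le)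
    calc _ ≤ (B * Real.exp u) * Real.exp (-w.re * u) := by gcongr
      _ = _ := by rw [mul_assoc, ← Real.exp_add]; congr 2; ring

theorem prime_ideal_theorem : Tendsto (fun x => thetaK K x / x) atTop (𝓝 1) := by
  obtain ⟨H, α, hα, hH, hH1, hZ⟩ := exists_H K
  obtain ⟨B, hB⟩ := thetaK_le (k := K)
  have hne : ∀ s : ℂ, 1 ≤ s.re → H s ≠ 0 := fun s hs => H_ne_zero_K K hα hH hH1 hZ hs
  set F : ℂ → ℂ := fun s => (-(deriv H (s + 1)) / H (s + 1) - RK K (s + 1) - 1) / (s + 1) with hF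
  have hmap : MapsTo (fun s : ℂ => s + 1) {s | 0 ≤ s.re} {s | 1 ≤ s.re} := by
    intro s hs
    have hs : 0 ≤ s.re := hs
    simp only [mem_ofPred_eq, Complex.add_re, Complex.one_re]
    linarith
  have hadd : ContinuousOn (fun s : ℂ => s + 1) {s | 0 ≤ s.re} := by fun_prop
  refine tauber_theta (thetaK K) (fun a b h => thetaK_mono K h) (fun x => thetaK_nonneg K x) B hB F ?_ ?_
  · have hsub : {s : ℂ | 1 ≤ s.re} ⊆ {s | α < s.re} := fun s hs => lt_of_lt_of_le hα hs
    have c1 : ContinuousOn (fun s => deriv H (s + 1)) {s | 0 ≤ s.re} :=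
      (hH.deriv.continuousOn.mono hsub).comp hadd hmap
    have c2 : ContinuousOn (fun s => H (s + 1)) {s | 0 ≤ s.re} :=
      (hH.continuousOn.mono hsub).comp hadd hmap
    have c3 : ContinuousOn (fun s => RK K (s + 1)) {s | 0 ≤ s.re} := (RK_cont K).comp hadd hmap
    refine (((c1.neg.div c2 fun s hs => hne _ (hmap hs)).sub c3).sub continuousOn_const).div hadd ?_
    intro s hs h
    have h1 : 1 ≤ (s + 1).re := hmap hs
    rw [h] at h1
    norm_num at h1
  · intro s hs
    have hw : 1 < (s + 1).re := by simp; linarith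
    have hs0 : s ≠ 0 := by rintro rfl; simp at hs
    have hs1 : s + 1 ≠ 0 := by intro h; rw [h] at hw; norm_num at hw
    have e : ∀ u : ℝ, ((thetaK K (Real.exp u) * Real.exp (-u) - 1 : ℝ) : ℂ) * Complex.exp (-s * u) =
        ((thetaK K (Real.exp u) : ℝ) : ℂ) * Complex.exp (-(s + 1) * u) - Complex.exp (-s * u) := by
      intro u
      have : Complex.exp (-(s + 1) * u) = Complex.exp (-u) * Complex.exp (-s * u) := by
        rw [← Complex.exp_add]; congr 1; ring
      rw [this]
      push_cast
      ring
    simp_rw [e]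
    rw [MeasureTheory.integral_sub (theta_integrable K hw) (int_exp_Ioi hs 0).1, theta_int K hw,
      (int_exp_Ioi hs 0).2]
    have hid := hid_K K hα hH hZ hw
    have hHn := hne (s + 1) hw.le
    simp only [hF, Complex.ofReal_zero, mul_zero, Complex.exp_zero]
    rw [add_sub_cancel_right] at hid
    have h3 : deriv H (s + 1) / H (s + 1) = 1 / s - LamK K (s + 1) := by
      field_simp
      linear_combination hid
    rw [neg_div, h3]
    field_simp
    ring

end FinishPIT

/-- **Statement 0.** Let `k` be a number field and `s` a family of nonnegative real
numbers indexed by the nonzero prime ideals of the ring of integers of `k`, bounded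
above by `M`.  If `C_N / N` converges to `L` as `N → ∞`, then `D_N / π_k(N)` also
converges to `L`, where
`C_N = Σ_{𝔭 : N(𝔭) ≤ N} s_𝔭 log N(𝔭)`, `D_N = Σ_{𝔭 : N(𝔭) ≤ N} s_𝔭` and
`π_k(N) = #{𝔭 : N(𝔭) ≤ N}`. -/
theorem nagao_lemma_backward
    (k : Type*) [Field k] [NumberField k]
    (s : HeightOneSpectrum (NumberField.RingOfIntegers k) → ℝ)
    (M : ℝ)
    (hs_nonneg : ∀ p, 0 ≤ s p)
    (hs_bdd : ∀ p, s p ≤ M)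
    (L : ℝ)
    (hC : Tendsto
      (fun N : ℝ =>
        (∑ᶠ p ∈ {p : HeightOneSpectrum (NumberField.RingOfIntegers k) |
            (Ideal.absNorm p.asIdeal : ℝ) ≤ N},
          s p * Real.log (Ideal.absNorm p.asIdeal)) / N)
      atTop (nhds L)) :
    Tendsto
      (fun N : ℝ =>
        (∑ᶠ p ∈ {p : HeightOneSpectrum (NumberField.RingOfIntegers k) |
            (Ideal.absNorm p.asIdeal : ℝ) ≤ N}, s p) /
        (({p : HeightOneSpectrum (NumberField.RingOfIntegers k) |
            (Ideal.absNorm p.asIdeal : ℝ) ≤ N}).ncard : ℝ))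
      atTop (nhds L) := by
  exact final_step k (prime_ideal_theorem k) s M hs_nonneg hs_bdd L hC
end

section
/- Let p be an odd prime and let a, b ∈ F_p. For t ∈ F_p write f(t) = t³ + a·t + b. Then Σ_{t ∈ F_p} ( p − #{(x,y) ∈ F_p × F_p : y² = x³ + f(t)²·a·x + f(t)³·b} ) = −( p − #{(x,y) ∈ F_p × F_p : y² = x³ + a·x + b} )². -/
open Finset in
lemma count_aux (p : ℕ) [Fact p.Prime] (hp : p ≠ 2) (g : ZMod p → ZMod p) :
    (p : ℤ) - Nat.card {xy : ZMod p × ZMod p // xy.2 ^ 2 = g xy.1}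
      = - ∑ x, quadraticChar (ZMod p) (g x) := by
  classical
  have hF : ringChar (ZMod p) ≠ 2 := (ZMod.ringChar_zmod_n p).substr hp
  have e : {xy : ZMod p × ZMod p // xy.2 ^ 2 = g xy.1} ≃
      (Σ x : ZMod p, {y : ZMod p // y ^ 2 = g x}) :=
    { toFun := fun z => ⟨z.1.1, z.1.2, z.2⟩
      invFun := fun z => ⟨(z.1, z.2.1), z.2.2⟩
      left_inv := fun _ => rfl
      right_inv := fun _ => rfl }
  have h1 : ∀ x, (Nat.card {y : ZMod p // y ^ 2 = g x} : ℤ)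
      = quadraticChar (ZMod p) (g x) + 1 := by
    intro x
    rw [← quadraticChar_card_sqrts hF, Set.toFinset_card, Nat.card_eq_fintype_card]
    rfl
  rw [Nat.card_congr e, Nat.card_sigma, Nat.cast_sum]
  simp only [h1, sum_add_distrib]
  simp [ZMod.card]

lemma twist_aux (p : ℕ) [Fact p.Prime] (hp : p ≠ 2) (a b c : ZMod p) :
    ∑ x, quadraticChar (ZMod p) (x ^ 3 + c ^ 2 * a * x + c ^ 3 * b)
      = quadraticChar (ZMod p) c * ∑ x, quadraticChar (ZMod p) (x ^ 3 + a * x + b) := by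
  have hF : ringChar (ZMod p) ≠ 2 := (ZMod.ringChar_zmod_n p).substr hp
  have h3 : ∀ x : ZMod p, quadraticChar (ZMod p) (x ^ 3) = quadraticChar (ZMod p) x := by
    intro x
    by_cases hx : x = 0
    · simp [hx]
    · rw [pow_succ, map_mul, quadraticChar_sq_one' hx, one_mul]
  by_cases hc : c = 0
  · subst hc
    simpa [h3, -map_pow] using quadraticChar_sum_zero hF
  · rw [Finset.mul_sum, ← Equiv.sum_comp (Equiv.mulLeft₀ c hc)]
    refine Finset.sum_congr rfl fun x _ => ?_
    rw [← h3 c, ← map_mul]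
    congr 1
    simp only [Equiv.mulLeft₀_apply]
    ring

/-- Let `p` be an odd prime and `a, b ∈ F_p`.  With
`f(t) = t³ + a t + b`, one has
`Σ_{t ∈ F_p} (p − #{(x,y) : y² = x³ + f(t)² a x + f(t)³ b})
  = −(p − #{(x,y) : y² = x³ + a x + b})²`. -/
theorem nagao_sum_of_twisted_fibers
    (p : ℕ) [Fact p.Prime] (hp : p ≠ 2) (a b : ZMod p) :
    ∑ t : ZMod p,
        ((p : ℤ) - Nat.card {xy : ZMod p × ZMod p //
          xy.2 ^ 2 = xy.1 ^ 3 + (t ^ 3 + a * t + b) ^ 2 * a * xy.1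
            + (t ^ 3 + a * t + b) ^ 3 * b}) =
      -((p : ℤ) - Nat.card {xy : ZMod p × ZMod p //
          xy.2 ^ 2 = xy.1 ^ 3 + a * xy.1 + b}) ^ 2 := by
  rw [count_aux p hp (fun x => x ^ 3 + a * x + b)]
  have h : ∀ t : ZMod p, _ := fun t => count_aux p hp
    (fun x => x ^ 3 + (t ^ 3 + a * t + b) ^ 2 * a * x + (t ^ 3 + a * t + b) ^ 3 * b)
  simp only [h, twist_aux p hp, Finset.sum_neg_distrib, ← Finset.sum_mul]
  ring
end

section
/- Let p be an odd prime, let χ denote the quadratic character of F_p (χ(0) = 0, χ(u) = 1 if u is a nonzero square, χ(u) = −1 otherwise), let d be an odd positive integer, and let f(x) = Σ_{i=0}^{d} c_i x^i ∈ F_p[x] be a monic polynomial of degree d whose coefficients are palindromic, i.e. c_i = c_{d−i} for all 0 ≤ i ≤ d (so in particular c_0 = c_d = 1). Then Σ_{t ∈ F_p} χ( f(t²) ) = 2 · Σ_{x ∈ F_p} χ( f(x) ) − 1. -/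
/-- Let `p` be an odd prime, `χ` the quadratic character of `F_p`,
`d` an odd positive integer, and `f ∈ F_p[x]` a monic palindromic (self-reciprocal)
polynomial of degree `d`.  Then
`Σ_{t ∈ F_p} χ(f(t²)) = 2 Σ_{x ∈ F_p} χ(f(x)) − 1`. -/
theorem palindromic_char_sum
    (p : ℕ) [Fact p.Prime] (hp : p ≠ 2)
    (d : ℕ) (hd_odd : Odd d) (hd_pos : 0 < d)
    (f : Polynomial (ZMod p)) (hf_monic : f.Monic) (hf_deg : f.natDegree = d)
    (hf_palin : ∀ i ≤ d, f.coeff i = f.coeff (d - i)) :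
    ∑ t : ZMod p, quadraticChar (ZMod p) (f.eval (t ^ 2)) =
      2 * (∑ x : ZMod p, quadraticChar (ZMod p) (f.eval x)) - 1 := by
  classical
  have hchar : ringChar (ZMod p) ≠ 2 := (ZMod.ringChar_zmod_n p).substr hp
  have hrec : ∀ x : ZMod p, x ≠ 0 → f.eval x = x ^ d * f.eval x⁻¹ := by
    intro x hx
    rw [Polynomial.eval_eq_sum_range, Polynomial.eval_eq_sum_range, hf_deg, Finset.mul_sum,
      ← Finset.sum_range_reflect]
    refine Finset.sum_congr rfl fun i hi => ?_
    have hi' : i ≤ d := Nat.lt_succ_iff.mp (Finset.mem_range.mp hi)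
    have e : d + 1 - 1 - i = d - i := by omega
    have h2 : x ^ d = x ^ (d - i) * x ^ i := by rw [← pow_add, Nat.sub_add_cancel hi']
    rw [e, ← hf_palin i hi', h2, inv_pow]
    field_simp
  have h0 : f.eval 0 = 1 := by
    rw [← Polynomial.coeff_zero_eq_eval_zero, hf_palin 0 (Nat.zero_le _), Nat.sub_zero, ← hf_deg]
    exact hf_monic
  have hpt : ∀ x : ZMod p, quadraticChar (ZMod p) x * quadraticChar (ZMod p) (f.eval x)
      = quadraticChar (ZMod p) (f.eval x⁻¹) - if x = 0 then 1 else 0 := by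
    intro x
    by_cases hx : x = 0
    · subst hx
      simp [h0]
    · rw [hrec x hx, if_neg hx, sub_zero, map_mul, map_pow, ← mul_assoc, ← pow_succ']
      obtain ⟨k, hk⟩ := hd_odd
      have : d + 1 = 2 * (k + 1) := by omega
      rw [this, pow_mul, quadraticChar_sq_one hx, one_pow, one_mul]
  have hinv : ∑ x : ZMod p, quadraticChar (ZMod p) (f.eval x⁻¹)
      = ∑ x : ZMod p, quadraticChar (ZMod p) (f.eval x) :=
    Equiv.sum_comp (Equiv.inv (ZMod p)) (fun x => quadraticChar (ZMod p) (f.eval x))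
  have hsq : ∑ t : ZMod p, quadraticChar (ZMod p) (f.eval (t ^ 2))
      = ∑ x : ZMod p, (quadraticChar (ZMod p) x + 1) * quadraticChar (ZMod p) (f.eval x) := by
    rw [← Finset.sum_fiberwise (s := Finset.univ) (g := fun t : ZMod p => t ^ 2)]
    refine Finset.sum_congr rfl fun x _ => ?_
    rw [Finset.sum_congr rfl (g := fun _ => quadraticChar (ZMod p) (f.eval x))
      (fun t ht => by rw [(Finset.mem_filter.mp ht).2]), Finset.sum_const, nsmul_eq_mul,
      ← quadraticChar_card_sqrts hchar x]
    congr 3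
    ext t
    simp
  rw [hsq]
  simp only [add_mul, hpt, one_mul, Finset.sum_add_distrib, Finset.sum_sub_distrib, hinv]
  simp
  ring
end
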